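/- Let Σ be a non-singular fan in ℝ^n satisfying conditions (2.9.1) and (2.9.2), and let D = (d_1,…,d_r) be an r-tuple of positive integers with ∑_k d_k n_k = 0. Then the map i_D : Pol*_D(S¹,X_Σ) → ΩX_Σ induces an isomorphism (i_D)_* : π_k(Pol*_D(S¹,X_Σ)) → π_k(ΩX_Σ) ≅ π_{k+1}(X_Σ) for every k with 2 ≤ k ≤ d(D,Σ) = 2(r_min(Σ)−1)·d_min − 2. -/

import Mathlib

open scoped BigOperators
attribute [local instance] Classical.propDecidable

noncomputable section

namespace Toric


/-! ### Cones and fans -/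

/-- The real vector associated to an integer vector. -/
def zr {n : ℕ} (v : Fin n → ℤ) : Fin n → ℝ := fun i => (v i : ℝ)

/-- A convex rational polyhedral cone in `ℝ^n`. -/
def IsRatCone {n : ℕ} (σ : Set (Fin n → ℝ)) : Prop :=
  ∃ s : Finset (Fin n → ℤ),
    σ = {x | ∃ lam : (Fin n → ℤ) → ℝ, (∀ v, 0 ≤ lam v) ∧ x = ∑ v ∈ s, lam v • zr v}

/-- A cone is strongly convex if `σ ∩ (-σ) = {0}`. -/
def StronglyConvex {n : ℕ} (σ : Set (Fin n → ℝ)) : Prop := σ ∩ (-σ) = {0}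

/-- `τ` is a face of `σ`, cut out by a linear form nonnegative on `σ`. -/
def IsFaceOf {n : ℕ} (τ σ : Set (Fin n → ℝ)) : Prop :=
  ∃ L : (Fin n → ℝ) →ₗ[ℝ] ℝ, (∀ x ∈ σ, 0 ≤ L x) ∧ τ = σ ∩ {x | L x = 0}

/-- A fan in `ℝ^n`: a finite collection of strongly convex rational polyhedral cones,
closed under taking faces, such that the intersection of two cones is a face of each;
we also require that it strictly contains `{0}`. -/
structure Fan (n : ℕ) where
  cones : Set (Set (Fin n → ℝ))
  finite : cones.Finite
  ratCone : ∀ σ ∈ cones, IsRatCone σ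
  stronglyConvex : ∀ σ ∈ cones, StronglyConvex σ
  face_mem : ∀ σ ∈ cones, ∀ τ, IsFaceOf τ σ → τ ∈ cones
  inter_face : ∀ σ ∈ cones, ∀ τ ∈ cones, IsFaceOf (σ ∩ τ) σ
  zero_mem : ({0} : Set (Fin n → ℝ)) ∈ cones
  nontrivial : cones ≠ {({0} : Set (Fin n → ℝ))}

/-- A fan is complete if its cones cover `ℝ^n`. -/
def Fan.Complete {n : ℕ} (F : Fan n) : Prop := ⋃₀ F.cones = Set.univ

/-- A fan is non-singular if each of its cones is spanned by part of a `ℤ`-basis of `ℤ^n`. -/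
def Fan.NonSingular {n : ℕ} (F : Fan n) : Prop :=
  ∀ σ ∈ F.cones, ∃ (b : Module.Basis (Fin n) ℤ (Fin n → ℤ)) (s : Finset (Fin n)),
    σ = {x | ∃ lam : Fin n → ℝ, (∀ i, 0 ≤ lam i) ∧ x = ∑ i ∈ s, lam i • zr (b i)}

/-- The ray (one-dimensional cone) generated by a vector. -/
def ray {n : ℕ} (v : Fin n → ℝ) : Set (Fin n → ℝ) := {x | ∃ t : ℝ, 0 ≤ t ∧ x = t • v}

/-- The cone spanned by the vectors `n_i`, `i ∈ s`. -/
def coneIdx {n r : ℕ} (N : Fin r → Fin n → ℤ) (s : Finset (Fin r)) : Set (Fin n → ℝ) :=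
  {x | ∃ lam : Fin r → ℝ, (∀ i, 0 ≤ lam i) ∧ x = ∑ i ∈ s, lam i • zr (N i)}

/-- A point of `ℝ^n` lying in the lattice `ℤ^n`. -/
def IsLatticePoint {n : ℕ} (x : Fin n → ℝ) : Prop := ∀ i, ∃ m : ℤ, x i = (m : ℝ)

/-- `N 1, …, N r` is the (complete, repetition-free) list of primitive generators of the
one-dimensional cones of the fan `F`. -/
structure IsPrimGens {n r : ℕ} (F : Fan n) (N : Fin r → Fin n → ℤ) : Prop where
  ray_mem : ∀ k, ray (zr (N k)) ∈ F.cones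
  ne_zero : ∀ k, N k ≠ 0
  primitive : ∀ k, ray (zr (N k)) ∩ {x | IsLatticePoint x}
      = {x | ∃ c : ℕ, x = (c : ℝ) • zr (N k)}
  inj : Function.Injective N
  complete : ∀ σ ∈ F.cones, Module.finrank ℝ (Submodule.span ℝ σ) = 1 →
      ∃ k, σ = ray (zr (N k))

/-- Condition (2.9.1): a positive integral relation among the primitive generators. -/
def Cond1 {n r : ℕ} (N : Fin r → Fin n → ℤ) : Prop :=
  ∃ d : Fin r → ℕ, (∀ k, 0 < d k) ∧ ∑ k, (d k : ℤ) • N k = 0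

/-- Condition (2.9.2): the primitive generators span `ℤ^n` over `ℤ`. -/
def Cond2 {n r : ℕ} (N : Fin r → Fin n → ℤ) : Prop :=
  Submodule.span ℤ (Set.range N) = ⊤

/-- The underlying simplicial complex `K_Σ` of a fan. -/
def KC {n r : ℕ} (F : Fan n) (N : Fin r → Fin n → ℤ) : Set (Finset (Fin r)) :=
  {s | coneIdx N s ∈ F.cones}

/-- A primitive set: it spans no cone of the fan, but every proper subset does. -/
def PrimitiveSet {r : ℕ} (K : Set (Finset (Fin r))) (s : Finset (Fin r)) : Prop :=
  s ∉ K ∧ ∀ t ⊂ s, t ∈ K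

/-- `r_min`: the minimal cardinality of a primitive set. -/
def rmin {r : ℕ} (K : Set (Finset (Fin r))) : ℕ :=
  sInf {m | ∃ s : Finset (Fin r), PrimitiveSet K s ∧ s.card = m}

/-- `d_min = min {d_1, …, d_r}`. -/
def dmin {r : ℕ} (D : Fin r → ℕ) : ℕ := sInf (Set.range D)

/-- The stability dimension `d(D,Σ) = 2(r_min − 1) d_min − 2`. -/
def dBound {r : ℕ} (K : Set (Finset (Fin r))) (D : Fin r → ℕ) : ℤ :=
  2 * ((rmin K : ℤ) - 1) * (dmin D : ℤ) - 2

/-- The connectivity bound `C_D(Σ) = 2(r_min − 1) d_min − 1`. -/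
def CBound {r : ℕ} (K : Set (Finset (Fin r))) (D : Fin r → ℕ) : ℤ :=
  2 * ((rmin K : ℤ) - 1) * (dmin D : ℤ) - 1

/-! ### Coordinate subspaces, `U(K)`, `G_Σ` and the toric quotient -/

/-- The coordinate subspace `L_σ ⊆ ℂ^r`. -/
def LSub {r : ℕ} (σ : Finset (Fin r)) : Set (Fin r → ℂ) := {x | ∀ i ∈ σ, x i = 0}

/-- The complement `U(K)` of the coordinate subspace arrangement of type `K`. -/
def UK {r : ℕ} (K : Set (Finset (Fin r))) : Set (Fin r → ℂ) :=
  (⋃ σ ∈ {s : Finset (Fin r) | s ∉ K}, LSub σ)ᶜ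

lemma mem_UK {r : ℕ} {K : Set (Finset (Fin r))} {x : Fin r → ℂ} :
    x ∈ UK K ↔ ∀ σ : Finset (Fin r), σ ∉ K → ∃ i ∈ σ, x i ≠ 0 := by
  constructor
  · intro h σ hσ
    by_contra hc
    push_neg at hc
    exact h (Set.mem_biUnion hσ (fun i hi => hc i hi))
  · intro h hx
    rcases Set.mem_iUnion₂.1 hx with ⟨σ, hσ, hxσ⟩
    rcases h σ hσ with ⟨i, hi, hne⟩
    exact hne (hxσ i hi)

/-- The group `G_Σ` (as a subset of `ℂ^r`). -/
def GSet {n r : ℕ} (N : Fin r → Fin n → ℤ) : Set (Fin r → ℂ) :=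
  {μ | (∀ k, μ k ≠ 0) ∧ ∀ m : Fin n → ℤ, ∏ k, μ k ^ (∑ j, N k j * m j) = 1}

/-- The orbit relation of the `G_Σ`-action on `U(K_Σ)`. -/
def toricRel {n r : ℕ} (N : Fin r → Fin n → ℤ) (K : Set (Finset (Fin r)))
    (x y : ↥(UK K)) : Prop :=
  ∃ μ ∈ GSet N, (fun i => μ i * (x : Fin r → ℂ) i) = (y : Fin r → ℂ)

/-- The toric variety `X_Σ = U(K_Σ)/G_Σ`, as a topological quotient. -/
def XS {n r : ℕ} (N : Fin r → Fin n → ℤ) (K : Set (Finset (Fin r))) : Type :=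
  Quot (toricRel N K)

instance {n r : ℕ} (N : Fin r → Fin n → ℤ) (K : Set (Finset (Fin r))) :
    TopologicalSpace (XS N K) :=
  instTopologicalSpaceQuot

/-- The quotient map `q_Σ : U(K_Σ) → X_Σ`. -/
def qmap {n r : ℕ} (N : Fin r → Fin n → ℤ) (K : Set (Finset (Fin r))) :
    ↥(UK K) → XS N K :=
  Quot.mk (toricRel N K)

/-- `q_Σ` as a continuous map. -/
def qCont {n r : ℕ} (N : Fin r → Fin n → ℤ) (K : Set (Finset (Fin r))) :
    C(↥(UK K), XS N K) :=
  ⟨qmap N K, continuous_quot_mk⟩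

lemma coneIdx_empty {n r : ℕ} (N : Fin r → Fin n → ℤ) :
    coneIdx N (∅ : Finset (Fin r)) = ({0} : Set (Fin n → ℝ)) := by
  ext x
  constructor
  · rintro ⟨lam, -, hx⟩
    simpa using hx
  · intro hx
    exact ⟨0, fun i => le_refl 0, by simpa using hx⟩

lemma empty_mem_KC {n r : ℕ} (F : Fan n) (N : Fin r → Fin n → ℤ) :
    (∅ : Finset (Fin r)) ∈ KC F N := by
  show coneIdx N ∅ ∈ F.cones
  rw [coneIdx_empty]
  exact F.zero_mem

/-- The point `(1,…,1)`. -/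
def onesC {r : ℕ} : Fin r → ℂ := fun _ => 1

lemma ones_mem_UK {r : ℕ} {K : Set (Finset (Fin r))} (h : (∅ : Finset (Fin r)) ∈ K) :
    (onesC : Fin r → ℂ) ∈ UK K := by
  rw [mem_UK]
  intro σ hσ
  rcases Finset.nonempty_iff_ne_empty.2 (fun he : σ = ∅ => hσ (by rw [he]; exact h)) with ⟨i, hi⟩
  exact ⟨i, hi, one_ne_zero⟩

/-- The base point `(1,…,1)` of `U(K_Σ)`. -/
def onesUK {r : ℕ} {K : Set (Finset (Fin r))} (h : (∅ : Finset (Fin r)) ∈ K) : ↥(UK K) :=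
  ⟨onesC, ones_mem_UK h⟩

/-- The base point `[1,…,1]` of `X_Σ`. -/
def baseX {n r : ℕ} (N : Fin r → Fin n → ℤ) (K : Set (Finset (Fin r)))
    (h : (∅ : Finset (Fin r)) ∈ K) : XS N K :=
  qmap N K (onesUK h)



/-! ### Spaces of tuples of monic polynomials -/

/-- The monic polynomial `z^d + a_{d-1} z^{d-1} + ⋯ + a_0` with coefficient data `a`. -/
def toPoly {d : ℕ} (a : Fin d → ℂ) : Polynomial ℂ :=
  Polynomial.X ^ d + ∑ i : Fin d, Polynomial.C (a i) * Polynomial.X ^ (i : ℕ)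

/-- The space `Pol*_D(S¹, X_Σ)` of `r`-tuples of monic polynomials of multidegree `D`
(in coefficient coordinates) such that for every `σ ∉ K` the polynomials `{f_i : i ∈ σ}`
have no common real root. -/
def PolSp {r : ℕ} (K : Set (Finset (Fin r))) (D : Fin r → ℕ) :
    Set (∀ k : Fin r, Fin (D k) → ℂ) :=
  {f | ∀ σ : Finset (Fin r), σ ∉ K → ∀ t : ℝ,
        ∃ k ∈ σ, (toPoly (f k)).eval (t : ℂ) ≠ 0}

lemma polEval_mem_UK {r : ℕ} {K : Set (Finset (Fin r))} {D : Fin r → ℕ}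
    (f : ↥(PolSp K D)) (t : ℝ) :
    (fun k => (toPoly (f.1 k)).eval (t : ℂ)) ∈ UK K :=
  mem_UK.2 fun σ hσ => f.2 σ hσ t

/-! ### Loop spaces and induced maps on homotopy groups -/

/-- The loop space `Ω X = Map*(S¹, X)` with `S¹ = ℝ ∪ {∞}` (the one-point
compactification of `ℝ`), based at `x₀`. -/
def Loop (X : Type*) [TopologicalSpace X] (x₀ : X) : Type _ :=
  {γ : C(OnePoint ℝ, X) // γ OnePoint.infty = x₀}

instance {X : Type*} [TopologicalSpace X] (x₀ : X) : TopologicalSpace (Loop X x₀) :=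
  instTopologicalSpaceSubtype

/-- The constant loop, base point of `Ω X`. -/
def Loop.const {X : Type*} [TopologicalSpace X] (x₀ : X) : Loop X x₀ :=
  ⟨ContinuousMap.const _ x₀, rfl⟩

/-- A based continuous map induces a continuous map of loop spaces. -/
def loopMap {X Y : Type*} [TopologicalSpace X] [TopologicalSpace Y] {x₀ : X} {y₀ : Y}
    (f : C(X, Y)) (hf : f x₀ = y₀) : C(Loop X x₀, Loop Y y₀) where
  toFun γ := ⟨f.comp γ.1, by simp [γ.2, hf]⟩
  continuous_toFun := by
    apply Continuous.subtype_mk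
    exact (ContinuousMap.continuous_postcomp f).comp continuous_subtype_val

/-- The map induced by a continuous map on homotopy groups (`π_q`). -/
def piMap (q : ℕ) {X Y : Type*} [TopologicalSpace X] [TopologicalSpace Y]
    (f : C(X, Y)) (x : X) :
    HomotopyGroup (Fin q) X x → HomotopyGroup (Fin q) Y (f x) :=
  Quotient.map
    (fun p => ⟨f.comp p.1, fun y hy => by
      show f (p.1 y) = f x
      rw [p.2 y hy]⟩)
    (fun p₁ p₂ h => h.elim fun H => ⟨H.compContinuousMap f⟩)

/-- `f` is a homotopy equivalence through dimension `d`: it induces isomorphisms on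
`π_k` for all `k ≤ d` (at every base point). -/
def HomotopyEquivThrough {X Y : Type*} [TopologicalSpace X] [TopologicalSpace Y]
    (f : C(X, Y)) (d : ℤ) : Prop :=
  ∀ (x : X) (k : ℕ), (k : ℤ) ≤ d → Function.Bijective (piMap k f x)

/-- A genuine homotopy equivalence. -/
def IsHtpyEquiv {X Y : Type*} [TopologicalSpace X] [TopologicalSpace Y]
    (f : C(X, Y)) : Prop :=
  ∃ g : C(Y, X), (f.comp g).Homotopic (ContinuousMap.id Y) ∧
    (g.comp f).Homotopic (ContinuousMap.id X)

/-! ### `i_D`, lifts, and stabilization maps -/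

/-- `j : Pol*_D → Ω U(K_Σ)` is a lift of `i_D` through `Ω q_Σ`, i.e. `Ω q_Σ ∘ j = i_D`:
for every tuple `f` and real `t`, the loop `j f` at time `t` lies over the point
`[f_1(t), …, f_r(t)]` of `X_Σ` (and at `∞` over `[1,…,1]`, automatically). -/
def IsLiftOfID {n r : ℕ} (N : Fin r → Fin n → ℤ) (K : Set (Finset (Fin r)))
    (hE : (∅ : Finset (Fin r)) ∈ K) (D : Fin r → ℕ)
    (j : ↥(PolSp K D) → Loop ↥(UK K) (onesUK hE)) : Prop :=
  ∀ (f : ↥(PolSp K D)) (t : ℝ),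
    qmap N K ((j f).1 (t : OnePoint ℝ)) =
      qmap N K ⟨fun k => (toPoly (f.1 k)).eval (t : ℂ), polEval_mem_UK f t⟩

/-- `i : Pol*_D → Ω X_Σ` is the map `i_D` given by evaluation. -/
def IsID {n r : ℕ} (N : Fin r → Fin n → ℤ) (K : Set (Finset (Fin r)))
    (hE : (∅ : Finset (Fin r)) ∈ K) (D : Fin r → ℕ)
    (i : ↥(PolSp K D) → Loop (XS N K) (baseX N K hE)) : Prop :=
  ∀ (f : ↥(PolSp K D)) (t : ℝ),
    (i f).1 (t : OnePoint ℝ) =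
      qmap N K ⟨fun k => (toPoly (f.1 k)).eval (t : ℂ), polEval_mem_UK f t⟩

/-- `φ` is an admissible parameter for the stabilization maps: a homeomorphism of `ℂ`
onto the half plane `{Re < bound}` carrying `ℝ` onto `(-∞, bound)`. -/
def AdmissiblePhi (bound : ℝ) (φ : ℂ → ℂ) : Prop :=
  Continuous φ ∧ Function.Injective φ ∧ IsOpenMap φ ∧
    Set.range φ = {w : ℂ | w.re < bound} ∧
    φ '' {z : ℂ | z.im = 0} = {z : ℂ | z.im = 0 ∧ z.re < bound}

/-- The defining property of the stabilization map
`s_{D,D'}(f)_k = φ(f_k) · (z - x_k)^{d'_k - d_k}`, where `φ(f)` denotes the monic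
polynomial whose roots are the images under `φ` of the roots of `f`. -/
def StabSpec {r : ℕ} (K : Set (Finset (Fin r))) (φ : ℂ → ℂ) (xpt : Fin r → ℂ)
    (D D' : Fin r → ℕ) (s : ↥(PolSp K D) → ↥(PolSp K D')) : Prop :=
  ∀ (f : ↥(PolSp K D)) (k : Fin r),
    toPoly ((s f).1 k) =
      (((toPoly (f.1 k)).roots.map φ).map
        fun α => Polynomial.X - Polynomial.C α).prod
        * (Polynomial.X - Polynomial.C (xpt k)) ^ (D' k - D k)

/-- The general defining property of the map `j_D : Pol*_D → Ω U(K_Σ)`: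
when `∑ d_k n_k = 0` it is a lift of `i_D` through `Ω q_Σ`, and otherwise it is the
composite `j_{D₀} ∘ s_{D,D₀}` for a suitable `D₀ = m₀ D*` as in condition (2.9.1). -/
def IsJD {n r : ℕ} (N : Fin r → Fin n → ℤ) (K : Set (Finset (Fin r)))
    (hE : (∅ : Finset (Fin r)) ∈ K) (D : Fin r → ℕ)
    (j : C(↥(PolSp K D), Loop ↥(UK K) (onesUK hE))) : Prop :=
  ((∑ k, (D k : ℤ) • N k = 0) ∧ IsLiftOfID N K hE D j) ∨
  ((∑ k, (D k : ℤ) • N k ≠ 0) ∧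
    ∃ (dstar : Fin r → ℕ) (m₀ : ℕ),
      (∀ k, 0 < dstar k) ∧ (∑ k, (dstar k : ℤ) • N k = 0) ∧
      (∀ k, D k < m₀ * dstar k) ∧
      ∃ (φ : ℂ → ℂ) (xpt : Fin r → ℂ),
        AdmissiblePhi ((∑ k, D k : ℕ) : ℝ) φ ∧
        (∀ k, ((∑ k, D k : ℕ) : ℝ) < (xpt k).re) ∧ Function.Injective xpt ∧
        ∃ (j₀ : C(↥(PolSp K fun k => m₀ * dstar k), Loop ↥(UK K) (onesUK hE)))
          (s₀ : C(↥(PolSp K D), ↥(PolSp K fun k => m₀ * dstar k))),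
          IsLiftOfID N K hE _ j₀ ∧ StabSpec K φ xpt D _ s₀ ∧ j = j₀.comp s₀)

/-! ### Stabilized (colimit) spaces -/

/-- The multidegree `D + t·e`. -/
def Dt {r : ℕ} (D : Fin r → ℕ) (t : ℕ) : Fin r → ℕ := fun k => D k + t

/-- Carrier of the stabilized space: the disjoint union of the `Pol*_{D+te}`. -/
def ColCar {r : ℕ} (K : Set (Finset (Fin r))) (D : Fin r → ℕ) : Type :=
  Σ t : ℕ, ↥(PolSp K (Dt D t))

instance {r : ℕ} (K : Set (Finset (Fin r))) (D : Fin r → ℕ) :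
    TopologicalSpace (ColCar K D) := by
  unfold ColCar; infer_instance

/-- The identifications generating the colimit along the stabilization maps. -/
def ColRel {r : ℕ} (K : Set (Finset (Fin r))) (D : Fin r → ℕ)
    (s : ∀ t : ℕ, ↥(PolSp K (Dt D t)) → ↥(PolSp K (Dt D (t + 1)))) :
    ColCar K D → ColCar K D → Prop :=
  fun a b => b = ⟨a.1 + 1, s a.1 a.2⟩

/-- The stabilized space `Pol^Σ_{D+∞} = colim_t Pol*_{D+te}(S¹, X_Σ)`. -/
def PolColim {r : ℕ} (K : Set (Finset (Fin r))) (D : Fin r → ℕ)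
    (s : ∀ t : ℕ, ↥(PolSp K (Dt D t)) → ↥(PolSp K (Dt D (t + 1)))) : Type :=
  Quot (ColRel K D s)

instance {r : ℕ} (K : Set (Finset (Fin r))) (D : Fin r → ℕ)
    (s : ∀ t : ℕ, ↥(PolSp K (Dt D t)) → ↥(PolSp K (Dt D (t + 1)))) :
    TopologicalSpace (PolColim K D s) :=
  instTopologicalSpaceQuot

/-- Admissibility of a family of stabilization maps `s_{D+te}`. -/
def AdmissibleStabFamily {r : ℕ} (K : Set (Finset (Fin r))) (D : Fin r → ℕ)
    (s : ∀ t : ℕ, ↥(PolSp K (Dt D t)) → ↥(PolSp K (Dt D (t + 1)))) : Prop :=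
  ∀ t : ℕ, ∃ (φ : ℂ → ℂ) (xpt : Fin r → ℂ),
    AdmissiblePhi ((∑ k, Dt D t k : ℕ) : ℝ) φ ∧
    (∀ k, ((∑ k, Dt D t k : ℕ) : ℝ) < (xpt k).re) ∧ Function.Injective xpt ∧
    StabSpec K φ xpt (Dt D t) (Dt D (t + 1)) (s t)

/-!
Both injectivity and surjectivity on `π_k` follow once every map of pairs
`(I^m, ∂I^m) → (ΩX_Σ, Pol*_D)` with `2 ≤ m ≤ d(D, Σ) + 1` can be deformed, relative to `∂I^m`,
into `Pol*_D`.

Such a map is a family of loops in `X_Σ`. The quotient map `q_Σ : U(K) → X_Σ` is a principal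
`G_Σ`-bundle, so the family lifts to `U(K)`. Translating by `G_Σ` makes the lift a family of loops
based at `1` that agrees with the given polynomials over `∂I^m`; the required translations over
`∂I^m` extend to `I^m` through their logarithms. Here a monic polynomial `f_k` of degree `d_k`
becomes a loop based at `1` after division by `(t + i) ^ d_k`, which does not affect the loop in
`X_Σ` since `∑ d_k n_k = 0`.

By the Weierstrass theorem the lifted family is homotopic to a family of quotients of monic
polynomials by `(t + i) ^ d_k * (1 + t ^ 2) ^ M`, and it remains to get rid of `M`, one coordinate
at a time. For fixed values of the other coordinates, the monic polynomials of degree `d_k` towards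
which `f_k` can be moved along a segment inside `U(K)` contain a convex set, cut out by the
inequalities `Re (g(t) * conj (f_k(t))) > 0` at the common zeros `t` of suitable other `f_j`. If it
is empty, then separation of convex sets gives more than `d_k` such zeros, with positive weights
that annihilate the moments of `f_k` below `d_k`. This is a condition of real codimension at least
`2 * (r_min - 1) * d_k > m`, so a generic perturbation of an `m`-parameter family avoids it, and a
partition of unity selects the new coordinate continuously.
-/

/-! ### Convex alternatives and dimension counts -/

theorem apply_nonpos_of_forall_nonneg_apply_le {E : Type*} [AddCommGroup E] [PartialOrder E]
    [Module ℝ E] [PosSMulMono ℝ E] (f : E →ₗ[ℝ] ℝ) {u : ℝ} (hf : ∀ v, 0 ≤ v → f v ≤ u) {v : E}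
    (hv : 0 ≤ v) : f v ≤ 0 := by
  have hu : 0 ≤ u := by simpa using hf 0 le_rfl
  by_contra! hpos
  have := hf (((u + 1) / f v) • v) (smul_nonneg (by positivity) hv)
  rw [map_smul, smul_eq_mul, div_mul_cancel₀ _ hpos.ne'] at this
  linarith

theorem exists_nonneg_ne_zero_sum_mul_nonpos {ι : Type*} [Fintype ι] {C : Set (ι → ℝ)}
    (hC : Convex ℝ C) (hne : C.Nonempty) (hpos : ∀ v ∈ C, ∃ i, v i ≤ 0) :
    ∃ μ : ι → ℝ, 0 ≤ μ ∧ μ ≠ 0 ∧ ∀ v ∈ C, ∑ i, μ i * v i ≤ 0 := by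
  have hdisj : Disjoint (Set.univ.pi fun _ : ι => Set.Ioi (0 : ℝ)) C :=
    Set.disjoint_left.2 fun v hv hvC =>
      let ⟨i, hi⟩ := hpos v hvC
      hi.not_gt (hv i trivial)
  obtain ⟨f, u, hfu, huf⟩ := geometric_hahn_banach_open
    (convex_pi fun _ _ => convex_Ioi 0) (isOpen_set_pi Set.finite_univ fun _ _ => isOpen_Ioi)
    hC hdisj
  have hf_le : ∀ v : ι → ℝ, 0 ≤ v → f v ≤ u := by
    intro v hv
    have hmem : v ∈ closure (Set.univ.pi fun _ : ι => Set.Ioi (0 : ℝ)) := by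
      rw [closure_pi_set]
      exact fun i _ => by simpa using hv i
    exact closure_minimal (fun w hw => (hfu w hw).le)
      (isClosed_le f.continuous continuous_const) hmem
  have hu : 0 ≤ u := by simpa using hf_le 0 le_rfl
  have hf_single : ∀ i, f (Pi.single i 1) ≤ 0 := fun i =>
    apply_nonpos_of_forall_nonneg_apply_le (f : (ι → ℝ) →ₗ[ℝ] ℝ) hf_le
      (Pi.single_nonneg.2 zero_le_one)
  have hf_sum : ∀ v, f v = ∑ i, v i * f (Pi.single i 1) := fun v => by
    conv_lhs => rw [pi_eq_sum_univ' v, map_sum]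
    simp only [map_smul, smul_eq_mul]
  have hsum : ∀ v, ∑ i, -f (Pi.single i 1) * v i = -f v := fun v => by
    rw [hf_sum v, ← Finset.sum_neg_distrib]
    exact Finset.sum_congr rfl fun i _ => by ring
  refine ⟨fun i => -f (Pi.single i 1), fun i => neg_nonneg.2 (hf_single i), fun h0 => ?_, ?_⟩
  · have hf0 : ∀ v, f v = 0 := fun v => by
      rw [← neg_eq_zero, ← hsum v]
      exact Finset.sum_eq_zero fun i _ => by rw [congrFun h0 i, Pi.zero_apply, zero_mul]
    obtain ⟨v, hv⟩ := hne
    have := hfu 1 fun _ _ => zero_lt_one' ℝ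
    have := huf v hv
    simp only [hf0] at *
    linarith
  · intro v hv
    rw [hsum]
    linarith [huf v hv]

section DimensionCount

open Topology

variable {Θ E F : Type*} [NormedAddCommGroup Θ] [NormedSpace ℝ Θ] [FiniteDimensional ℝ Θ]
  [NormedAddCommGroup E] [NormedSpace ℝ E] [FiniteDimensional ℝ E]
  [NormedAddCommGroup F] [NormedSpace ℝ F]

theorem dimH_image_le_finrank {f : E → F} {s : Set E} (hf : ∀ x ∈ s, ContDiffAt ℝ 1 f x) :
    dimH (f '' s) ≤ Module.finrank ℝ E := by
  rw [← Real.dimH_univ_eq_finrank E]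
  refine (dimH_image_le_of_locally_lipschitzOn fun x hx => ?_).trans (dimH_mono s.subset_univ)
  obtain ⟨K, t, ht, hL⟩ := (hf x hx).exists_lipschitzOnWith
  exact ⟨K, t, mem_nhdsWithin_of_mem_nhds ht, hL⟩

variable [FiniteDimensional ℝ F] {A : Θ → E →L[ℝ] F} {c : Θ → F}

/- Near `θ₀`, with `B` a right inverse of `A θ₀`, the solutions of `A θ y = c θ` are
`n + B ((A θ ∘ B)⁻¹ (c θ - A θ n))` with `n ∈ ker (A θ₀)`. -/
theorem exists_nhds_dimH_setOf_apply_eq_le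
    (hA : ContDiff ℝ 1 A) (hc : ContDiff ℝ 1 c) {θ₀ : Θ} (hθ₀ : Function.Surjective (A θ₀)) :
    ∃ V ∈ 𝓝 θ₀, dimH {y | ∃ θ ∈ V, A θ y = c θ} ≤
      (Module.finrank ℝ Θ + Module.finrank ℝ E - Module.finrank ℝ F : ℕ) := by
  obtain ⟨B, hB⟩ := (A θ₀).exists_rightInverse_of_surjective (LinearMap.range_eq_top.2 hθ₀)
  have hAB : ContDiff ℝ 1 fun θ => (A θ).comp B := hA.clm_comp contDiff_const
  let V : Set Θ := {θ | ((A θ).comp B).IsInvertible}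
  have hV : V ∈ 𝓝 θ₀ := hAB.continuous.continuousAt.preimage_mem_nhds <| by
    rw [hB]
    exact (ContinuousLinearEquiv.refl ℝ F).nhds
  let Φ : Θ × (A θ₀).ker → E := fun p =>
    p.2 + B (((A p.1).comp B).inverse (c p.1 - A p.1 p.2))
  have hΦ : ∀ p ∈ {p : Θ × (A θ₀).ker | p.1 ∈ V}, ContDiffAt ℝ 1 Φ p := by
    intro p hp
    have hn : ContDiff ℝ 1 fun p : Θ × (A θ₀).ker => (p.2 : E) :=
      (A θ₀).ker.subtypeL.contDiff.comp contDiff_snd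
    have hinv : ContDiffAt ℝ 1 (fun p : Θ × (A θ₀).ker => ((A p.1).comp B).inverse) p :=
      ContDiffAt.comp (g := ContinuousLinearMap.inverse) p hp.contDiffAt_map_inverse
        (hAB.comp contDiff_fst).contDiffAt
    have hrhs : ContDiff ℝ 1 fun p : Θ × (A θ₀).ker => c p.1 - A p.1 p.2 :=
      (hc.comp contDiff_fst).sub ((hA.comp contDiff_fst).clm_apply hn)
    exact hn.contDiffAt.add (B.contDiff.contDiffAt.comp _ (hinv.clm_apply hrhs.contDiffAt))
  have hsub : {y | ∃ θ ∈ V, A θ y = c θ} ⊆ Φ '' {p | p.1 ∈ V} := by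
    rintro y ⟨θ, hθ, hy⟩
    have hker : A θ₀ (y - B (A θ₀ y)) = 0 := by
      rw [map_sub, ← ContinuousLinearMap.comp_apply, hB, ContinuousLinearMap.id_apply, sub_self]
    refine ⟨(θ, ⟨y - B (A θ₀ y), hker⟩), hθ, ?_⟩
    have hsolve : ((A θ).comp B).inverse (c θ - A θ (y - B (A θ₀ y))) = A θ₀ y := by
      rw [hθ.inverse_apply_eq, map_sub, hy, sub_sub_cancel, ContinuousLinearMap.comp_apply]
    simp only [Φ, hsolve, sub_add_cancel]
  have hdim : Module.finrank ℝ F + Module.finrank ℝ (A θ₀).ker = Module.finrank ℝ E := by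
    rw [← LinearMap.finrank_range_add_finrank_ker (A θ₀ : E →ₗ[ℝ] F),
      LinearMap.range_eq_top.2 hθ₀, finrank_top]
  refine ⟨V, hV, (dimH_mono hsub).trans ((dimH_image_le_finrank hΦ).trans ?_)⟩
  rw [Module.finrank_prod]
  exact_mod_cast (by lia)

theorem dimH_setOf_exists_apply_eq_le (hA : ContDiff ℝ 1 A) (hc : ContDiff ℝ 1 c)
    {S : Set Θ} (hS : ∀ θ ∈ S, Function.Surjective (A θ)) :
    dimH {y | ∃ θ ∈ S, A θ y = c θ} ≤
      (Module.finrank ℝ Θ + Module.finrank ℝ E - Module.finrank ℝ F : ℕ) := by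
  choose! V hV hdim using fun θ (hθ : θ ∈ S) =>
    exists_nhds_dimH_setOf_apply_eq_le hA hc (hS θ hθ)
  obtain ⟨T, hTS, hT, hcover⟩ := TopologicalSpace.countable_cover_nhdsWithin
    fun θ hθ => mem_nhdsWithin_of_mem_nhds (hV θ hθ)
  have hsub : {y | ∃ θ ∈ S, A θ y = c θ} ⊆ ⋃ θ₀ ∈ T, {y | ∃ θ ∈ V θ₀, A θ y = c θ} := by
    rintro y ⟨θ, hθ, hy⟩
    obtain ⟨θ₀, hθ₀, hθV⟩ := Set.mem_iUnion₂.1 (hcover hθ)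
    exact Set.mem_iUnion₂.2 ⟨θ₀, hθ₀, θ, hθV, hy⟩
  refine (dimH_mono hsub).trans ?_
  rw [dimH_bUnion hT]
  exact iSup₂_le fun θ hθ => hdim θ (hTS hθ)

theorem dense_setOf_forall_apply_ne {ι : Type*} [Countable ι] {Θ F : ι → Type*}
    [∀ i, NormedAddCommGroup (Θ i)] [∀ i, NormedSpace ℝ (Θ i)] [∀ i, FiniteDimensional ℝ (Θ i)]
    [∀ i, NormedAddCommGroup (F i)] [∀ i, NormedSpace ℝ (F i)] [∀ i, FiniteDimensional ℝ (F i)]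
    {A : ∀ i, Θ i → E →L[ℝ] F i} {c : ∀ i, Θ i → F i} {S : ∀ i, Set (Θ i)}
    (hA : ∀ i, ContDiff ℝ 1 (A i)) (hc : ∀ i, ContDiff ℝ 1 (c i))
    (hS : ∀ i, ∀ θ ∈ S i, Function.Surjective (A i θ))
    (hlt : ∀ i, Module.finrank ℝ (Θ i) < Module.finrank ℝ (F i)) :
    Dense {y | ∀ i, ∀ θ ∈ S i, A i θ y ≠ c i θ} := by
  rcases subsingleton_or_nontrivial E with hE | hE
  · refine dense_univ.mono fun y _ i θ hθ => ?_
    have := LinearMap.finrank_le_finrank_of_surjective (f := (A i θ).toLinearMap) (hS i θ hθ)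
    have := hlt i
    have := Module.finrank_zero_of_subsingleton (R := ℝ) (M := E)
    lia
  have hdim : dimH (⋃ i, {y | ∃ θ ∈ S i, A i θ y = c i θ}) ≤
      (Module.finrank ℝ E - 1 : ℕ) := by
    rw [dimH_iUnion]
    refine iSup_le fun i => (dimH_setOf_exists_apply_eq_le (hA i) (hc i) (hS i)).trans ?_
    have := hlt i
    exact_mod_cast (by lia)
  have hpos : 0 < Module.finrank ℝ E := Module.finrank_pos
  have hlt' : dimH (⋃ i, {y | ∃ θ ∈ S i, A i θ y = c i θ}) < Module.finrank ℝ E :=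
    hdim.trans_lt (by exact_mod_cast Nat.sub_lt hpos one_pos)
  refine (dense_compl_of_dimH_lt_finrank hlt').mono fun y hy i θ hθ h => ?_
  exact hy (Set.mem_iUnion.2 ⟨i, θ, hθ, h⟩)

end DimensionCount

/-! ### Moments of monic polynomials -/

section LowerEval

/-- The value at `t` of the polynomial `∑ b < d, a b * X ^ b`, that is, of `toPoly a` without its
leading term; only `ℝ`-linearity matters for the dimension counts. -/
def lowerEval (d : ℕ) (t : ℝ) : (Fin d → ℂ) →L[ℝ] ℂ :=
  ∑ b : Fin d, t ^ (b : ℕ) • ContinuousLinearMap.proj b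

variable {d : ℕ}

theorem lowerEval_apply (t : ℝ) (a : Fin d → ℂ) :
    lowerEval d t a = ∑ b : Fin d, (t : ℂ) ^ (b : ℕ) * a b := by
  simp [lowerEval]

theorem contDiff_lowerEval : ContDiff ℝ 1 (lowerEval d) :=
  ContDiff.sum fun _ _ => (contDiff_id.pow _).smul contDiff_const

theorem lowerEval_coeff {p : Polynomial ℂ} (hp : p.degree < d) (t : ℝ) :
    lowerEval d t (fun b => p.coeff b) = p.eval (t : ℂ) := by
  rw [lowerEval_apply, Polynomial.eval_eq_sum_degreeLTEquiv (Polynomial.mem_degreeLT.2 hp)]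
  exact Finset.sum_congr rfl fun b _ => mul_comm _ _

theorem exists_lowerEval_eq {ι : Type*} {t : ι → ℝ} (ht : Function.Injective t) {I : Finset ι}
    (hI : I.card ≤ d) (u : ι → ℂ) : ∃ a, ∀ i ∈ I, lowerEval d (t i) a = u i := by
  have hinj : Set.InjOn (fun i => (t i : ℂ)) I := (Complex.ofReal_injective.comp ht).injOn
  have hdeg := (Lagrange.degree_interpolate_lt u hinj).trans_le (Nat.cast_le.2 hI)
  exact ⟨_, fun i hi => (lowerEval_coeff hdeg (t i)).trans
    (Lagrange.eval_interpolate_at_node u hinj hi)⟩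

end LowerEval

section ToPoly

variable {d : ℕ}

theorem eval_toPoly (a : Fin d → ℂ) (t : ℝ) :
    (toPoly a).eval (t : ℂ) = (t : ℂ) ^ d + lowerEval d t a := by
  simp [toPoly, lowerEval_apply, Polynomial.eval_finsetSum, mul_comm (Complex.ofReal t ^ _)]

theorem monic_toPoly (a : Fin d → ℂ) : (toPoly a).Monic :=
  Polynomial.monic_X_pow_add (Polynomial.degree_sum_fin_lt a)

theorem natDegree_toPoly (a : Fin d → ℂ) : (toPoly a).natDegree = d := by
  rw [toPoly, Polynomial.natDegree_add_eq_left_of_degree_lt, Polynomial.natDegree_X_pow]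
  rw [Polynomial.degree_X_pow]
  exact Polynomial.degree_sum_fin_lt a

end ToPoly

section Moments

variable {ι : Type*} [Fintype ι] {d : ℕ}

/- A real affine function of `a` that is bounded above is constant. -/
theorem sum_mul_pow_mul_eq_zero_of_sum_re_nonpos {μ t : ι → ℝ} {Y : ι → ℂ}
    (h : ∀ a : Fin d → ℂ,
      ∑ i, μ i * ((toPoly a).eval (t i : ℂ) * (starRingEnd ℂ) (Y i)).re ≤ 0) (b : Fin d) :
    ∑ i, (μ i : ℂ) * (t i : ℂ) ^ (b : ℕ) * Y i = 0 := by
  set w := ∑ i, (μ i : ℂ) * (t i : ℂ) ^ (b : ℕ) * Y i with hw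
  let C : ℝ := ∑ i, μ i * ((t i : ℂ) ^ d * (starRingEnd ℂ) (Y i)).re
  have hsingle : ∀ z : ℂ, ∑ i, μ i * ((toPoly (Pi.single b z)).eval (t i : ℂ) *
      (starRingEnd ℂ) (Y i)).re = C + (z * (starRingEnd ℂ) w).re := by
    intro z
    rw [hw, map_sum, Finset.mul_sum, Complex.re_sum, ← Finset.sum_add_distrib]
    refine Finset.sum_congr rfl fun i _ => ?_
    have hlow : lowerEval d (t i) (Pi.single b z) = (t i : ℂ) ^ (b : ℕ) * z := by
      simp [lowerEval_apply, Pi.single_apply]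
    rw [eval_toPoly, hlow, ← Complex.re_ofReal_mul, ← Complex.re_ofReal_mul, ← Complex.add_re]
    simp only [map_mul, map_pow, Complex.conj_ofReal]
    congr 1
    ring
  by_contra hne
  have hle := h (Pi.single b (((1 - C : ℝ) : ℂ) / (starRingEnd ℂ) w))
  rw [hsingle, div_mul_cancel₀ _ (by simpa using hne), Complex.ofReal_re] at hle
  linarith

theorem exists_pos_moments_eq_zero {T : Finset ℝ} {Y : ℝ → ℂ} (hY : ∀ t ∈ T, Y t ≠ 0)
    (h : ∀ a : Fin d → ℂ, ∃ t ∈ T, ((toPoly a).eval (t : ℂ) * (starRingEnd ℂ) (Y t)).re ≤ 0) :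
    ∃ J, d < J ∧ ∃ t lam : Fin J → ℝ, Function.Injective t ∧ (∀ i, t i ∈ T) ∧ (∀ i, 0 < lam i) ∧
      ∀ b : Fin d, ∑ i, (lam i : ℂ) * (t i : ℂ) ^ (b : ℕ) * Y (t i) = 0 := by
  let L : (Fin d → ℂ) → T → ℝ := fun a t =>
    ((toPoly a).eval ((t : ℝ) : ℂ) * (starRingEnd ℂ) (Y t)).re
  have hconv : Convex ℝ (Set.range L) := by
    rintro _ ⟨a, rfl⟩ _ ⟨a', rfl⟩ u v - - huv
    refine ⟨u • a + v • a', funext fun t => ?_⟩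
    simp only [L, eval_toPoly, Pi.add_apply, Pi.smul_apply, smul_eq_mul, map_add, map_smul,
      ← Complex.re_ofReal_mul, ← Complex.add_re, Complex.real_smul]
    have huv' : (u : ℂ) + v = 1 := by exact_mod_cast huv
    congr 1
    linear_combination -((t : ℝ) : ℂ) ^ d * (starRingEnd ℂ) (Y t) * huv'
  obtain ⟨μ, hμ, hμ0, hsum⟩ := exists_nonneg_ne_zero_sum_mul_nonpos hconv (Set.range_nonempty L)
    (Set.forall_mem_range.2 fun a => let ⟨t, ht, hle⟩ := h a; ⟨⟨t, ht⟩, hle⟩)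
  have hzero := sum_mul_pow_mul_eq_zero_of_sum_re_nonpos fun a => hsum _ ⟨a, rfl⟩
  let S := {t : T // μ t ≠ 0}
  let φ : Fin (Fintype.card S) ≃ S := (Fintype.equivFin S).symm
  let t : Fin (Fintype.card S) → ℝ := fun i => ((φ i : T) : ℝ)
  have ht : Function.Injective t :=
    Subtype.val_injective.comp (Subtype.val_injective.comp φ.injective)
  have hmom : ∀ b : Fin d, ∑ i, (μ (φ i) : ℂ) * (t i : ℂ) ^ (b : ℕ) * Y (t i) = 0 := by
    intro b
    rw [← hzero b]
    refine Fintype.sum_of_injective (fun i => (φ i : T))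
      (Subtype.val_injective.comp φ.injective) _ _ (fun s hs => ?_) fun i => rfl
    have hμs : μ s = 0 := by_contra fun hne => hs ⟨φ.symm ⟨s, hne⟩, by simp⟩
    simp [hμs]
  refine ⟨Fintype.card S, ?_, t, fun i => μ (φ i), ht, fun i => (φ i : T).2,
    fun i => (hμ _).lt_of_ne' (φ i).2, hmom⟩
  obtain ⟨s₀, hs₀⟩ := Function.ne_iff.1 hμ0
  by_contra! hcard
  have hvan := Matrix.eq_zero_of_forall_pow_sum_mul_pow_eq_zero
    (v := fun i => (μ (φ i) : ℂ) * Y (t i)) (Complex.ofReal_injective.comp ht) fun b => by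
      rw [← hmom (b.castLE hcard)]
      exact Finset.sum_congr rfl fun i _ => mul_right_comm _ _ _
  have hmul := congrFun hvan (φ.symm ⟨s₀, hs₀⟩)
  exact mul_ne_zero (Complex.ofReal_ne_zero.2 (φ _).2) (hY _ (φ _ : T).2) hmul

end Moments

section Replaceability

open scoped ComplexConjugate

variable {r : ℕ}

/-- `z` is a replacement for the `k`-th coordinate of `v`: wherever that coordinate is needed to
keep `v` off an `L_σ`, `z` lies in the same open half-plane as `v k`, so that the segment joining
the two avoids all `L_σ`. -/
def IsReplacement (K : Set (Finset (Fin r))) (k : Fin r) (v : Fin r → ℂ) (z : ℂ) : Prop :=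
  ∀ σ ∉ K, k ∈ σ → (∀ j ∈ σ, j ≠ k → v j = 0) → 0 < (z * conj (v k)).re

/-- The `k`-th member of the tuple `y` of monic polynomials is replaceable by one of degree `d`. -/
def IsReplaceable (K : Set (Finset (Fin r))) {e : Fin r → ℕ} (k : Fin r) (d : ℕ)
    (y : ∀ j, Fin (e j) → ℂ) : Prop :=
  ∃ a : Fin d → ℂ, ∀ t : ℝ,
    IsReplacement K k (fun j => (toPoly (y j)).eval (t : ℂ)) ((toPoly a).eval (t : ℂ))

variable (e : Fin r → ℕ) (k : Fin r) (d : ℕ) {J : ℕ} (s : Fin J → Finset (Fin r))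

/-- The obstruction to replacing the `k`-th of the functions `v`: their values at the points `θ.1 i`
for the indices `j ∈ s i \ {k}`, and the first `d` moments of `v k` for the weights `θ.2`. -/
def obstruction (v : Fin r → ℝ → ℂ) (θ : (Fin J → ℝ) × (Fin J → ℝ)) :
    ((Σ i, (s i).erase k) → ℂ) × (Fin d → ℂ) :=
  (fun p => v p.2 (θ.1 p.1), fun b => ∑ i, (θ.2 i * θ.1 i ^ (b : ℕ)) • v k (θ.1 i))

/-- The dependence of the obstruction on the coefficients below the leading one. -/
def lowerObstruction (θ : (Fin J → ℝ) × (Fin J → ℝ)) :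
    (∀ j, Fin (e j) → ℂ) →L[ℝ] ((Σ i, (s i).erase k) → ℂ) × (Fin d → ℂ) :=
  (ContinuousLinearMap.pi fun p =>
    (lowerEval (e p.2) (θ.1 p.1)).comp (ContinuousLinearMap.proj (p.2 : Fin r))).prod
    (ContinuousLinearMap.pi fun b => ∑ i, (θ.2 i * θ.1 i ^ (b : ℕ)) •
      (lowerEval (e k) (θ.1 i)).comp (ContinuousLinearMap.proj k))

variable {e k d s}

theorem lowerObstruction_apply (θ : (Fin J → ℝ) × (Fin J → ℝ)) (y : ∀ j, Fin (e j) → ℂ) :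
    lowerObstruction e k d s θ y = obstruction k d s (fun j t => lowerEval (e j) t (y j)) θ := by
  ext <;> simp [lowerObstruction, obstruction]

theorem obstruction_eval_toPoly_add (θ : (Fin J → ℝ) × (Fin J → ℝ))
    (y w : ∀ j, Fin (e j) → ℂ) :
    obstruction k d s (fun j t => (toPoly ((y + w) j)).eval (t : ℂ)) θ =
      obstruction k d s (fun j t => (toPoly (y j)).eval (t : ℂ)) θ +
        lowerObstruction e k d s θ w := by
  rw [lowerObstruction_apply]
  ext <;> simp [obstruction, eval_toPoly, add_assoc, Finset.sum_add_distrib]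

theorem contDiff_obstruction {X : Type*} [NormedAddCommGroup X] [NormedSpace ℝ X]
    {v : X → Fin r → ℝ → ℂ} {θ : X → (Fin J → ℝ) × (Fin J → ℝ)}
    (hv : ∀ j, ContDiff ℝ 1 fun p : X × ℝ => v p.1 j p.2) (hθ : ContDiff ℝ 1 θ) :
    ContDiff ℝ 1 fun x => obstruction k d s (v x) (θ x) := by
  have ht : ∀ i, ContDiff ℝ 1 fun x => (θ x).1 i := contDiff_pi.1 (contDiff_fst.comp hθ)
  have hlam : ∀ i, ContDiff ℝ 1 fun x => (θ x).2 i := contDiff_pi.1 (contDiff_snd.comp hθ)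
  have hval : ∀ j i, ContDiff ℝ 1 fun x => v x j ((θ x).1 i) :=
    fun j i => (hv j).comp (contDiff_id.prodMk (ht i))
  exact (contDiff_pi.2 fun p => hval _ _).prodMk (contDiff_pi.2 fun b => ContDiff.sum fun i _ =>
    ((hlam i).mul ((ht i).pow _)).smul (hval k i))

theorem contDiff_obstruction_eval_toPoly {X : Type*} [NormedAddCommGroup X] [NormedSpace ℝ X]
    {g : X → ∀ j, Fin (e j) → ℂ} {θ : X → (Fin J → ℝ) × (Fin J → ℝ)} (hg : ContDiff ℝ 1 g)
    (hθ : ContDiff ℝ 1 θ) :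
    ContDiff ℝ 1 fun x => obstruction k d s (fun j t => (toPoly (g x j)).eval (t : ℂ)) (θ x) := by
  have hgj : ∀ j, ContDiff ℝ 1 fun x => g x j := contDiff_pi.1 hg
  refine contDiff_obstruction (v := fun x j t => (toPoly (g x j)).eval (t : ℂ)) (fun j => ?_) hθ
  simp only [eval_toPoly]
  exact ((Complex.ofRealCLM.contDiff.comp contDiff_snd).pow _).add
    ((contDiff_lowerEval.comp contDiff_snd).clm_apply ((hgj j).comp contDiff_fst))

theorem contDiff_lowerObstruction : ContDiff ℝ 1 (lowerObstruction e k d s) := by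
  refine contDiff_clm_apply_iff.2 fun y => ?_
  simp only [lowerObstruction_apply]
  exact contDiff_obstruction (v := fun _ j t => lowerEval (e j) t (y j))
    (fun j => (contDiff_lowerEval.comp contDiff_snd).clm_apply contDiff_const) contDiff_id

/- Injectivity is positivity of the Hankel form `∑ i, lam i * ‖p (t i)‖ ^ 2` on polynomials `p` of
degree `< d`. -/
theorem exists_moments_eq {t lam : Fin J → ℝ} (ht : Function.Injective t) (hlam : ∀ i, 0 < lam i)
    (hdJ : d ≤ J) (u : Fin d → ℂ) : ∃ p : Polynomial ℂ, p.degree < d ∧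
      ∀ b : Fin d, ∑ i, (lam i * t i ^ (b : ℕ)) • p.eval (t i : ℂ) = u b := by
  let H : Polynomial.degreeLT ℂ d →ₗ[ℂ] Fin d → ℂ :=
    { toFun := fun p b => ∑ i, (lam i * t i ^ (b : ℕ)) • (p : Polynomial ℂ).eval (t i : ℂ)
      map_add' := fun p q => by ext; simp [Finset.sum_add_distrib]
      map_smul' := fun c p => by ext; simp [Finset.mul_sum, mul_left_comm] }
  have hH : Function.Injective H := by
    refine (injective_iff_map_eq_zero H).2 fun p hp => ?_
    have hform : ∑ i, ((lam i * ‖(p : Polynomial ℂ).eval (t i : ℂ)‖ ^ 2 : ℝ) : ℂ) =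
        ∑ b : Fin d, conj ((p : Polynomial ℂ).coeff b) * H p b := by
      simp only [H, LinearMap.coe_mk, AddHom.coe_mk, Finset.mul_sum]
      rw [Finset.sum_comm]
      refine Finset.sum_congr rfl fun i _ => ?_
      have hconj : conj ((p : Polynomial ℂ).eval (t i : ℂ)) =
          ∑ b : Fin d, conj ((p : Polynomial ℂ).coeff b) * (t i : ℂ) ^ (b : ℕ) := by
        rw [← lowerEval_coeff (Polynomial.mem_degreeLT.1 p.2), lowerEval_apply, map_sum]
        simp [mul_comm]
      rw [Complex.ofReal_mul, Complex.ofReal_pow, ← Complex.conj_mul', hconj, Finset.sum_mul,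
        Finset.mul_sum]
      refine Finset.sum_congr rfl fun b _ => ?_
      rw [Complex.real_smul]
      push_cast
      ring
    simp only [hp, Pi.zero_apply, mul_zero, Finset.sum_const_zero] at hform
    have hzero := (Finset.sum_eq_zero_iff_of_nonneg fun i _ =>
      mul_nonneg (hlam i).le (sq_nonneg _)).1 (by exact_mod_cast hform)
    have heval : ∀ i, (p : Polynomial ℂ).eval (t i : ℂ) = 0 := fun i => by
      simpa [(hlam i).ne'] using hzero i (Finset.mem_univ i)
    refine Subtype.ext (Polynomial.eq_zero_of_degree_lt_of_eval_index_eq_zero 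
      (s := Finset.univ) (v := fun i => (t i : ℂ)) (Complex.ofReal_injective.comp ht).injOn
      ((Polynomial.mem_degreeLT.1 p.2).trans_le (by simpa using hdJ)) fun i _ => heval i)
  obtain ⟨p, hp⟩ := (LinearMap.injective_iff_surjective_of_finrank_eq_finrank
    (by simp [(Polynomial.degreeLTEquiv ℂ d).finrank_eq])).1 hH u
  exact ⟨p, Polynomial.mem_degreeLT.1 p.2, congrFun hp⟩

theorem surjective_lowerObstruction {t lam : Fin J → ℝ} (ht : Function.Injective t)
    (hlam : ∀ i, 0 < lam i) (hdJ : d ≤ J) (hd : d ≤ e k)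
    (hs : ∀ j ≠ k, (Finset.univ.filter fun i => j ∈ s i).card ≤ e j) :
    Function.Surjective (lowerObstruction e k d s (t, lam)) := by
  rintro ⟨u, m⟩
  obtain ⟨p, hp, hpm⟩ := exists_moments_eq ht hlam hdJ m
  have hval : ∀ j, ∃ a : Fin (e j) → ℂ, (j = k → ∀ i, lowerEval (e j) (t i) a = p.eval (t i : ℂ)) ∧
      ∀ i (hj : j ∈ (s i).erase k), lowerEval (e j) (t i) a = u ⟨i, j, hj⟩ := by
    intro j
    rcases eq_or_ne j k with rfl | hj
    · exact ⟨_, fun _ i => lowerEval_coeff (hp.trans_le (Nat.cast_le.2 hd)) (t i),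
        fun i hj => absurd rfl (Finset.ne_of_mem_erase hj)⟩
    · obtain ⟨a, ha⟩ := exists_lowerEval_eq ht (hs j hj)
        fun i => if h : j ∈ (s i).erase k then u ⟨i, j, h⟩ else 0
      refine ⟨a, fun h => absurd h hj, fun i hi => ?_⟩
      rw [ha i (by simpa using Finset.mem_of_mem_erase hi), dif_pos hi]
  choose y hyk hy using hval
  refine ⟨y, ?_⟩
  rw [lowerObstruction_apply]
  refine Prod.ext (funext fun q => hy _ _ q.2.2) (funext fun b => ?_)
  simp only [obstruction, hyk k rfl, hpm]

variable {K : Set (Finset (Fin r))}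

theorem exists_obstruction_eq_zero (hK : ∀ σ ∉ K, 2 ≤ σ.card) {y : ∀ j, Fin (e j) → ℂ}
    (hy : y ∈ PolSp K e) (h : ¬ IsReplaceable K k d y) :
    ∃ J, d < J ∧ ∃ s : Fin J → Finset (Fin r), (∀ i, s i ∉ K ∧ k ∈ s i) ∧
      (∀ j ≠ k, (Finset.univ.filter fun i => j ∈ s i).card ≤ e j) ∧
      ∃ t lam : Fin J → ℝ, Function.Injective t ∧ (∀ i, 0 < lam i) ∧
        obstruction k d s (fun j t => (toPoly (y j)).eval (t : ℂ)) (t, lam) = 0 := by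
  let T : Set ℝ := {t | ∃ σ ∉ K, k ∈ σ ∧ ∀ j ∈ σ, j ≠ k → (toPoly (y j)).eval (t : ℂ) = 0}
  have hT : T.Finite := by
    have hroots : (⋃ j, {t : ℝ | (toPoly (y j)).eval (t : ℂ) = 0}).Finite :=
      Set.finite_iUnion fun j => ((toPoly (y j)).finite_setOfPred_isRoot
        (monic_toPoly _).ne_zero).preimage Complex.ofReal_injective.injOn
    refine hroots.subset fun t ⟨σ, hσ, _, hroot⟩ => ?_
    obtain ⟨j, hj, hjk⟩ := Finset.exists_mem_ne (hK σ hσ) k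
    exact Set.mem_iUnion.2 ⟨j, hroot j hj hjk⟩
  have hYne : ∀ t ∈ hT.toFinset, (toPoly (y k)).eval (t : ℂ) ≠ 0 := fun t ht => by
    obtain ⟨σ, hσ, -, hroot⟩ := hT.mem_toFinset.1 ht
    obtain ⟨j, hj, hne⟩ := hy σ hσ t
    rcases eq_or_ne j k with rfl | hjk
    exacts [hne, absurd (hroot j hj hjk) hne]
  have hno : ∀ a : Fin d → ℂ, ∃ t ∈ hT.toFinset,
      ((toPoly a).eval (t : ℂ) * conj ((toPoly (y k)).eval (t : ℂ))).re ≤ 0 := by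
    intro a
    by_contra! hpos
    exact h ⟨a, fun t σ hσ hk hroot => hpos t (hT.mem_toFinset.2 ⟨σ, hσ, hk, hroot⟩)⟩
  obtain ⟨J, hJ, t, lam, ht, htT, hlam, hmom⟩ := exists_pos_moments_eq_zero hYne hno
  choose s hsK hsk hroot using fun i => hT.mem_toFinset.1 (htT i)
  refine ⟨J, hJ, s, fun i => ⟨hsK i, hsk i⟩, fun j hj => ?_, t, lam, ht, hlam, ?_⟩
  · rw [← natDegree_toPoly (y j), ← Finset.card_image_of_injective _
      (Complex.ofReal_injective.comp ht)]
    refine Polynomial.card_le_degree_of_subset_roots fun z hz => ?_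
    obtain ⟨i, hi, rfl⟩ := Finset.mem_image.1 (Finset.mem_def.2 hz)
    exact (Polynomial.mem_roots (monic_toPoly _).ne_zero).2
      (hroot i j (Finset.mem_filter.1 hi).2 hj)
  · ext p
    · exact hroot p.1 p.2 (Finset.mem_of_mem_erase p.2.2) (Finset.ne_of_mem_erase p.2.2)
    · simpa [obstruction] using hmom p

theorem lt_finrank_obstruction {ρ m : ℕ} (hs : ∀ i, k ∈ s i ∧ ρ ≤ (s i).card) (hJ : d < J)
    (hm : m < 2 * (ρ - 1) * d) :
    m + (J + J) < Module.finrank ℝ (((Σ i, (s i).erase k) → ℂ) × (Fin d → ℂ)) := by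
  have hcard : J * (ρ - 1) ≤ ∑ i, ((s i).erase k).card := by
    have hle : ∀ i ∈ Finset.univ, ρ - 1 ≤ ((s i).erase k).card := fun i _ => by
      rw [Finset.card_erase_of_mem (hs i).1]
      exact Nat.sub_le_sub_right (hs i).2 1
    simpa using Finset.card_nsmul_le_sum _ _ _ hle
  have hfinrank : Module.finrank ℝ (((Σ i, (s i).erase k) → ℂ) × (Fin d → ℂ)) =
      (∑ i, ((s i).erase k).card) * 2 + d * 2 := by
    simp only [Module.finrank_prod, Module.finrank_pi_fintype, Complex.finrank_real_complex,
      Finset.sum_const, Finset.card_univ, Fintype.card_sigma, Fintype.card_coe, Fintype.card_fin,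
      smul_eq_mul]
  rw [hfinrank]
  rcases hu : ρ - 1 with _ | u
  · simp [hu] at hm
  · rw [hu] at hm hcard
    nlinarith [Nat.mul_le_mul_right u hJ.le]

/- An obstruction involving `J > d` points depends on `2 * J` parameters and satisfies at least
`2 * (J * (ρ - 1) + d)` real equations. -/
theorem dense_setOf_forall_isReplaceable {ρ m : ℕ} (hK : ∀ σ ∉ K, ρ ≤ σ.card) (hd : d ≤ e k)
    (hm : m < 2 * (ρ - 1) * d) {g : (Fin m → ℝ) → ∀ j, Fin (e j) → ℂ} (hg : ContDiff ℝ 1 g) :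
    Dense {w | ∀ x, g x + w ∈ PolSp K e → IsReplaceable K k d (g x + w)} := by
  let I := {p : Σ J, Fin J → Finset (Fin r) // d < p.1 ∧ (∀ i, p.2 i ∉ K ∧ k ∈ p.2 i) ∧
    ∀ j ≠ k, (Finset.univ.filter fun i => j ∈ p.2 i).card ≤ e j}
  have hρ : 2 ≤ ρ := by
    by_contra! hlt
    simp [Nat.sub_eq_zero_of_le (Nat.le_of_lt_succ hlt)] at hm
  have hcount : ∀ p : I, Module.finrank ℝ ((Fin m → ℝ) × (Fin p.1.1 → ℝ) × (Fin p.1.1 → ℝ)) <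
      Module.finrank ℝ (((Σ i, (p.1.2 i).erase k) → ℂ) × (Fin d → ℂ)) := by
    rintro ⟨⟨J, s⟩, hJ, hs, -⟩
    simpa only [Module.finrank_prod, Module.finrank_fin_fun] using
      lt_finrank_obstruction (fun i => ⟨(hs i).2, hK _ (hs i).1⟩) hJ hm
  have hdense := dense_setOf_forall_apply_ne
    (S := fun p : I => {θ | Function.Injective θ.2.1 ∧ ∀ i, 0 < θ.2.2 i})
    (fun p : I => contDiff_lowerObstruction.comp contDiff_snd)
    (fun p => (contDiff_obstruction_eval_toPoly (hg.comp contDiff_fst) contDiff_snd).neg)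
    (fun p θ hθ => surjective_lowerObstruction hθ.1 hθ.2 p.2.1.le hd p.2.2.2) hcount
  refine hdense.mono fun w hw x hx => ?_
  by_contra hnot
  obtain ⟨J, hJ, s, hs, hcard, t, lam, ht, hlam, hobs⟩ :=
    exists_obstruction_eq_zero (fun σ hσ => hρ.trans (hK σ hσ)) hx hnot
  rw [obstruction_eval_toPoly_add] at hobs
  exact hw ⟨⟨J, s⟩, hJ, hs, hcard⟩ (x, t, lam) ⟨ht, hlam⟩ (eq_neg_of_add_eq_zero_right hobs)

end Replaceability

/-! ### Rational functions on the circle -/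

section RealQuotient

open Filter Polynomial OnePoint

/-- The rational function `p / q` on `S¹ = ℝ ∪ {∞}`, linear in `p`. Its value at `∞` is the limit of
`p / q` when `q` is monic of degree at least that of `p`. -/
def realQuotient (q : ℂ[X]) : ℂ[X] →ₗ[ℂ] OnePoint ℝ → ℂ where
  toFun p z := z.elim (p.coeff q.natDegree) fun t => p.eval (t : ℂ) / q.eval (t : ℂ)
  map_add' p p' := by
    funext z
    cases z <;> simp [add_div]
  map_smul' a p := by
    funext z
    cases z <;> simp [mul_div_assoc]

theorem realQuotient_coe (q p : ℂ[X]) (t : ℝ) :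
    realQuotient q p (t : OnePoint ℝ) = p.eval (t : ℂ) / q.eval (t : ℂ) := rfl

theorem realQuotient_infty (q p : ℂ[X]) : realQuotient q p ∞ = p.coeff q.natDegree := rfl

theorem continuous_realQuotient {q p : ℂ[X]} (hq : q.Monic) (hq0 : ∀ t : ℝ, q.eval (t : ℂ) ≠ 0)
    (hp : p.natDegree ≤ q.natDegree) : Continuous (realQuotient q p) := by
  rw [OnePoint.continuous_iff, coclosedCompact_eq_cocompact]
  refine ⟨?_, by simp only [realQuotient_coe]; fun_prop (disch := exact hq0 _)⟩
  let reflected (f : ℂ[X]) := f.reflect q.natDegree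
  have heval {f : ℂ[X]} (hf : f.natDegree ≤ q.natDegree) {t : ℝ} (ht : t ≠ 0) :
      f.eval (t : ℂ) = (reflected f).eval (t : ℂ)⁻¹ * (t : ℂ) ^ q.natDegree := by
    have : Invertible (t : ℂ) := invertibleOfNonzero (by exact_mod_cast ht)
    simpa using (eval₂_reflect_mul_pow (RingHom.id ℂ) (t : ℂ) q.natDegree f hf).symm
  have hquot : ∀ᶠ t : ℝ in cocompact ℝ,
      (reflected p).eval (t : ℂ)⁻¹ / (reflected q).eval (t : ℂ)⁻¹ = realQuotient q p t := by
    filter_upwards [(isCompact_singleton (x := (0 : ℝ))).compl_mem_cocompact] with t ht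
    rw [realQuotient_coe, heval hp ht, heval le_rfl ht,
      mul_div_mul_right _ _ (pow_ne_zero _ (Complex.ofReal_ne_zero.2 ht))]
  have hinv : Tendsto (fun t : ℝ => (t : ℂ)⁻¹) (cocompact ℝ) (nhds 0) := by
    rw [← Metric.cobounded_eq_cocompact]
    exact tendsto_inv₀_cobounded.comp (tendsto_algebraMap_cobounded ℝ ℂ)
  have hlim (f : ℂ[X]) : Tendsto (fun t : ℝ => (reflected f).eval (t : ℂ)⁻¹) (cocompact ℝ)
      (nhds (f.coeff q.natDegree)) := by
    have h0 : (reflected f).eval 0 = f.coeff q.natDegree := by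
      rw [← coeff_zero_eq_eval_zero, coeff_reflect, revAt_zero]
    exact h0 ▸ ((reflected f).continuous.tendsto 0).comp hinv
  have hdiv := (hlim p).div (hlim q) (by rw [hq.coeff_natDegree]; exact one_ne_zero)
  rw [hq.coeff_natDegree, div_one] at hdiv
  exact hdiv.congr' hquot

end RealQuotient

section CoeffToPoly

variable {d : ℕ}

theorem coeff_toPoly (a : Fin d → ℂ) (i : ℕ) :
    (toPoly a).coeff i = (if i = d then 1 else 0) + ∑ j : Fin d, if i = j then a j else 0 := by
  simp [toPoly, Polynomial.coeff_X_pow, Polynomial.finsetSum_coeff]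

theorem coeff_toPoly_fin (a : Fin d → ℂ) (i : Fin d) : (toPoly a).coeff i = a i := by
  simp [coeff_toPoly, i.2.ne, ← Fin.ext_iff]

theorem toPoly_injective : Function.Injective (toPoly (d := d)) := fun a b h => by
  funext i
  rw [← coeff_toPoly_fin a i, h, coeff_toPoly_fin]

theorem toPoly_coeff {p : Polynomial ℂ} (hp : p.Monic) (hd : p.natDegree = d) :
    toPoly (fun i : Fin d => p.coeff i) = p := by
  subst hd
  conv_rhs => rw [hp.as_sum]
  simp [toPoly, Finset.sum_range]

theorem continuous_coeff_toPoly (i : ℕ) : Continuous fun a : Fin d → ℂ => (toPoly a).coeff i := by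
  simp only [coeff_toPoly]
  refine continuous_const.add (continuous_finsetSum _ fun j _ => ?_)
  split_ifs <;> fun_prop

end CoeffToPoly

section MonicRat

open OnePoint
open Polynomial (X C)

/-- The denominator `(X + i) ^ D * (X² + 1) ^ M`, of degree `D + 2 M` and without real roots. -/
def den (D M : ℕ) : Polynomial ℂ := (X + C Complex.I) ^ D * (X ^ 2 + C 1) ^ M

theorem monic_den (D M : ℕ) : (den D M).Monic :=
  ((Polynomial.monic_X_add_C _).pow D).mul ((Polynomial.monic_X_pow_add_C _ two_ne_zero).pow M)

theorem natDegree_den (D M : ℕ) : (den D M).natDegree = D + 2 * M := by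
  rw [den, Polynomial.Monic.natDegree_mul ((Polynomial.monic_X_add_C _).pow D)
    ((Polynomial.monic_X_pow_add_C _ two_ne_zero).pow M), Polynomial.natDegree_pow,
    Polynomial.natDegree_pow, Polynomial.natDegree_X_add_C, Polynomial.natDegree_X_pow_add_C]
  ring

theorem den_add (D D' M M' : ℕ) : den (D + D') (M + M') = den D M * den D' M' := by
  simp only [den, pow_add]
  ring

theorem ofReal_add_I_ne_zero (t : ℝ) : (t : ℂ) + Complex.I ≠ 0 := fun h => by
  simpa using congrArg Complex.im h

theorem eval_den (D M : ℕ) (t : ℝ) :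
    (den D M).eval (t : ℂ) = (t + Complex.I) ^ D * ((1 + t ^ 2 : ℝ) : ℂ) ^ M := by
  simp [den, add_comm]

theorem eval_den_ne_zero (D M : ℕ) (t : ℝ) : (den D M).eval (t : ℂ) ≠ 0 := by
  rw [eval_den]
  exact mul_ne_zero (pow_ne_zero _ (ofReal_add_I_ne_zero t))
    (pow_ne_zero _ (Complex.ofReal_ne_zero.2 (by positivity)))

variable {D M : ℕ}

/-- The rational function on `S¹` with denominator `den D M` whose numerator is the monic polynomial
with coefficients `c`. -/
def monicRat (D M : ℕ) (c : Fin (D + 2 * M) → ℂ) : OnePoint ℝ → ℂ :=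
  realQuotient (den D M) (toPoly c)

theorem monicRat_eq_add_sum (c : Fin (D + 2 * M) → ℂ) (p : OnePoint ℝ) :
    monicRat D M c p = realQuotient (den D M) (X ^ (D + 2 * M)) p +
      ∑ i, c i * realQuotient (den D M) (X ^ (i : ℕ)) p := by
  simp [monicRat, toPoly, Polynomial.C_mul']

@[fun_prop]
theorem continuous_monicRat {Y : Type*} [TopologicalSpace Y] {c : Y → Fin (D + 2 * M) → ℂ}
    {p : Y → OnePoint ℝ} (hc : Continuous c) (hp : Continuous p) :
    Continuous fun y => monicRat D M (c y) (p y) := by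
  have h (i : ℕ) (hi : i ≤ D + 2 * M) : Continuous (realQuotient (den D M) (X ^ i)) :=
    continuous_realQuotient (monic_den D M) (eval_den_ne_zero D M)
      (by rwa [natDegree_den, Polynomial.natDegree_X_pow])
  have htop := h _ le_rfl
  have hlow (i : Fin (D + 2 * M)) := h i i.2.le
  simp only [monicRat_eq_add_sum]
  fun_prop

theorem monicRat_coe (c : Fin (D + 2 * M) → ℂ) (t : ℝ) :
    monicRat D M c (t : OnePoint ℝ) = (toPoly c).eval (t : ℂ) / (den D M).eval (t : ℂ) := rfl

theorem monicRat_infty (c : Fin (D + 2 * M) → ℂ) : monicRat D M c ∞ = 1 := by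
  rw [monicRat, realQuotient_infty, natDegree_den]
  simpa [natDegree_toPoly] using (monic_toPoly c).coeff_natDegree

theorem monicRat_coe_eq_zero {c : Fin (D + 2 * M) → ℂ} {t : ℝ} :
    monicRat D M c (t : OnePoint ℝ) = 0 ↔ (toPoly c).eval (t : ℂ) = 0 := by
  simp [monicRat_coe, eval_den_ne_zero]

theorem monicRat_injective : Function.Injective (monicRat D M) := fun c c' h => by
  refine toPoly_injective (Polynomial.eq_of_infinite_eval_eq _ _
    ((Set.infinite_range_of_injective Complex.ofReal_injective).mono ?_))
  rintro _ ⟨t, rfl⟩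
  exact (div_left_inj' (eval_den_ne_zero D M t)).1 (congrFun h (t : OnePoint ℝ))

theorem monicRat_add_smul (c c' : Fin (D + 2 * M) → ℂ) {α β : ℝ} (h : α + β = 1)
    (p : OnePoint ℝ) :
    monicRat D M (α • c + β • c') p = α • monicRat D M c p + β • monicRat D M c' p := by
  obtain rfl : α = 1 - β := eq_sub_of_add_eq h
  simp only [monicRat_eq_add_sum, Pi.add_apply, Pi.smul_apply, Complex.real_smul, add_mul,
    Finset.sum_add_distrib, mul_add, Finset.mul_sum, mul_assoc]
  push_cast
  ring

theorem re_monicRat_mul_conj_pos {M' : ℕ} {a : Fin (D + 2 * M) → ℂ} {y : Fin (D + 2 * M') → ℂ}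
    {t : ℝ} :
    0 < (monicRat D M a (t : OnePoint ℝ) *
        (starRingEnd ℂ) (monicRat D M' y (t : OnePoint ℝ))).re ↔
      0 < ((toPoly a).eval (t : ℂ) * (starRingEnd ℂ) ((toPoly y).eval (t : ℂ))).re := by
  have hden : (den D M).eval (t : ℂ) * (starRingEnd ℂ) ((den D M').eval (t : ℂ)) =
      ((Complex.normSq (t + Complex.I) ^ D * (1 + t ^ 2) ^ (M + M') : ℝ) : ℂ) := by
    rw [eval_den, eval_den, map_mul, map_pow, map_pow, Complex.conj_ofReal]
    push_cast
    rw [← Complex.mul_conj, mul_pow]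
    ring
  have hpos : 0 < Complex.normSq (t + Complex.I) ^ D * (1 + t ^ 2) ^ (M + M') := by
    have := Complex.normSq_pos.2 (ofReal_add_I_ne_zero t)
    positivity
  rw [monicRat_coe, monicRat_coe, map_div₀, div_mul_div_comm, hden, Complex.div_ofReal_re]
  exact div_pos_iff_of_pos_right hpos

end MonicRat

/-! ### Straight-line homotopies and generic perturbations -/

section StraightLine

theorem isOpen_setOf_forall_prodMk_mem {X Y : Type*} [TopologicalSpace X] [TopologicalSpace Y]
    [CompactSpace Y] {W : Set (X × Y)} (hW : IsOpen W) : IsOpen {x | ∀ y, (x, y) ∈ W} := by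
  convert (isClosedMap_fst_of_compactSpace (Y := Y) _ hW.isClosed_compl).isOpen_compl
  ext x
  simp

theorem homotopicRel_of_forall_segment_subset {X E : Type*} [TopologicalSpace X]
    [TopologicalSpace E] [AddCommGroup E] [Module ℝ E] [ContinuousAdd E] [ContinuousSMul ℝ E]
    {U : Set E} {f g : C(X, U)} {S : Set X} (hS : Set.EqOn f g S)
    (h : ∀ x, segment ℝ (f x : E) (g x) ⊆ U) : f.HomotopicRel g S := by
  let line (z : unitInterval × X) : E := (1 - (z.1 : ℝ)) • (f z.2 : E) + (z.1 : ℝ) • (g z.2 : E)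
  have hline : ∀ z, line z ∈ U := fun z => h z.2 <| by
    rw [segment_eq_image]
    exact ⟨z.1, z.1.2, rfl⟩
  refine ⟨⟨⟨⟨fun z => ⟨line z, hline z⟩, by fun_prop⟩, fun x => ?_, fun x => ?_⟩, ?_⟩⟩
  · simp [line]
  · simp [line]
  · intro t x hx
    ext1
    simp [line, ← hS hx, ← add_smul]

variable {E : Type*} [NormedAddCommGroup E] [NormedSpace ℝ E]

open scoped unitInterval Topology in
theorem exists_forall_dist_lt_and_mem_of_dense {m : ℕ} (c : C(I^(Fin m), E)) {S : Set E}
    (hS : ∀ g : (Fin m → ℝ) → E, ContDiff ℝ 1 g → Dense {w | ∀ x, g x + w ∈ S})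
    {ε : ℝ} (hε : 0 < ε) : ∃ c' : C(I^(Fin m), E), ∀ s, dist (c' s) (c s) < ε ∧ c' s ∈ S := by
  let clamp (x : Fin m → ℝ) : I^(Fin m) := fun i => Set.projIcc 0 1 zero_le_one (x i)
  have hclamp : Continuous clamp :=
    continuous_pi fun i => continuous_projIcc.comp (continuous_apply i)
  obtain ⟨g, hg, hgc, -⟩ := (c.continuous.comp hclamp).exists_contDiff_approx 1
    (ε := fun _ => ε / 2) continuous_const fun _ => half_pos hε
  obtain ⟨w, hw, hwε⟩ := (hS g (by exact_mod_cast hg)).exists_dist_lt 0 (half_pos hε)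
  have hgcont := hg.continuous
  refine ⟨⟨fun s => g (fun i => s i) + w, by fun_prop⟩, fun s => ⟨?_, hw _⟩⟩
  have hgs : dist (g fun i => (s i : ℝ)) (c s) < ε / 2 := by
    simpa [clamp] using hgc fun i => (s i : ℝ)
  rw [dist_comm, dist_zero_right] at hwε
  calc dist (g (fun i => s i) + w) (c s)
      ≤ dist (g (fun i => s i) + w) (g fun i => s i) + dist (g fun i => (s i : ℝ)) (c s) :=
        dist_triangle _ _ _
    _ < ε / 2 + ε / 2 := by
        gcongr
        simpa using hwε
    _ = ε := add_halves ε

theorem exists_forall_segment_subset_of_dist_lt {X : Type*} [TopologicalSpace X] [CompactSpace X]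
    (c : C(X, E)) {U : Set E} (hU : IsOpen U) (hcU : ∀ x, c x ∈ U) :
    ∃ ε > 0, ∀ x y, dist y (c x) < ε → segment ℝ (c x) y ⊆ U := by
  obtain ⟨ε, hε, hthick⟩ := (isCompact_range c.continuous).exists_thickening_subset_open hU
    (Set.range_subset_iff.2 hcU)
  exact ⟨ε, hε, fun x y hy =>
    ((convex_ball (c x) ε).segment_subset (Metric.mem_ball_self hε) hy).trans
      ((Metric.ball_subset_thickening (Set.mem_range_self x) ε).trans hthick)⟩

theorem exists_eqOn_forall_mem_of_approx {X : Type*} [TopologicalSpace X] [CompactSpace X]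
    [T2Space X] {c : C(X, E)} {A : Set X} (hA : IsClosed A) {U G : Set E} (hU : IsOpen U)
    (hG : IsOpen G) (hcU : ∀ s, c s ∈ U) (hcG : ∀ s ∈ A, c s ∈ G)
    (happrox : ∀ ε > 0, ∃ c₁ : C(X, E), ∀ s, dist (c₁ s) (c s) < ε ∧ (c₁ s ∈ U → c₁ s ∈ G)) :
    ∃ c' : C(X, E), Set.EqOn c' c A ∧ (∀ s, c' s ∈ G) ∧ ∀ s, segment ℝ (c s) (c' s) ⊆ U := by
  obtain ⟨ε₁, hε₁, hsegU⟩ := exists_forall_segment_subset_of_dist_lt c hU hcU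
  obtain ⟨ε₂, hε₂, hthickG⟩ := (hA.isCompact.image c.continuous).exists_thickening_subset_open hG
    (Set.image_subset_iff.2 hcG)
  let V : Set X := c ⁻¹' Metric.thickening (ε₂ / 2) (c '' A)
  have hV : IsOpen V := Metric.isOpen_thickening.preimage c.continuous
  have hAV : A ⊆ V := fun s hs =>
    Metric.self_subset_thickening (half_pos hε₂) _ (Set.mem_image_of_mem c hs)
  obtain ⟨χ, hχ0, hχ1, hχ⟩ := exists_continuous_zero_one_of_isClosed hA hV.isClosed_compl
    (Set.disjoint_compl_right_iff_subset.2 hAV)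
  obtain ⟨c₁, hc₁⟩ := happrox (min ε₁ (ε₂ / 2)) (by positivity)
  let c' : C(X, E) := ⟨fun s => c s + χ s • (c₁ s - c s), by fun_prop⟩
  have hdist : ∀ s, dist (c' s) (c s) < min ε₁ (ε₂ / 2) := fun s => by
    have hle : χ s * ‖c₁ s - c s‖ ≤ ‖c₁ s - c s‖ := mul_le_of_le_one_left (norm_nonneg _) (hχ s).2
    have hsub : c' s - c s = χ s • (c₁ s - c s) := add_sub_cancel_left _ _
    rw [dist_eq_norm, hsub, norm_smul, Real.norm_of_nonneg (hχ s).1]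
    exact hle.trans_lt (dist_eq_norm (c₁ s) (c s) ▸ (hc₁ s).1)
  have hseg : ∀ s, segment ℝ (c s) (c' s) ⊆ U := fun s =>
    hsegU s _ ((hdist s).trans_le (min_le_left _ _))
  refine ⟨c', fun s hs => by simp [c', hχ0 hs], fun s => ?_, hseg⟩
  by_cases hs : s ∈ V
  · obtain ⟨z, hz, hd⟩ := Metric.mem_thickening_iff.1 hs
    refine hthickG (Metric.mem_thickening_iff.2 ⟨z, hz, ?_⟩)
    calc dist (c' s) z ≤ dist (c' s) (c s) + dist (c s) z := dist_triangle _ _ _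
      _ < ε₂ / 2 + ε₂ / 2 := add_lt_add ((hdist s).trans_le (min_le_right _ _)) hd
      _ = ε₂ := add_halves ε₂
  · have heq : c' s = c₁ s := by
      have : χ s = 1 := hχ1 hs
      simp [c', this]
    rw [heq]
    exact (hc₁ s).2 (heq ▸ hseg s (right_mem_segment ℝ _ _))

end StraightLine

section Replacement

variable {r : ℕ} {K : Set (Finset (Fin r))} {k : Fin r}

theorem isOpen_UK : IsOpen (UK K) := by
  rw [UK, isOpen_compl_iff]
  refine (Set.toFinite _).isClosed_biUnion fun σ _ => ?_
  simp only [LSub, Set.ofPred_forall]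
  exact isClosed_biInter fun i _ => isClosed_eq (continuous_apply i) continuous_const

theorem isOpen_setOf_isReplacement :
    IsOpen {q : (Fin r → ℂ) × ℂ | IsReplacement K k q.1 q.2} := by
  have hre : Continuous fun q : (Fin r → ℂ) × ℂ => (q.2 * (starRingEnd ℂ) (q.1 k)).re := by
    have := Complex.continuous_re
    have := Complex.continuous_conj
    fun_prop
  have hoff (σ : Finset (Fin r)) :
      IsClosed {q : (Fin r → ℂ) × ℂ | ∀ j ∈ σ, j ≠ k → q.1 j = 0} := by
    simp only [Set.ofPred_forall]
    exact isClosed_iInter fun j => isClosed_iInter fun _ => isClosed_iInter fun _ =>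
      isClosed_eq ((continuous_apply j).comp continuous_fst) continuous_const
  simp only [IsReplacement, Set.ofPred_forall]
  refine isOpen_iInter_of_finite fun σ => isOpen_iInter_of_finite fun _ =>
    isOpen_iInter_of_finite fun _ => ?_
  have hunion := (hoff σ).isOpen_compl.union (isOpen_lt (continuous_const (y := (0 : ℝ))) hre)
  convert hunion using 1
  exact Set.ext fun q => imp_iff_not_or

theorem convex_setOf_isReplacement (v : Fin r → ℂ) : Convex ℝ {z | IsReplacement K k v z} := by
  intro z hz z' hz' α β hα hβ hαβ σ hσ hk hv
  have hpos := convex_Ioi (0 : ℝ) (hz σ hσ hk hv) (hz' σ hσ hk hv) hα hβ hαβ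
  simpa [add_mul, mul_assoc] using hpos

theorem segment_update_subset_UK {v : Fin r → ℂ} {z : ℂ} (hv : v ∈ UK K)
    (h : IsReplacement K k v z) : segment ℝ v (Function.update v k z) ⊆ UK K := by
  rintro _ ⟨α, β, hα, hβ, hαβ, rfl⟩
  rw [mem_UK]
  intro σ hσ
  by_contra! hzero
  have hoff : ∀ j ∈ σ, j ≠ k → v j = 0 := fun j hj hjk => by
    simpa [hjk, ← add_mul, ← Complex.ofReal_add, hαβ] using hzero j hj
  obtain ⟨i, hi, hvi⟩ := mem_UK.1 hv σ hσ
  obtain rfl : i = k := by_contra fun hik => hvi (hoff i hi hik)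
  have hpos := convex_Ioi (0 : ℝ) (Complex.normSq_pos.2 hvi) (h σ hσ hi hoff) hα hβ hαβ
  have hsum : (α : ℂ) * v i + β * z = 0 := by simpa using hzero i hi
  have hre := congrArg (fun w => (w * (starRingEnd ℂ) (v i)).re) hsum
  simp only [add_mul, mul_assoc, Complex.mul_conj, Complex.add_re, Complex.re_ofReal_mul,
    Complex.ofReal_re, zero_mul, Complex.zero_re] at hre
  exact hpos.ne' hre

theorem isReplacement_self {v : Fin r → ℂ} (hv : v ∈ UK K) : IsReplacement K k v (v k) := by
  intro σ hσ _ hoff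
  obtain ⟨i, hi, hvi⟩ := mem_UK.1 hv σ hσ
  obtain rfl : i = k := by_contra fun hik => hvi (hoff i hi hik)
  simpa [Complex.mul_conj] using Complex.normSq_pos.2 hvi

end Replacement

/-! ### Reduction of the denominators, one coordinate at a time -/

open scoped OnePoint

section RatVec

variable {r : ℕ} {K : Set (Finset (Fin r))} {D M : Fin r → ℕ} {k : Fin r}

/-- The map `S¹ → ℂ^r` whose coordinates are the monic rational functions with coefficients `y`. -/
def ratVec (D M : Fin r → ℕ) (y : ∀ j, Fin (D j + 2 * M j) → ℂ) (p : OnePoint ℝ) : Fin r → ℂ :=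
  fun j => monicRat (D j) (M j) (y j) p

@[fun_prop]
theorem continuous_ratVec {Y : Type*} [TopologicalSpace Y]
    {y : Y → ∀ j, Fin (D j + 2 * M j) → ℂ} {p : Y → OnePoint ℝ} (hy : Continuous y)
    (hp : Continuous p) : Continuous fun x => ratVec D M (y x) (p x) :=
  continuous_pi fun j => by
    have hyj : Continuous fun x => y x j := (continuous_apply j).comp hy
    exact continuous_monicRat hyj hp

theorem ratVec_infty (y : ∀ j, Fin (D j + 2 * M j) → ℂ) : ratVec D M y ∞ = 1 :=
  funext fun _ => monicRat_infty _

theorem ratVec_add_smul (y y' : ∀ j, Fin (D j + 2 * M j) → ℂ) {α β : ℝ} (h : α + β = 1)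
    (p : OnePoint ℝ) :
    ratVec D M (α • y + β • y') p = α • ratVec D M y p + β • ratVec D M y' p :=
  funext fun j => monicRat_add_smul (y j) (y' j) h p

theorem one_mem_UK (hE : ∅ ∈ K) : (1 : Fin r → ℂ) ∈ UK K := by
  refine mem_UK.2 fun σ hσ => ?_
  obtain ⟨i, hi⟩ := Finset.nonempty_iff_ne_empty.2 fun h : σ = ∅ => hσ (h ▸ hE)
  exact ⟨i, hi, one_ne_zero⟩

theorem mem_PolSp_iff_forall_ratVec_mem_UK (hE : ∅ ∈ K) {y : ∀ j, Fin (D j + 2 * M j) → ℂ} :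
    y ∈ PolSp K (fun j => D j + 2 * M j) ↔ ∀ p, ratVec D M y p ∈ UK K := by
  have hcoe (t : ℝ) : ratVec D M y t ∈ UK K ↔
      ∀ σ ∉ K, ∃ i ∈ σ, (toPoly (y i)).eval (t : ℂ) ≠ 0 := by
    simp [mem_UK, ratVec, monicRat_coe_eq_zero]
  rw [OnePoint.forall, ratVec_infty]
  simp only [hcoe, one_mem_UK hE, true_and]
  exact ⟨fun h t σ hσ => h σ hσ t, fun h σ hσ t => h t σ hσ⟩

theorem isOpen_PolSp (hE : ∅ ∈ K) : IsOpen (PolSp K fun j => D j + 2 * M j) := by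
  have h := isOpen_setOf_forall_prodMk_mem ((isOpen_UK (K := K)).preimage
    (continuous_ratVec (D := D) (M := M) continuous_fst continuous_snd))
  convert h using 1
  exact Set.ext fun y => mem_PolSp_iff_forall_ratVec_mem_UK hE

theorem isReplacement_ratVec_coe {y : ∀ j, Fin (D j + 2 * M j) → ℂ}
    {a : Fin (D k + 2 * 0) → ℂ} {t : ℝ} :
    IsReplacement K k (ratVec D M y t) (monicRat (D k) 0 a t) ↔
      IsReplacement K k (fun j => (toPoly (y j)).eval (t : ℂ)) ((toPoly a).eval (t : ℂ)) := by
  simp only [IsReplacement, ratVec, monicRat_coe_eq_zero, re_monicRat_mul_conj_pos]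

theorem isReplaceable_iff_exists_monicRat {y : ∀ j, Fin (D j + 2 * M j) → ℂ} :
    IsReplaceable K k (D k) y ↔ ∃ a : Fin (D k + 2 * 0) → ℂ, ∀ p,
      IsReplacement K k (ratVec D M y p) (monicRat (D k) 0 a p) := by
  have hinfty (a : Fin (D k + 2 * 0) → ℂ) :
      IsReplacement K k (ratVec D M y ∞) (monicRat (D k) 0 a ∞) := fun _ _ _ _ => by
    simp [ratVec_infty, monicRat_infty]
  simp only [OnePoint.forall, hinfty, true_and, isReplacement_ratVec_coe]
  rfl

theorem isOpen_setOf_forall_isReplacement : IsOpen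
    {z : (∀ j, Fin (D j + 2 * M j) → ℂ) × (Fin (D k + 2 * 0) → ℂ) |
      ∀ p, IsReplacement K k (ratVec D M z.1 p) (monicRat (D k) 0 z.2 p)} := by
  have hcont : Continuous
      fun z : ((∀ j, Fin (D j + 2 * M j) → ℂ) × (Fin (D k + 2 * 0) → ℂ)) × OnePoint ℝ =>
        (ratVec D M z.1.1 z.2, monicRat (D k) 0 z.1.2 z.2) := by fun_prop
  exact isOpen_setOf_forall_prodMk_mem (isOpen_setOf_isReplacement.preimage hcont)

theorem isOpen_setOf_isReplaceable :
    IsOpen {y : ∀ j, Fin (D j + 2 * M j) → ℂ | IsReplaceable K k (D k) y} := by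
  convert isOpenMap_fst _ (isOpen_setOf_forall_isReplacement (K := K) (D := D) (M := M) (k := k))
  ext y
  simp [isReplaceable_iff_exists_monicRat]

theorem convex_setOf_forall_isReplacement (y : ∀ j, Fin (D j + 2 * M j) → ℂ) : Convex ℝ
    {a : Fin (D k + 2 * 0) → ℂ |
      ∀ p, IsReplacement K k (ratVec D M y p) (monicRat (D k) 0 a p)} := by
  intro a ha b hb α β hα hβ hαβ p
  rw [monicRat_add_smul a b hαβ]
  exact convex_setOf_isReplacement _ (ha p) (hb p) hα hβ hαβ

end RatVec

section Families

variable {r : ℕ} {K : Set (Finset (Fin r))} {D M : Fin r → ℕ} {k : Fin r}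
  {X : Type*} [TopologicalSpace X] {A : Set X}

/-- The subspace of `X × S¹` on which homotopies of families of based loops, with prescribed loops
over `A`, are stationary. -/
def cylinderRel (A : Set X) : Set (X × OnePoint ℝ) := {z | z.1 ∈ A ∨ z.2 = ∞}

/-- The `j`-th coordinate of the family `F` of loops in `U(K)` is a continuous family of monic
rational functions with denominator `den d M`. -/
def HasMonicRatCoord (F : C(X × OnePoint ℝ, UK K)) (j : Fin r) (d M : ℕ) : Prop :=
  ∃ c : C(X, Fin (d + 2 * M) → ℂ), ∀ x p, (F (x, p) : Fin r → ℂ) j = monicRat d M (c x) p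

/-- Over `A`, the family `F` of loops in `U(K)` is given by polynomials with coefficients `P`. -/
def IsPolyOver (F : C(X × OnePoint ℝ, UK K)) (A : Set X)
    (P : ∀ j, C(X, Fin (D j + 2 * 0) → ℂ)) : Prop :=
  ∀ x ∈ A, ∀ p j, (F (x, p) : Fin r → ℂ) j = monicRat (D j) 0 (P j x) p

theorem IsPolyOver.of_homotopicRel {F F' : C(X × OnePoint ℝ, UK K)}
    {P : ∀ j, C(X, Fin (D j + 2 * 0) → ℂ)} (hF : IsPolyOver F A P)
    (h : F.HomotopicRel F' (cylinderRel A)) : IsPolyOver F' A P := fun x hx p j => by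
  obtain ⟨H⟩ := h
  rw [← H.fst_eq_snd (Or.inl hx : (x, p) ∈ cylinderRel A)]
  exact hF x hx p j

theorem exists_ratVec_of_hasMonicRatCoord {F : C(X × OnePoint ℝ, UK K)}
    (h : ∀ j, HasMonicRatCoord F j (D j) (M j)) :
    ∃ c : C(X, ∀ j, Fin (D j + 2 * M j) → ℂ),
      ∀ x p, (F (x, p) : Fin r → ℂ) = ratVec D M (c x) p := by
  choose c hc using h
  exact ⟨⟨fun x j => c j x, by fun_prop⟩, fun x p => funext fun j => hc j x p⟩

theorem exists_continuousMap_isReplacement [T2Space X] [ParacompactSpace X] (hA : IsClosed A)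
    (c : C(X, ∀ j, Fin (D j + 2 * M j) → ℂ)) (P : C(X, Fin (D k + 2 * 0) → ℂ))
    (hP : ∀ x ∈ A, ∀ p, IsReplacement K k (ratVec D M (c x) p) (monicRat (D k) 0 (P x) p))
    (hc : ∀ x, IsReplaceable K k (D k) (c x)) :
    ∃ a : C(X, Fin (D k + 2 * 0) → ℂ), Set.EqOn a P A ∧
      ∀ x p, IsReplacement K k (ratVec D M (c x) p) (monicRat (D k) 0 (a x) p) := by
  let T (x : X) : Set (Fin (D k + 2 * 0) → ℂ) :=
    {a | ∀ p, IsReplacement K k (ratVec D M (c x) p) (monicRat (D k) 0 a p)}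
  have hopen (a : C(X, Fin (D k + 2 * 0) → ℂ)) : IsOpen {x | a x ∈ T x} :=
    isOpen_setOf_forall_isReplacement.preimage (c.continuous.prodMk a.continuous)
  have hconv (x : X) : Convex ℝ (T x ∩ {a | x ∈ A → a = P x}) := by
    refine (convex_setOf_forall_isReplacement (c x)).inter ?_
    by_cases hx : x ∈ A
    · simp [hx]
    · simp [hx, convex_univ]
  obtain ⟨a, ha⟩ := exists_continuous_forall_mem_convex_of_local hconv fun x => by
    by_cases hx : x ∈ A
    · exact ⟨_, (hopen P).mem_nhds (hP x hx), P, P.continuous.continuousOn,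
        fun y hy => ⟨hy, fun _ => rfl⟩⟩
    · obtain ⟨a, ha⟩ := isReplaceable_iff_exists_monicRat.1 (hc x)
      exact ⟨_, Filter.inter_mem ((hopen (.const X a)).mem_nhds ha)
        (hA.isOpen_compl.mem_nhds hx), fun _ => a, continuousOn_const,
        fun y hy => ⟨hy.1, fun h => absurd h hy.2⟩⟩
  exact ⟨a, fun x hx => (ha x).2 hx, fun x => (ha x).1⟩

theorem exists_homotopicRel_update (F : C(X × OnePoint ℝ, UK K)) (a : C(X, Fin (D k + 2 * 0) → ℂ))
    (ha : ∀ x p, IsReplacement K k (F (x, p)) (monicRat (D k) 0 (a x) p))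
    (hA : ∀ z ∈ cylinderRel A, monicRat (D k) 0 (a z.1) z.2 = (F z : Fin r → ℂ) k) :
    ∃ F' : C(X × OnePoint ℝ, UK K), F.HomotopicRel F' (cylinderRel A) ∧
      ∀ x p, (F' (x, p) : Fin r → ℂ) = Function.update (F (x, p)) k (monicRat (D k) 0 (a x) p) := by
  have hseg (z : X × OnePoint ℝ) := segment_update_subset_UK (F z).2 (ha z.1 z.2)
  have hcont : Continuous fun z : X × OnePoint ℝ => monicRat (D k) 0 (a z.1) z.2 := by fun_prop
  refine ⟨⟨fun z => ⟨Function.update (F z) k (monicRat (D k) 0 (a z.1) z.2),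
      hseg z (right_mem_segment ℝ _ _)⟩,
      ((continuous_subtype_val.comp F.continuous).update k hcont).subtype_mk _⟩,
    homotopicRel_of_forall_segment_subset (fun z hz => Subtype.ext ?_) hseg, fun x p => rfl⟩
  change (F z : Fin r → ℂ) = Function.update (F z) k (monicRat (D k) 0 (a z.1) z.2)
  rw [hA z hz, Function.update_eq_self]

theorem exists_homotopicRel_ratVec {F : C(X × OnePoint ℝ, UK K)}
    (c : C(X, ∀ j, Fin (D j + 2 * M j) → ℂ)) (hinfty : ∀ x, (F (x, ∞) : Fin r → ℂ) = 1)
    (hA : ∀ x ∈ A, ∀ p, (F (x, p) : Fin r → ℂ) = ratVec D M (c x) p)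
    (hseg : ∀ x p, segment ℝ (F (x, p) : Fin r → ℂ) (ratVec D M (c x) p) ⊆ UK K) :
    ∃ F' : C(X × OnePoint ℝ, UK K), F.HomotopicRel F' (cylinderRel A) ∧
      ∀ x p, (F' (x, p) : Fin r → ℂ) = ratVec D M (c x) p := by
  have hcont : Continuous fun z : X × OnePoint ℝ => ratVec D M (c z.1) z.2 := by fun_prop
  refine ⟨⟨fun z => ⟨ratVec D M (c z.1) z.2, hseg _ _ (right_mem_segment ℝ _ _)⟩,
    hcont.subtype_mk _⟩, homotopicRel_of_forall_segment_subset ?_ fun z => hseg z.1 z.2,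
    fun x p => rfl⟩
  rintro ⟨x, p⟩ (hx | rfl)
  · exact Subtype.ext (hA x hx p)
  · exact Subtype.ext ((hinfty x).trans (ratVec_infty _).symm)

theorem segment_ratVec_subset_UK (hE : ∅ ∈ K) {y y' : ∀ j, Fin (D j + 2 * M j) → ℂ}
    (h : segment ℝ y y' ⊆ PolSp K fun j => D j + 2 * M j) (p : OnePoint ℝ) :
    segment ℝ (ratVec D M y p) (ratVec D M y' p) ⊆ UK K := by
  rintro _ ⟨α, β, hα, hβ, hαβ, rfl⟩
  rw [← ratVec_add_smul _ _ hαβ]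
  exact (mem_PolSp_iff_forall_ratVec_mem_UK hE).1 (h ⟨α, β, hα, hβ, hαβ, rfl⟩) p

end Families

section Cube

open scoped unitInterval Topology

variable {r m ρ : ℕ} {K : Set (Finset (Fin r))} {D M : Fin r → ℕ} {A : Set (I^(Fin m))}
  {F : C((I^(Fin m)) × OnePoint ℝ, UK K)} {P : ∀ j, C(I^(Fin m), Fin (D j + 2 * 0) → ℂ)}

theorem exists_homotopicRel_hasMonicRatCoord_zero_of_ne (hρ : 0 < ρ) (hK : ∀ τ ∉ K, ρ ≤ τ.card)
    {k : Fin r} (hm : m < 2 * (ρ - 1) * D k) (hA : IsClosed A) (hP : IsPolyOver F A P)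
    (hF : ∀ j, HasMonicRatCoord F j (D j) (M j)) :
    ∃ F' : C((I^(Fin m)) × OnePoint ℝ, UK K), F.HomotopicRel F' (cylinderRel A) ∧
      (∀ j ≠ k, HasMonicRatCoord F' j (D j) (M j)) ∧ HasMonicRatCoord F' k (D k) 0 := by
  have hE : ∅ ∈ K := by_contra fun h => hρ.not_ge (hK ∅ h)
  obtain ⟨c, hc⟩ := exists_ratVec_of_hasMonicRatCoord hF
  have hcU (s) : c s ∈ PolSp K fun j => D j + 2 * M j :=
    (mem_PolSp_iff_forall_ratVec_mem_UK hE).2 fun p => hc s p ▸ (F (s, p)).2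
  have hPk : ∀ s ∈ A, ∀ p, IsReplacement K k (ratVec D M (c s) p) (monicRat (D k) 0 (P k s) p) :=
    fun s hs p => by
      rw [← hP s hs p k, ← hc]
      exact isReplacement_self (F (s, p)).2
  obtain ⟨c', hc'A, hc', hseg⟩ := exists_eqOn_forall_mem_of_approx hA (isOpen_PolSp hE)
    isOpen_setOf_isReplaceable hcU
    (fun s hs => isReplaceable_iff_exists_monicRat.2 ⟨P k s, hPk s hs⟩) fun ε hε =>
      exists_forall_dist_lt_and_mem_of_dense c
        (S := {y | y ∈ PolSp K (fun j => D j + 2 * M j) → IsReplaceable K k (D k) y})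
        (fun g hg => dense_setOf_forall_isReplaceable hK (Nat.le_add_right _ _) hm hg) hε
  obtain ⟨F₁, hFF₁, hF₁⟩ := exists_homotopicRel_ratVec (F := F) (A := A) c'
    (fun s => by rw [hc, ratVec_infty]) (fun s hs p => by rw [hc'A hs, hc])
    (fun s p => by rw [hc]; exact segment_ratVec_subset_UK hE (hseg s) p)
  obtain ⟨a, haP, ha⟩ := exists_continuousMap_isReplacement hA c' (P k)
    (fun s hs => hc'A hs ▸ hPk s hs) hc'
  obtain ⟨F₂, hF₁F₂, hF₂⟩ := exists_homotopicRel_update (A := A) F₁ a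
    (fun s p => by rw [hF₁]; exact ha s p) <| by
      rintro ⟨s, p⟩ (hs | rfl)
      · rw [haP hs]
        exact (hP.of_homotopicRel hFF₁ s hs p k).symm
      · simp [hF₁, ratVec_infty, monicRat_infty]
  refine ⟨F₂, hFF₁.trans hF₁F₂, fun j hj => ⟨⟨fun s => c' s j, by fun_prop⟩, fun s p => ?_⟩,
    a, fun s p => ?_⟩
  · rw [hF₂, Function.update_of_ne hj, hF₁]
    rfl
  · rw [hF₂, Function.update_self]

theorem exists_homotopicRel_forall_hasMonicRatCoord_zero (hρ : 0 < ρ) (hK : ∀ τ ∉ K, ρ ≤ τ.card)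
    (hm : ∀ j, m < 2 * (ρ - 1) * D j) (hA : IsClosed A) (hP : IsPolyOver F A P)
    (hF : ∀ j, HasMonicRatCoord F j (D j) (M j)) :
    ∃ F' : C((I^(Fin m)) × OnePoint ℝ, UK K), F.HomotopicRel F' (cylinderRel A) ∧
      ∀ j, HasMonicRatCoord F' j (D j) 0 := by
  suffices h : ∀ T : Finset (Fin r), ∃ F' : C((I^(Fin m)) × OnePoint ℝ, UK K),
      F.HomotopicRel F' (cylinderRel A) ∧
        ∀ j, HasMonicRatCoord F' j (D j) (if j ∈ T then 0 else M j) by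
    simpa using h Finset.univ
  intro T
  induction T using Finset.induction_on with
  | empty => exact ⟨F, .refl _, by simpa using hF⟩
  | insert k T _ ih =>
    obtain ⟨F₁, hFF₁, hF₁⟩ := ih
    obtain ⟨F₂, hF₁F₂, hne, hk⟩ := exists_homotopicRel_hasMonicRatCoord_zero_of_ne hρ hK (hm k) hA
      (hP.of_homotopicRel hFF₁) hF₁
    refine ⟨F₂, hFF₁.trans hF₁F₂, fun j => ?_⟩
    obtain rfl | hj := eq_or_ne j k
    · simpa using hk
    · simpa [hj] using hne j hj

end Cube

/-! ### Approximation by rational functions -/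

section RealQuotientMul

open Polynomial

theorem realQuotient_mul {q q' p p' : ℂ[X]} (hq : q.Monic) (hq' : q'.Monic)
    (hp : p.natDegree ≤ q.natDegree) (hp' : p'.natDegree ≤ q'.natDegree) :
    realQuotient (q * q') (p * p') = realQuotient q p * realQuotient q' p' := by
  funext z
  cases z with
  | infty =>
    simp only [Pi.mul_apply, realQuotient_infty, hq.natDegree_mul hq']
    exact coeff_mul_add_eq_of_natDegree_le hp hp'
  | coe t => simp [realQuotient_coe, mul_div_mul_comm]

theorem realQuotient_self {q : ℂ[X]} (hq : q.Monic) (hq0 : ∀ t : ℝ, q.eval (t : ℂ) ≠ 0) :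
    realQuotient q q = 1 := by
  funext z
  cases z with
  | infty => exact hq.coeff_natDegree
  | coe t => exact div_self (hq0 t)

theorem realQuotient_den_mul {D M : ℕ} {p : ℂ[X]} (hp : p.natDegree ≤ D + 2 * M) (D' M' : ℕ) :
    realQuotient (den (D + D') (M + M')) (p * den D' M') = realQuotient (den D M) p := by
  rw [den_add, realQuotient_mul (monic_den _ _) (monic_den _ _) (by rwa [natDegree_den]) le_rfl,
    realQuotient_self (monic_den _ _) (eval_den_ne_zero _ _), mul_one]

theorem star_realQuotient_den_zero (M : ℕ) (p : ℂ[X]) :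
    star (realQuotient (den 0 M) p) = realQuotient (den 0 M) (p.map (starRingEnd ℂ)) := by
  funext z
  cases z with
  | infty => simp [realQuotient_infty]
  | coe t =>
    have h : (p.map (starRingEnd ℂ)).eval (t : ℂ) = (starRingEnd ℂ) (p.eval (t : ℂ)) := by
      simpa using eval_map_apply (starRingEnd ℂ) (p := p) (t : ℂ)
    simp [realQuotient_coe, eval_den, h]

/-- The rational functions on `S¹` with poles at most at `± i`, a dense subalgebra of `C(S¹, ℂ)`. -/
def rationalSubalgebra : StarSubalgebra ℂ C(OnePoint ℝ, ℂ) where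
  carrier := {g | ∃ (M : ℕ) (p : ℂ[X]), p.natDegree ≤ 0 + 2 * M ∧ ⇑g = realQuotient (den 0 M) p}
  mul_mem' := by
    rintro f g ⟨M, p, hp, hf⟩ ⟨M', p', hp', hg⟩
    refine ⟨M + M', p * p', natDegree_mul_le.trans (by lia), ?_⟩
    rw [← zero_add 0, den_add, realQuotient_mul (monic_den _ _) (monic_den _ _)
      (by rwa [natDegree_den]) (by rwa [natDegree_den]), ContinuousMap.coe_mul, hf, hg]
  add_mem' := by
    rintro f g ⟨M, p, hp, hf⟩ ⟨M', p', hp', hg⟩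
    refine ⟨M + M', p * den 0 M' + p' * den 0 M, ?_, ?_⟩
    · refine natDegree_add_le_of_degree_le (natDegree_mul_le.trans ?_) (natDegree_mul_le.trans ?_)
      all_goals rw [natDegree_den]; lia
    · rw [map_add, realQuotient_den_mul hp 0 M', add_comm M, realQuotient_den_mul hp' 0 M,
        ContinuousMap.coe_add, hf, hg]
  algebraMap_mem' z := by
    refine ⟨0, C z, by simp, ?_⟩
    funext p
    cases p <;> simp [realQuotient_infty, realQuotient_coe, den]
  star_mem' := by
    rintro f ⟨M, p, hp, hf⟩
    exact ⟨M, p.map (starRingEnd ℂ), natDegree_map_le.trans hp, by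
      rw [ContinuousMap.coe_star, hf, star_realQuotient_den_zero]⟩

theorem realQuotient_X_sub_C_I_coe (t : ℝ) :
    realQuotient (den 0 1) (X - C Complex.I) (t : OnePoint ℝ) = (t + Complex.I)⁻¹ := by
  have hfactor : (t + Complex.I) * (t - Complex.I) = (den 0 1).eval (t : ℂ) := by
    rw [eval_den]
    push_cast
    linear_combination -Complex.I_sq
  rw [realQuotient_coe, eval_sub, eval_X, eval_C, div_eq_iff (eval_den_ne_zero 0 1 t),
    ← hfactor, inv_mul_cancel_left₀ (ofReal_add_I_ne_zero t)]

theorem realQuotient_X_sub_C_I_injective :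
    Function.Injective (realQuotient (den 0 1) (X - C Complex.I)) := by
  have hne (t : ℝ) : (t + Complex.I)⁻¹ ≠ 0 := inv_ne_zero (ofReal_add_I_ne_zero t)
  have hinfty : realQuotient (den 0 1) (X - C Complex.I) OnePoint.infty = 0 := by
    rw [realQuotient_infty, natDegree_den]
    exact coeff_eq_zero_of_natDegree_lt (by rw [natDegree_X_sub_C]; norm_num)
  generalize hf : realQuotient (den 0 1) (X - C Complex.I) = f at hinfty
  have hcoe (t : ℝ) : f t = (t + Complex.I)⁻¹ := hf ▸ realQuotient_X_sub_C_I_coe t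
  intro x y hxy
  cases x <;> cases y <;> simp_all

theorem separatesPoints_rationalSubalgebra : rationalSubalgebra.SeparatesPoints := by
  have hdeg : (X - C Complex.I).natDegree ≤ 0 + 2 * 1 := by
    rw [natDegree_X_sub_C]
    norm_num
  intro x y hxy
  refine ⟨_, ⟨⟨realQuotient (den 0 1) (X - C Complex.I), continuous_realQuotient (monic_den 0 1)
    (eval_den_ne_zero 0 1) (by rwa [natDegree_den])⟩, ⟨1, _, hdeg, rfl⟩, rfl⟩, ?_⟩
  exact realQuotient_X_sub_C_I_injective.ne hxy

end RealQuotientMul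

section MonicRatApprox

open OnePoint

variable {d M : ℕ}

theorem monicRat_coeff {q : Polynomial ℂ} (hq : q.Monic) (hd : q.natDegree = d + 2 * M) :
    monicRat d M (fun i => q.coeff i) = realQuotient (den d M) q := by
  rw [monicRat, toPoly_coeff hq hd]

theorem exists_monicRat_norm_sub_lt (d : ℕ) (g : C(OnePoint ℝ, ℂ)) (hg : g ∞ = 1) {ε : ℝ}
    (hε : 0 < ε) : ∃ (M : ℕ) (c : Fin (d + 2 * M) → ℂ), ∀ p, ‖monicRat d M c p - g p‖ < ε := by
  have hmem : g ∈ rationalSubalgebra.topologicalClosure := by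
    rw [ContinuousMap.starSubalgebra_topologicalClosure_eq_top_of_separatesPoints _
      separatesPoints_rationalSubalgebra]
    trivial
  rw [← SetLike.mem_coe, StarSubalgebra.topologicalClosure_coe, Metric.mem_closure_iff] at hmem
  obtain ⟨f, ⟨M, p, hp, hf⟩, hgf⟩ := hmem (ε / 2) (half_pos hε)
  have hfg (z : OnePoint ℝ) : ‖f z - g z‖ < ε / 2 := by
    rw [← dist_eq_norm, dist_comm]
    exact (ContinuousMap.dist_apply_le_dist z).trans_lt hgf
  let p' : Polynomial ℂ := p - (f ∞ - g ∞) • den 0 M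
  have hp'f (z : OnePoint ℝ) : realQuotient (den 0 M) p' z = f z - (f ∞ - g ∞) := by
    simp [p', hf, realQuotient_self (monic_den 0 M) (eval_den_ne_zero 0 M)]
  have hdeg : p'.natDegree ≤ 0 + 2 * M := Polynomial.natDegree_sub_le_of_le hp
    ((Polynomial.natDegree_smul_le _ _).trans (natDegree_den 0 M).le)
    |>.trans (max_self _).le
  have hcoeff : p'.coeff (0 + 2 * M) = 1 := by
    simpa [realQuotient_infty, natDegree_den, hg] using hp'f ∞
  have hmonic : p'.Monic := Polynomial.monic_of_natDegree_le_of_coeff_eq_one _ hdeg hcoeff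
  have hdeg' : p'.natDegree = 0 + 2 * M := hdeg.antisymm
    (Polynomial.le_natDegree_of_ne_zero (hcoeff ▸ one_ne_zero))
  have hrat : monicRat d M (fun i => (p' * den d 0).coeff i) = realQuotient (den 0 M) p' := by
    rw [monicRat_coeff (hmonic.mul (monic_den d 0))
      (by rw [hmonic.natDegree_mul (monic_den d 0), natDegree_den, hdeg']; ring)]
    simpa using realQuotient_den_mul hdeg d 0
  refine ⟨M, fun i => (p' * den d 0).coeff i, fun z => ?_⟩
  rw [hrat, hp'f]
  calc ‖f z - (f ∞ - g ∞) - g z‖ = ‖(f z - g z) - (f ∞ - g ∞)‖ := by ring_nf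
    _ ≤ ‖f z - g z‖ + ‖f ∞ - g ∞‖ := norm_sub_le _ _
    _ < ε / 2 + ε / 2 := add_lt_add (hfg z) (hfg ∞)
    _ = ε := add_halves ε

/-- The coefficients of the numerator after extending a fraction by `(X² + 1) ^ l`. -/
def extendCoeffs (l : ℕ) (c : Fin (d + 2 * M) → ℂ) : Fin (d + 2 * (M + l)) → ℂ :=
  fun i => (toPoly c * den 0 l).coeff i

@[fun_prop]
theorem continuous_extendCoeffs (l : ℕ) :
    Continuous (extendCoeffs l : (Fin (d + 2 * M) → ℂ) → Fin (d + 2 * (M + l)) → ℂ) := by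
  refine continuous_pi fun i => ?_
  simp only [extendCoeffs, Polynomial.coeff_mul]
  have := continuous_coeff_toPoly (d := d + 2 * M)
  fun_prop

theorem monicRat_extendCoeffs (l : ℕ) (c : Fin (d + 2 * M) → ℂ) :
    monicRat d (M + l) (extendCoeffs l c) = monicRat d M c := by
  have hdeg : (toPoly c).natDegree = d + 2 * M := natDegree_toPoly c
  unfold extendCoeffs
  rw [monicRat_coeff ((monic_toPoly c).mul (monic_den 0 l))
    (by rw [(monic_toPoly c).natDegree_mul (monic_den 0 l), natDegree_den, hdeg]; ring)]
  exact realQuotient_den_mul hdeg.le 0 l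

variable {X : Type*} [TopologicalSpace X] [CompactSpace X] [T2Space X]

theorem exists_continuousMap_monicRat_mem_convex_of_local {T : X → Set (OnePoint ℝ → ℂ)}
    (hT : ∀ x, Convex ℝ (T x))
    (hloc : ∀ x, ∃ (M : ℕ) (g : C(X, Fin (d + 2 * M) → ℂ)),
      ∀ᶠ y in nhds x, monicRat d M (g y) ∈ T y) :
    ∃ (M : ℕ) (c : C(X, Fin (d + 2 * M) → ℂ)), ∀ x, monicRat d M (c x) ∈ T x := by
  choose M g hg using hloc
  obtain ⟨t, ht⟩ := CompactSpace.elim_nhds_subcover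
    (fun x => interior {y | monicRat d (M x) (g x y) ∈ T y}) fun x => interior_mem_nhds.2 (hg x)
  have hconv (x : X) : Convex ℝ {c : Fin (d + 2 * t.sup M) → ℂ | monicRat d (t.sup M) c ∈ T x} := by
    intro c hc c' hc' α β hα hβ hαβ
    have h : monicRat d (t.sup M) (α • c + β • c') =
        α • monicRat d (t.sup M) c + β • monicRat d (t.sup M) c' :=
      funext (monicRat_add_smul c c' hαβ)
    rw [Set.mem_ofPred_eq, h]
    exact hT x hc hc' hα hβ hαβ
  obtain ⟨c, hc⟩ := exists_continuous_forall_mem_convex_of_local hconv fun x => by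
    obtain ⟨z, hz, hx⟩ : ∃ z ∈ t, x ∈ interior {y | monicRat d (M z) (g z y) ∈ T y} := by
      simpa using ht.symm.subset (Set.mem_univ x)
    obtain ⟨l, hl⟩ := Nat.exists_eq_add_of_le (Finset.le_sup (f := M) hz)
    rw [hl]
    refine ⟨_, mem_interior_iff_mem_nhds.1 hx, fun y => extendCoeffs l (g z y), by fun_prop,
      fun y hy => ?_⟩
    rw [Set.mem_ofPred_eq, monicRat_extendCoeffs]
    exact hy
  exact ⟨_, c, hc⟩

theorem exists_continuousMap_monicRat_norm_sub_lt {A : Set X} (hA : IsClosed A)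
    (f : C(X × OnePoint ℝ, ℂ)) (hf : ∀ x, f (x, ∞) = 1) (P : C(X, Fin (d + 2 * 0) → ℂ))
    (hP : ∀ x ∈ A, ∀ p, f (x, p) = monicRat d 0 (P x) p) {ε : ℝ} (hε : 0 < ε) :
    ∃ (M : ℕ) (c : C(X, Fin (d + 2 * M) → ℂ)),
      (∀ x p, ‖monicRat d M (c x) p - f (x, p)‖ < ε) ∧
        ∀ x ∈ A, monicRat d M (c x) = monicRat d 0 (P x) := by
  let near (x : X) : Set (OnePoint ℝ → ℂ) := {h | ∀ p, ‖h p - f (x, p)‖ < ε}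
  have hnear {M : ℕ} (g : C(X, Fin (d + 2 * M) → ℂ)) :
      IsOpen {x | monicRat d M (g x) ∈ near x} := by
    have hcont : Continuous fun z : X × OnePoint ℝ => ‖monicRat d M (g z.1) z.2 - f z‖ := by
      fun_prop
    exact isOpen_setOf_forall_prodMk_mem (isOpen_lt hcont continuous_const)
  have hconv (x : X) : Convex ℝ (near x ∩ {h | x ∈ A → h = monicRat d 0 (P x)}) := by
    refine Convex.inter ?_ ?_
    · simpa [near, Set.pi, dist_eq_norm] using
        convex_pi (s := Set.univ) fun p _ => convex_ball (f (x, p)) ε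
    · by_cases hx : x ∈ A <;> simp [hx, convex_univ]
  obtain ⟨M, c, hc⟩ := exists_continuousMap_monicRat_mem_convex_of_local hconv fun x => by
    by_cases hx : x ∈ A
    · refine ⟨0, P, ((hnear P).eventually_mem fun p => ?_).mono fun y hy => ⟨hy, fun _ => rfl⟩⟩
      simpa [hP x hx p] using hε
    · obtain ⟨M, c, hc⟩ := exists_monicRat_norm_sub_lt d ⟨fun p => f (x, p), by fun_prop⟩ (hf x) hε
      refine ⟨M, .const X c, ?_⟩
      filter_upwards [(hnear (.const X c)).eventually_mem hc, hA.isOpen_compl.eventually_mem hx]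
        with y hy hyA using ⟨hy, fun h => absurd h hyA⟩
  exact ⟨M, c, fun x => (hc x).1, fun x hx => (hc x).2 hx⟩

variable {r : ℕ} {K : Set (Finset (Fin r))} {D : Fin r → ℕ} {A : Set X}
  {P : ∀ j, C(X, Fin (D j + 2 * 0) → ℂ)} {F : C(X × OnePoint ℝ, UK K)}

theorem exists_continuousMap_dist_ratVec_lt (hA : IsClosed A) (hP : IsPolyOver F A P)
    (hinfty : ∀ x, (F (x, ∞) : Fin r → ℂ) = 1) {ε : ℝ} (hε : 0 < ε) :
    ∃ (M : Fin r → ℕ) (c : C(X, ∀ j, Fin (D j + 2 * M j) → ℂ)),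
      (∀ x p, dist (ratVec D M (c x) p) (F (x, p)) < ε) ∧
        ∀ x ∈ A, ∀ p, (F (x, p) : Fin r → ℂ) = ratVec D M (c x) p := by
  have hF (j : Fin r) : Continuous fun z => (F z : Fin r → ℂ) j :=
    (continuous_apply j).comp (continuous_subtype_val.comp F.continuous)
  choose M c hnear hcA using fun j => exists_continuousMap_monicRat_norm_sub_lt (d := D j) hA
    ⟨fun z => (F z : Fin r → ℂ) j, hF j⟩
    (fun x => congrFun (hinfty x) j) (P j) (fun x hx p => hP x hx p j) hε
  have hc : Continuous fun x j => c j x := continuous_pi fun j => (c j).continuous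
  refine ⟨M, ⟨_, hc⟩, fun x p => ?_, fun x hx p => ?_⟩
  · rw [dist_pi_lt_iff hε]
    exact fun j => (dist_eq_norm _ _).trans_lt (hnear j x p)
  · exact funext fun j => (hP x hx p j).trans (congrFun (hcA j x hx) p).symm

theorem exists_homotopicRel_forall_hasMonicRatCoord (hA : IsClosed A) (hP : IsPolyOver F A P)
    (hinfty : ∀ x, (F (x, ∞) : Fin r → ℂ) = 1) :
    ∃ (F' : C(X × OnePoint ℝ, UK K)) (M : Fin r → ℕ), F.HomotopicRel F' (cylinderRel A) ∧
      ∀ j, HasMonicRatCoord F' j (D j) (M j) := by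
  obtain ⟨ε, hε, hseg⟩ := exists_forall_segment_subset_of_dist_lt
    ⟨fun z => (F z : Fin r → ℂ), by fun_prop⟩ isOpen_UK fun z => (F z).2
  obtain ⟨M, c, hnear, hcA⟩ := exists_continuousMap_dist_ratVec_lt hA hP hinfty hε
  obtain ⟨F', hFF', hF'⟩ := exists_homotopicRel_ratVec c hinfty hcA fun x p =>
    hseg (x, p) _ (hnear x p)
  exact ⟨F', M, hFF', fun j => ⟨⟨fun x => c x j, by fun_prop⟩,
    fun x p => congrFun (hF' x p) j⟩⟩

end MonicRatApprox

/-! ### Splittings of the lattice of a non-singular fan -/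

section Splittings

variable {n r : ℕ} {N : Fin r → Fin n → ℤ}

theorem zr_injective : Function.Injective (zr (n := n)) := fun v w h =>
  funext fun i => by simpa [zr] using congrFun h i

theorem zr_natCast_smul (c : ℕ) (v : Fin n → ℤ) : zr ((c : ℤ) • v) = (c : ℝ) • zr v :=
  funext fun i => by simp [zr]

theorem ray_subset_coneIdx {τ : Finset (Fin r)} {j : Fin r} (hj : j ∈ τ) :
    ray (zr (N j)) ⊆ coneIdx N τ := by
  rintro _ ⟨t, ht, rfl⟩
  refine ⟨Pi.single j t, (Pi.single_nonneg.2 ht : (0 : Fin r → ℝ) ≤ _), ?_⟩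
  rw [Finset.sum_eq_single_of_mem j hj fun i _ hij => by rw [Pi.single_eq_of_ne hij, zero_smul],
    Pi.single_eq_same]

theorem self_mem_ray (x : Fin n → ℝ) : x ∈ ray x := ⟨1, zero_le_one, (one_smul ℝ x).symm⟩

theorem exists_generator_mem_of_isFaceOf {τ : Finset (Fin r)} {S : Set (Fin n → ℝ)}
    (hS : IsFaceOf S (coneIdx N τ)) {x : Fin n → ℝ} (hx : x ∈ S) (hx0 : x ≠ 0) :
    ∃ l ∈ τ, zr (N l) ∈ S := by
  obtain ⟨L, hL, rfl⟩ := hS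
  obtain ⟨⟨c, hc, rfl⟩, hLx⟩ := hx
  have hgen {i : Fin r} (hi : i ∈ τ) : zr (N i) ∈ coneIdx N τ :=
    ray_subset_coneIdx hi (self_mem_ray _)
  have hterm : ∀ i ∈ τ, c i * L (zr (N i)) = 0 := by
    refine (Finset.sum_eq_zero_iff_of_nonneg fun i hi => mul_nonneg (hc i) (hL _ (hgen hi))).1 ?_
    simpa using hLx
  obtain ⟨l, hl, hl0⟩ := Finset.exists_ne_zero_of_sum_ne_zero hx0
  exact ⟨l, hl, hgen hl,
    (mul_eq_zero.1 (hterm l hl)).resolve_left fun h => hl0 (by rw [h, zero_smul])⟩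

theorem exists_basis_eq_gen {F : Fan n} (hN : IsPrimGens F N) {τ : Finset (Fin r)}
    (hτ : τ ∈ KC F N) {b : Module.Basis (Fin n) ℤ (Fin n → ℤ)} {s : Finset (Fin n)}
    (hb : coneIdx N τ = coneIdx b s) {j : Fin r} (hj : j ∈ τ) : ∃ l, b l = N j := by
  have hface : IsFaceOf (ray (zr (N j))) (coneIdx b s) := by
    rw [← hb, ← Set.inter_eq_right.2 (ray_subset_coneIdx hj)]
    exact F.inter_face _ hτ _ (hN.ray_mem j)
  have hne : zr (N j) ≠ 0 := fun h => hN.ne_zero j (zr_injective (h.trans (by ext; simp [zr])))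
  obtain ⟨l, -, hl⟩ := exists_generator_mem_of_isFaceOf hface (self_mem_ray _) hne
  have hmem : zr (b l) ∈ ray (zr (N j)) ∩ {x | IsLatticePoint x} := ⟨hl, fun i => ⟨b l i, rfl⟩⟩
  rw [hN.primitive j] at hmem
  obtain ⟨c, hc⟩ := hmem
  have hbl : b l = (c : ℤ) • N j := zr_injective (hc.trans (zr_natCast_smul c _).symm)
  have hunit : (c : ℤ) * b.repr (N j) l = 1 := by
    simpa only [Module.Basis.repr_self, Finsupp.single_eq_same, map_smul, Finsupp.smul_apply,
      smul_eq_mul] using (congrArg (fun v => b.repr v l) hbl).symm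
  have hc1 : c = 1 := by simpa using Int.isUnit_iff_natAbs_eq.1 (IsUnit.of_mul_eq_one _ hunit)
  exact ⟨l, by simpa [hc1] using hbl⟩

/-- `Θ` is a section of the homomorphism `ℤ^r → ℤ^n`, `e_k ↦ N k`, with `Θ (N j) = e_j` for
`j ∈ τ`. -/
structure IsSplitting (N : Fin r → Fin n → ℤ) (τ : Finset (Fin r))
    (Θ : (Fin n → ℤ) →ₗ[ℤ] (Fin r → ℤ)) : Prop where
  sum_smul : ∀ v, ∑ k, Θ v k • N k = v
  apply_of_mem : ∀ j ∈ τ, Θ (N j) = Pi.single j 1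

/-- The combinatorial form of non-singularity: over every face of `K` the homomorphism
`e_k ↦ N k` splits compatibly with that face. It makes `q_Σ` a principal bundle. -/
def HasSplittings (N : Fin r → Fin n → ℤ) (K : Set (Finset (Fin r))) : Prop :=
  ∀ τ ∈ K, ∃ Θ, IsSplitting N τ Θ

theorem hasSplittings_KC {F : Fan n} (hF : F.NonSingular) (hN : IsPrimGens F N)
    (h2 : Cond2 N) : HasSplittings N (KC F N) := by
  intro τ hτ
  obtain ⟨b, s, hb⟩ := hF _ hτ
  have hlift (l : Fin n) : ∃ c : Fin r → ℤ, Fintype.linearCombination ℤ N c = b l ∧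
      ∀ j ∈ τ, N j = b l → c = Pi.single j 1 := by
    by_cases h : ∃ j ∈ τ, N j = b l
    · obtain ⟨j, -, hjl⟩ := h
      refine ⟨Pi.single j 1, by simp [Fintype.linearCombination_apply_single, hjl], ?_⟩
      exact fun j' _ hj' => by rw [hN.inj (hj'.trans hjl.symm)]
    · have hmem : b l ∈ Submodule.span ℤ (Set.range N) := h2 ▸ Submodule.mem_top
      obtain ⟨c, hc⟩ := (Submodule.mem_span_range_iff_exists_fun ℤ).1 hmem
      exact ⟨c, hc, fun j hj hjl => (h ⟨j, hj, hjl⟩).elim⟩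
  choose c hc hcN using hlift
  refine ⟨b.constr ℤ c, fun v => ?_, fun j hj => ?_⟩
  · have hid : Fintype.linearCombination ℤ N ∘ₗ b.constr ℤ c = LinearMap.id :=
      b.ext fun l => by simp [hc]
    exact LinearMap.congr_fun hid v
  · obtain ⟨l, hl⟩ := exists_basis_eq_gen hN hτ hb hj
    rw [← hl, Module.Basis.constr_basis]
    exact hcN l j hj hl.symm

end Splittings

/-! ### The action of `G_Σ` and its charts -/

section Action

variable {n r : ℕ} {N : Fin r → Fin n → ℤ} {K : Set (Finset (Fin r))} {τ : Finset (Fin r)}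
  {Θ : (Fin n → ℤ) →ₗ[ℤ] (Fin r → ℤ)} {g g' x y : Fin r → ℂ}

theorem one_mem_GSet : (1 : Fin r → ℂ) ∈ GSet N := ⟨fun _ => one_ne_zero, fun m => by simp⟩

theorem mul_mem_GSet (hg : g ∈ GSet N) (hg' : g' ∈ GSet N) : g * g' ∈ GSet N :=
  ⟨fun k => mul_ne_zero (hg.1 k) (hg'.1 k), fun m => by
    simp only [Pi.mul_apply, mul_zpow, Finset.prod_mul_distrib, hg.2 m, hg'.2 m, one_mul]⟩

theorem inv_mem_GSet (hg : g ∈ GSet N) : g⁻¹ ∈ GSet N :=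
  ⟨fun k => inv_ne_zero (hg.1 k), fun m => by
    simp only [Pi.inv_apply, inv_zpow, Finset.prod_inv_distrib, hg.2 m, inv_one]⟩

theorem inv_mul_cancel_of_mem_GSet (hg : g ∈ GSet N) : g⁻¹ * g = 1 :=
  funext fun k => inv_mul_cancel₀ (hg.1 k)

theorem prod_zpow_eq_zpow_sum₀ {G ι : Type*} [CommGroupWithZero G] {a : G} (ha : a ≠ 0)
    (s : Finset ι) (e : ι → ℤ) : ∏ i ∈ s, a ^ e i = a ^ ∑ i ∈ s, e i := by
  induction s using Finset.cons_induction with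
  | empty => simp
  | cons i s hi ih => rw [Finset.prod_cons, Finset.sum_cons, ih, zpow_add₀ ha]

theorem zpow_mem_GSet {c : Fin r → ℤ} (hc : ∑ k, c k • N k = 0) {z : ℂ} (hz : z ≠ 0) :
    (fun k => z ^ c k) ∈ GSet N := by
  refine ⟨fun k => zpow_ne_zero _ hz, fun m => ?_⟩
  have hexp : ∑ k, c k * ∑ j, N k j * m j = 0 := by
    simp only [Finset.mul_sum, ← mul_assoc]
    rw [Finset.sum_comm]
    refine Finset.sum_eq_zero fun j _ => ?_
    have hcj : ∑ k, c k * N k j = 0 := by simpa using congrFun hc j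
    rw [← Finset.sum_mul, hcj, zero_mul]
  simp only [← zpow_mul, prod_zpow_eq_zpow_sum₀ hz, hexp, zpow_zero]

theorem prod_zpow_apply_eq_one (hg : g ∈ GSet N) (φ : (Fin n → ℤ) →ₗ[ℤ] ℤ) :
    ∏ k, g k ^ φ (N k) = 1 := by
  rw [← hg.2 fun j => φ fun i => if j = i then 1 else 0]
  exact Finset.prod_congr rfl fun k _ => congrArg _ (φ.pi_apply_eq_sum_univ (N k))

theorem mul_mem_UK (hg : ∀ k, g k ≠ 0) (hx : x ∈ UK K) : g * x ∈ UK K :=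
  mem_UK.2 fun τ hτ =>
    let ⟨i, hi, hxi⟩ := mem_UK.1 hx τ hτ
    ⟨i, hi, mul_ne_zero (hg i) hxi⟩

/-- The invariant open subset of `ℂ^r` over the affine chart of `X_Σ` given by the cone `τ`. -/
def chart (τ : Finset (Fin r)) : Set (Fin r → ℂ) := {x | ∀ j ∉ τ, x j ≠ 0}

theorem isOpen_chart : IsOpen (chart τ) := by
  simp only [chart, Set.ofPred_forall]
  exact isOpen_iInter_of_finite fun j => isOpen_iInter_of_finite fun _ =>
    isOpen_ne_fun (continuous_apply j) continuous_const

theorem mul_mem_chart (hg : g ∈ GSet N) (hx : x ∈ chart τ) : g * x ∈ chart τ :=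
  fun j hj => mul_ne_zero (hg.1 j) (hx j hj)

theorem exists_mem_chart (hx : x ∈ UK K) : ∃ τ ∈ K, x ∈ chart τ := by
  refine ⟨({i | x i = 0} : Finset (Fin r)), ?_, fun j hj h => hj (by simpa using h)⟩
  by_contra h
  obtain ⟨i, hi, hxi⟩ := mem_UK.1 hx _ h
  exact hxi (by simpa using hi)

/-- The map from the chart of `τ` to `G_Σ` given by the monomials `∏_j x_j ^ (Θ (n_j) - e_j)_k`.
It is anti-equivariant, hence trivialises the action over the chart. -/
def gauge (N : Fin r → Fin n → ℤ) (Θ : (Fin n → ℤ) →ₗ[ℤ] (Fin r → ℤ)) (x : Fin r → ℂ) :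
    Fin r → ℂ :=
  ∏ j, fun k => x j ^ (Θ (N j) - (Pi.single j 1 : Fin r → ℤ)) k

theorem gauge_mem_GSet (hΘ : IsSplitting N τ Θ) (hx : x ∈ chart τ) : gauge N Θ x ∈ GSet N := by
  refine Finset.prod_induction _ (· ∈ GSet N) (fun _ _ => mul_mem_GSet) one_mem_GSet fun j _ => ?_
  by_cases hj : j ∈ τ
  · simpa [hΘ.apply_of_mem j hj, ← Pi.one_def] using one_mem_GSet
  · refine zpow_mem_GSet ?_ (hx j hj)
    have hsingle : ∑ k, (Pi.single j 1 : Fin r → ℤ) k • N k = N j := by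
      rw [Finset.sum_eq_single_of_mem j (Finset.mem_univ j) fun k _ hk => by
        rw [Pi.single_eq_of_ne hk, zero_smul], Pi.single_eq_same, one_smul]
    simp only [Pi.sub_apply, sub_smul, Finset.sum_sub_distrib, hΘ.sum_smul, hsingle, sub_self]

theorem gauge_mul (hg : g ∈ GSet N) : gauge N Θ (g * x) = g⁻¹ * gauge N Θ x := by
  funext k
  have hprod : ∏ j, g j ^ (Θ (N j) - (Pi.single j 1 : Fin r → ℤ)) k = (g k)⁻¹ := by
    simp only [Pi.sub_apply, zpow_sub₀ (hg.1 _), div_eq_mul_inv, Finset.prod_mul_distrib,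
      Finset.prod_inv_distrib]
    rw [show ∏ j, g j ^ Θ (N j) k = 1 from
      prod_zpow_apply_eq_one hg (LinearMap.proj k ∘ₗ Θ), one_mul, Finset.prod_eq_single k]
    · simp
    · intro j _ hj
      simp [hj.symm]
    · simp
  simp only [gauge, Finset.prod_apply, Pi.mul_apply, Pi.inv_apply, mul_zpow,
    Finset.prod_mul_distrib, hprod]

theorem gauge_mul_mul (hg : g ∈ GSet N) :
    gauge N Θ (g * x) * (g * x) = gauge N Θ x * x := by
  rw [gauge_mul hg, mul_mul_mul_comm, inv_mul_cancel_of_mem_GSet hg, one_mul]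

theorem continuousOn_gauge (hΘ : IsSplitting N τ Θ) : ContinuousOn (gauge N Θ) (chart τ) := by
  refine continuousOn_finsetProd _ fun j _ => continuousOn_pi.2 fun k => ?_
  by_cases hj : j ∈ τ
  · simpa [hΘ.apply_of_mem j hj] using continuousOn_const
  · exact (continuous_apply j).continuousOn.zpow₀ _ fun x hx => Or.inl (hx j hj)

theorem eq_gauge_mul_inv (hΘ : IsSplitting N τ Θ) (hg : g ∈ GSet N) (hx : x ∈ chart τ)
    (h : g * x = y) : g = gauge N Θ x * (gauge N Θ y)⁻¹ := by
  have hne := (gauge_mem_GSet hΘ hx).1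
  rw [← h, gauge_mul hg]
  funext k
  simp [mul_inv_cancel_left₀ (hne k)]

end Action

/-! ### The quotient map `q_Σ` -/

section Quotient

open Topology

variable {n r : ℕ} {N : Fin r → Fin n → ℤ} {K : Set (Finset (Fin r))} {τ : Finset (Fin r)}
  {Θ : (Fin n → ℤ) →ₗ[ℤ] (Fin r → ℤ)} {x y : UK K}

theorem equivalence_toricRel : Equivalence (toricRel N K) where
  refl x := ⟨1, one_mem_GSet, one_mul x.1⟩
  symm := by
    rintro x y ⟨g, hg, h⟩
    replace h : g * x.1 = y.1 := h
    have hx : g⁻¹ * y.1 = x.1 := by rw [← h, ← mul_assoc, inv_mul_cancel_of_mem_GSet hg, one_mul]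
    exact ⟨g⁻¹, inv_mem_GSet hg, hx⟩
  trans := by
    rintro x y z ⟨g, hg, h⟩ ⟨g', hg', h'⟩
    exact ⟨g' * g, mul_mem_GSet hg' hg, (mul_assoc g' g x.1).trans ((congrArg (g' * ·) h).trans h')⟩

theorem qmap_eq_iff : qmap N K x = qmap N K y ↔ toricRel N K x y :=
  Quot.eq.trans (Equivalence.eqvGen_iff equivalence_toricRel)

theorem isOpenQuotientMap_qmap : IsOpenQuotientMap (qmap N K) := by
  refine ⟨Quot.mk_surjective, continuous_quot_mk, fun W hW => ?_⟩
  let act (g : GSet N) (x : UK K) : UK K := ⟨g.1 * x.1, mul_mem_UK g.2.1 x.2⟩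
  have hact (g : GSet N) : Continuous (act g) :=
    (continuous_const.mul continuous_subtype_val).subtype_mk _
  have hpre : qmap N K ⁻¹' (qmap N K '' W) = ⋃ g, act g ⁻¹' W := by
    ext x
    simp only [Set.mem_preimage, Set.mem_image, Set.mem_iUnion]
    constructor
    · rintro ⟨y, hy, h⟩
      obtain ⟨g, hg, h⟩ := qmap_eq_iff.1 h.symm
      exact ⟨⟨g, hg⟩, (Subtype.ext h : act ⟨g, hg⟩ x = y) ▸ hy⟩
    · rintro ⟨g, hg⟩
      exact ⟨_, hg, (qmap_eq_iff.2 ⟨g.1, g.2, rfl⟩).symm⟩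
  change IsOpen (qmap N K ⁻¹' (qmap N K '' W))
  rw [hpre]
  exact isOpen_iUnion fun g => hW.preimage (hact g)

theorem mem_chart_of_toricRel (h : toricRel N K x y) (hx : x.1 ∈ chart τ) : y.1 ∈ chart τ := by
  obtain ⟨g, hg, h⟩ := h
  exact h ▸ mul_mem_chart hg hx

/-- The `G_Σ`-invariant representative of `x` obtained from the gauge of a chart containing it
(and `x` itself outside the chart). -/
def gaugeFix (N : Fin r → Fin n → ℤ) (Θ : (Fin n → ℤ) →ₗ[ℤ] (Fin r → ℤ)) (x : UK K) : UK K :=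
  if h : gauge N Θ x.1 * x.1 ∈ UK K then ⟨_, h⟩ else x

theorem coe_gaugeFix (hΘ : IsSplitting N τ Θ) (hx : x.1 ∈ chart τ) :
    (gaugeFix N Θ x).1 = gauge N Θ x.1 * x.1 :=
  congrArg Subtype.val (dif_pos (mul_mem_UK (gauge_mem_GSet hΘ hx).1 x.2))

theorem toricRel_gaugeFix (hΘ : IsSplitting N τ Θ) (hx : x.1 ∈ chart τ) :
    toricRel N K x (gaugeFix N Θ x) :=
  ⟨_, gauge_mem_GSet hΘ hx, (coe_gaugeFix hΘ hx).symm⟩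

theorem gaugeFix_eq_of_toricRel (hΘ : IsSplitting N τ Θ) (hx : x.1 ∈ chart τ)
    (h : toricRel N K x y) : gaugeFix N Θ x = gaugeFix N Θ y := by
  have hy := mem_chart_of_toricRel h hx
  obtain ⟨g, hg, h⟩ := h
  have h : g * x.1 = y.1 := h
  rw [Subtype.ext_iff, coe_gaugeFix hΘ hx, coe_gaugeFix hΘ hy, ← h, gauge_mul_mul hg]

theorem continuousOn_gaugeFix (hΘ : IsSplitting N τ Θ) :
    ContinuousOn (gaugeFix N Θ : UK K → UK K) (Subtype.val ⁻¹' chart τ) := by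
  rw [IsInducing.subtypeVal.continuousOn_iff]
  refine ContinuousOn.congr ?_ fun x hx => coe_gaugeFix hΘ hx
  exact ((continuousOn_gauge hΘ).comp continuous_subtype_val.continuousOn fun _ hx => hx).mul
    continuous_subtype_val.continuousOn

theorem exists_continuousOn_section_qmap (hN : HasSplittings N K) (y : XS N K) :
    ∃ V : Set (XS N K), IsOpen V ∧ y ∈ V ∧
      ∃ s : XS N K → UK K, ContinuousOn s V ∧ ∀ z ∈ V, qmap N K (s z) = z := by
  have hq := isOpenQuotientMap_qmap (N := N) (K := K)
  obtain ⟨x, rfl⟩ := hq.surjective y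
  obtain ⟨τ, hτ, hx⟩ := exists_mem_chart x.2
  obtain ⟨Θ, hΘ⟩ := hN τ hτ
  have hW : IsOpen (Subtype.val ⁻¹' chart τ : Set (UK K)) :=
    isOpen_chart.preimage continuous_subtype_val
  have hs {u : UK K} (hu : u.1 ∈ chart τ) :
      gaugeFix N Θ (Function.surjInv hq.surjective (qmap N K u)) = gaugeFix N Θ u :=
    (gaugeFix_eq_of_toricRel hΘ hu
      (qmap_eq_iff.1 (Function.surjInv_eq hq.surjective (qmap N K u)).symm)).symm
  refine ⟨qmap N K '' (Subtype.val ⁻¹' chart τ), hq.isOpenMap _ hW, ⟨x, hx, rfl⟩,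
    fun z => gaugeFix N Θ (Function.surjInv hq.surjective z), ?_, ?_⟩
  · rintro _ ⟨u, hu, rfl⟩
    refine (hq.continuousAt_comp_iff.1 ?_).continuousWithinAt
    refine ((continuousOn_gaugeFix hΘ).continuousAt (hW.mem_nhds hu)).congr ?_
    filter_upwards [hW.mem_nhds hu] with v hv using (hs hv).symm
  · rintro _ ⟨u, hu, rfl⟩
    exact (congrArg (qmap N K) (hs hu)).trans (qmap_eq_iff.2 (toricRel_gaugeFix hΘ hu)).symm

/-- The translation function of the principal bundle `q_Σ`: for `x` and `y` in the same orbit it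
is the element of `G_Σ` carrying `x` to `y`; elsewhere it is `1`. -/
def translation (N : Fin r → Fin n → ℤ) (x y : UK K) : Fin r → ℂ :=
  if h : toricRel N K x y then h.choose else 1

theorem translation_mem_GSet (x y : UK K) : translation N x y ∈ GSet N := by
  unfold translation
  split_ifs with h
  · exact h.choose_spec.1
  · exact one_mem_GSet

theorem translation_mul (h : toricRel N K x y) : translation N x y * x.1 = y.1 := by
  rw [translation, dif_pos h]
  exact h.choose_spec.2

theorem eq_translation (hN : HasSplittings N K) {g : Fin r → ℂ} (hg : g ∈ GSet N)
    (h : g * x.1 = y.1) : g = translation N x y := by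
  obtain ⟨τ, hτ, hx⟩ := exists_mem_chart x.2
  obtain ⟨Θ, hΘ⟩ := hN τ hτ
  rw [eq_gauge_mul_inv hΘ hg hx h,
    eq_gauge_mul_inv hΘ (translation_mem_GSet x y) hx (translation_mul ⟨g, hg, h⟩)]

theorem continuousOn_translation (hN : HasSplittings N K) :
    ContinuousOn (fun z : UK K × UK K => translation N z.1 z.2) {z | toricRel N K z.1 z.2} := by
  intro z hz
  obtain ⟨τ, hτ, hx⟩ := exists_mem_chart z.1.2
  obtain ⟨Θ, hΘ⟩ := hN τ hτ
  have hy := mem_chart_of_toricRel hz hx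
  have hgauge {w : Fin r → ℂ} (hw : w ∈ chart τ) : ContinuousAt (gauge N Θ) w :=
    (continuousOn_gauge hΘ).continuousAt (isOpen_chart.mem_nhds hw)
  have h1 : ContinuousAt (fun z : UK K × UK K => gauge N Θ z.1.1) z :=
    ContinuousAt.comp (f := fun z : UK K × UK K => z.1.1) (hgauge hx) (by fun_prop)
  have h2 : ContinuousAt (fun z : UK K × UK K => (gauge N Θ z.2.1)⁻¹) z :=
    continuousAt_pi.2 fun k => (continuousAt_pi.1 (ContinuousAt.comp
      (f := fun z : UK K × UK K => z.2.1) (hgauge hy) (by fun_prop)) k).inv₀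
        ((gauge_mem_GSet hΘ hy).1 k)
  have heq {w : UK K × UK K} (hw : toricRel N K w.1 w.2) (hw1 : w.1.1 ∈ chart τ) :
      translation N w.1 w.2 = gauge N Θ w.1.1 * (gauge N Θ w.2.1)⁻¹ :=
    eq_gauge_mul_inv hΘ (translation_mem_GSet _ _) hw1 (translation_mul hw)
  refine (h1.mul h2).continuousWithinAt.congr_of_eventuallyEq ?_ (heq hz hx)
  have hnhds : {w : UK K × UK K | w.1.1 ∈ chart τ} ∈ 𝓝 z :=
    (isOpen_chart.preimage (f := fun w : UK K × UK K => w.1.1) (by fun_prop)).mem_nhds hx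
  filter_upwards [self_mem_nhdsWithin, mem_nhdsWithin_of_mem_nhds hnhds] with w using heq

end Quotient

/-! ### Lifting maps from cubes along `q_Σ` -/

section BoxInduction

variable {ι : Type*} [DecidableEq ι]

theorem Icc_update_union_Icc_update {a b : ι → ℝ} {i : ι} {t : ℝ} (ha : a i ≤ t) (hb : t ≤ b i) :
    Set.Icc a (Function.update b i t) ∪ Set.Icc (Function.update a i t) b = Set.Icc a b := by
  ext x
  simp only [Set.mem_union, Set.mem_Icc, Pi.le_def]
  grind

theorem forall_box_of_forall_small_box [Finite ι] {p : (ι → ℝ) → (ι → ℝ) → Prop} {δ : ℝ}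
    (hδ : 0 < δ) (hsmall : ∀ a b, (∀ i, b i - a i ≤ δ) → p a b)
    (hsplit : ∀ a b i t, a i ≤ t → t ≤ b i → p a (Function.update b i t) →
      p (Function.update a i t) b → p a b) (a b : ι → ℝ) : p a b := by
  have := Fintype.ofFinite ι
  induction hn : ∑ i, ⌈(b i - a i) / δ⌉₊ using Nat.strong_induction_on generalizing a b with
  | _ n ih =>
    subst hn
    by_cases hab : ∀ i, b i - a i ≤ δ
    · exact hsmall a b hab
    push Not at hab
    obtain ⟨i, hi⟩ := hab
    have hone : 1 < (b i - a i) / δ := (one_lt_div hδ).2 hi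
    have hceil : 1 < ⌈(b i - a i) / δ⌉₊ := Nat.lt_ceil.2 (by exact_mod_cast hone)
    have hlt {a' b' : ι → ℝ} (hi : ⌈(b' i - a' i) / δ⌉₊ < ⌈(b i - a i) / δ⌉₊)
        (hne : ∀ j ≠ i, b' j - a' j = b j - a j) :
        ∑ j, ⌈(b' j - a' j) / δ⌉₊ < ∑ j, ⌈(b j - a j) / δ⌉₊ := by
      refine Finset.sum_lt_sum (fun j _ => ?_) ⟨i, Finset.mem_univ i, hi⟩
      obtain rfl | hj := eq_or_ne j i
      exacts [hi.le, by rw [hne j hj]]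
    refine hsplit a b i (a i + δ) (by linarith) (by linarith) (ih _ (hlt ?_ ?_) _ _ rfl)
      (ih _ (hlt ?_ ?_) _ _ rfl)
    · simpa [hδ.ne'] using hceil
    · intro j hj
      rw [Function.update_of_ne hj]
    · rw [Function.update_self, ← sub_sub, sub_div, div_self hδ.ne', Nat.ceil_sub_one]
      omega
    · intro j hj
      rw [Function.update_of_ne hj]

end BoxInduction

section Lifting

variable {X : Type*} [TopologicalSpace X] {n r : ℕ} {N : Fin r → Fin n → ℤ}
  {K : Set (Finset (Fin r))} {G : X → XS N K} {B B₁ B₂ C : Set X}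

/-- `G` lifts along `q_Σ` continuously over `B`. -/
def HasLiftOn (G : X → XS N K) (B : Set X) : Prop :=
  ∃ f : X → UK K, ContinuousOn f B ∧ ∀ x ∈ B, qmap N K (f x) = G x

theorem HasLiftOn.exists_eqOn (hN : HasSplittings N K) (hB : HasLiftOn G B) {ρ : X → X}
    (hρ : ContinuousOn ρ B) (hρB : Set.MapsTo ρ B (B ∩ C)) (hρC : Set.EqOn ρ id (B ∩ C))
    {f : X → UK K} (hf : ContinuousOn f C) (hfG : ∀ x ∈ C, qmap N K (f x) = G x) :
    ∃ g : X → UK K, ContinuousOn g B ∧ (∀ x ∈ B, qmap N K (g x) = G x) ∧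
      Set.EqOn g f (B ∩ C) := by
  obtain ⟨f', hf', hfG'⟩ := hB
  let T (x : X) : Fin r → ℂ := translation N (f' (ρ x)) (f (ρ x))
  have hrel : ∀ x ∈ B, toricRel N K (f' (ρ x)) (f (ρ x)) := fun x hx => by
    rw [← qmap_eq_iff, hfG' _ (hρB hx).1, hfG _ (hρB hx).2]
  have hTG (x : X) : T x ∈ GSet N := translation_mem_GSet _ _
  have hT : ContinuousOn T B := (continuousOn_translation hN).comp
    ((hf'.comp hρ (hρB.mono_right Set.inter_subset_left)).prodMk
      (hf.comp hρ (hρB.mono_right Set.inter_subset_right))) hrel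
  refine ⟨fun x => ⟨T x * (f' x).1, mul_mem_UK (hTG x).1 (f' x).2⟩, ?_, fun x hx => ?_,
    fun x hx => Subtype.ext ?_⟩
  · rw [Topology.IsInducing.subtypeVal.continuousOn_iff]
    exact hT.mul (continuous_subtype_val.comp_continuousOn hf')
  · rw [← hfG' x hx]
    exact (qmap_eq_iff.2 ⟨T x, hTG x, rfl⟩).symm
  · have hTx := translation_mul (hrel x hx.1)
    simp only [T]
    rwa [hρC hx] at hTx ⊢

theorem HasLiftOn.union (hN : HasSplittings N K) (hc₁ : IsClosed B₁) (hc₂ : IsClosed B₂)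
    {ρ : X → X} (hρ : ContinuousOn ρ B₂) (hρB : Set.MapsTo ρ B₂ (B₂ ∩ B₁))
    (hρC : Set.EqOn ρ id (B₂ ∩ B₁)) (h₁ : HasLiftOn G B₁) (h₂ : HasLiftOn G B₂) :
    HasLiftOn G (B₁ ∪ B₂) := by
  obtain ⟨f, hf, hfG⟩ := h₁
  obtain ⟨g, hg, hgG, hgf⟩ := h₂.exists_eqOn hN hρ hρB hρC hf hfG
  have h₁ : Set.EqOn (B₁.piecewise f g) f B₁ := B₁.piecewise_eqOn f g
  have h₂ : Set.EqOn (B₁.piecewise f g) g B₂ := fun x hx => by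
    by_cases hx₁ : x ∈ B₁
    · rw [h₁ hx₁, hgf ⟨hx, hx₁⟩]
    · exact B₁.piecewise_eq_of_notMem f g hx₁
  refine ⟨B₁.piecewise f g, (hf.congr h₁).union_of_isClosed (hg.congr h₂) hc₁ hc₂, ?_⟩
  rintro x (hx | hx)
  · rw [h₁ hx, hfG x hx]
  · rw [h₂ hx, hgG x hx]

end Lifting

section Cubes

open scoped unitInterval Topology

variable {ι : Type*} {n r : ℕ} {N : Fin r → Fin n → ℤ} {K : Set (Finset (Fin r))}

theorem HasLiftOn.Icc_of_update [DecidableEq ι] (hN : HasSplittings N K) {G : (ι → ℝ) → XS N K}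
    {a b : ι → ℝ} {i : ι} {t : ℝ} (ha : a i ≤ t) (hb : t ≤ b i)
    (h₁ : HasLiftOn G (Set.Icc a (Function.update b i t)))
    (h₂ : HasLiftOn G (Set.Icc (Function.update a i t) b)) : HasLiftOn G (Set.Icc a b) := by
  rw [← Icc_update_union_Icc_update ha hb]
  refine HasLiftOn.union hN isClosed_Icc isClosed_Icc (ρ := fun x => Function.update x i t)
    (continuous_id.update i continuous_const).continuousOn ?_ ?_ h₁ h₂
  · simp only [Set.MapsTo, Set.mem_inter_iff, Set.mem_Icc, Pi.le_def]
    grind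
  · rintro x ⟨hx₂, hx₁⟩
    have hxt : x i = t := le_antisymm (by simpa using hx₁.2 i) (by simpa using hx₂.1 i)
    simp [← hxt]

variable [Finite ι]

theorem exists_forall_small_hasLiftOn_Icc (hN : HasSplittings N K) {G : (ι → ℝ) → XS N K}
    (hG : Continuous G) : ∃ δ > 0, ∀ a b : ι → ℝ, (∀ i, b i - a i ≤ δ) →
      Set.Icc a b ⊆ Set.Icc 0 1 → HasLiftOn G (Set.Icc a b) := by
  have := Fintype.ofFinite ι
  choose V hVo hyV s hs hsV using fun y => exists_continuousOn_section_qmap (N := N) hN y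
  obtain ⟨δ, hδ, h⟩ := lebesgue_number_lemma_of_metric (s := Set.Icc (0 : ι → ℝ) 1)
    (c := fun y => G ⁻¹' V y) isCompact_Icc (fun y => (hVo y).preimage hG)
    (fun x _ => Set.mem_iUnion.2 ⟨G x, hyV _⟩)
  refine ⟨δ / 2, half_pos hδ, fun a b hab hsub => ?_⟩
  by_cases hle : a ≤ b
  · obtain ⟨y, hy⟩ := h a (hsub ⟨le_rfl, hle⟩)
    have hV : Set.Icc a b ⊆ G ⁻¹' V y := fun x hx => hy <| by
      refine ((dist_pi_le_iff (half_pos hδ).le).2 fun i => ?_).trans_lt (half_lt_self hδ)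
      rw [Real.dist_eq, abs_of_nonneg (sub_nonneg.2 (hx.1 i))]
      linarith [hx.2 i, hab i]
    exact ⟨s y ∘ G, (hs y).comp hG.continuousOn hV, fun x hx => hsV y _ (hV hx)⟩
  · rw [Set.Icc_eq_empty hle]
    exact ⟨fun x => s (G x) (G x), continuousOn_empty _, fun _ hx => hx.elim⟩

theorem exists_lift_cube (hN : HasSplittings N K) (G : C(I^ι, XS N K)) :
    ∃ f : C(I^ι, UK K), (qCont N K).comp f = G := by
  let G' (x : ι → ℝ) : XS N K := G fun i => Set.projIcc 0 1 zero_le_one (x i)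
  have hG' : Continuous G' := G.continuous.comp <|
    continuous_pi fun i => continuous_projIcc.comp (continuous_apply i)
  obtain ⟨δ, hδ, hsmall⟩ := exists_forall_small_hasLiftOn_Icc hN hG'
  obtain ⟨f, hf, hfG⟩ : HasLiftOn G' (Set.Icc 0 1) := by
    refine forall_box_of_forall_small_box
      (p := fun a b => Set.Icc a b ⊆ Set.Icc 0 1 → HasLiftOn G' (Set.Icc a b)) hδ hsmall ?_ 0 1
      subset_rfl
    intro a b i t ha hb h₁ h₂ hsub
    rw [← Icc_update_union_Icc_update ha hb, Set.union_subset_iff] at hsub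
    exact .Icc_of_update hN ha hb (h₁ hsub.1) (h₂ hsub.2)
  have hmem (x : I^ι) : (fun i => (x i : ℝ)) ∈ Set.Icc (0 : ι → ℝ) 1 :=
    ⟨fun i => (x i).2.1, fun i => (x i).2.2⟩
  refine ⟨⟨fun x => f fun i => x i, hf.comp_continuous (by fun_prop) hmem⟩,
    ContinuousMap.ext fun x => (hfG _ (hmem x)).trans ?_⟩
  simp [G']

theorem exists_lift_cube_prod_interval (hN : HasSplittings N K) (G : C((I^ι) × I, XS N K)) :
    ∃ f : C((I^ι) × I, UK K), (qCont N K).comp f = G := by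
  let e : (I^ι) × I ≃ₜ I^(ι ⊕ Unit) :=
    ((Homeomorph.refl _).prodCongr (Homeomorph.funUnique Unit I).symm).trans
      Homeomorph.sumArrowHomeomorphProdArrow.symm
  obtain ⟨f, hf⟩ := exists_lift_cube hN (G.comp (e.symm : C(I^(ι ⊕ Unit), (I^ι) × I)))
  refine ⟨f.comp (e : C((I^ι) × I, I^(ι ⊕ Unit))), ?_⟩
  rw [← ContinuousMap.comp_assoc, hf]
  ext x
  simp

end Cubes

/-! ### The circle as a quotient of the interval -/

section IntervalToCircle

open Topology unitInterval
open scoped OnePoint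

theorem continuous_extend_onePoint_infty {X Y : Type*} [TopologicalSpace X] [TopologicalSpace Y]
    [T2Space X] {j : Y → X} (hj : IsOpenEmbedding j) :
    Continuous (Function.extend j ((↑) : Y → OnePoint Y) fun _ => ∞) := by
  have hcoe (u : Set (OnePoint Y)) (h : ∞ ∉ u) :
      Function.extend j ((↑) : Y → OnePoint Y) (fun _ => ∞) ⁻¹' u = j '' ((↑) ⁻¹' u) := by
    ext x
    by_cases hx : x ∈ Set.range j
    · obtain ⟨y, rfl⟩ := hx
      simp [hj.injective.extend_apply, hj.injective.eq_iff]
    · simp only [Set.mem_preimage, Function.extend_apply' _ _ _ hx, h, false_iff]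
      exact fun hmem => hx (Set.image_subset_range _ _ hmem)
  refine continuous_def.2 fun u hu => ?_
  obtain ⟨hinfty, hopen⟩ := OnePoint.isOpen_def.1 hu
  by_cases h : ∞ ∈ u
  · rw [← isClosed_compl_iff, ← Set.preimage_compl, hcoe uᶜ (by simpa using h)]
    exact ((hinfty h).image hj.continuous).isClosed
  · rw [hcoe u h]
    exact hj.isOpenMap _ hopen

/-- The quotient map `[0, 1] → S¹ = ℝ ∪ {∞}` identifying the endpoints, which both go to `∞`. On
the open interval it is inverse to the logistic function. -/
def intervalToCircle : I → OnePoint ℝ :=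
  Function.extend unitInterval.sigmoid (↑) fun _ => ∞

theorem isOpenEmbedding_sigmoid : IsOpenEmbedding unitInterval.sigmoid :=
  ⟨isEmbedding_sigmoid, by rw [unitInterval.range_sigmoid]; exact isOpen_Ioo⟩

theorem continuous_intervalToCircle : Continuous intervalToCircle :=
  continuous_extend_onePoint_infty isOpenEmbedding_sigmoid

theorem intervalToCircle_sigmoid (x : ℝ) : intervalToCircle (unitInterval.sigmoid x) = x :=
  unitInterval.sigmoid_injective.extend_apply _ _ x

theorem eq_zero_or_eq_one_or_exists_sigmoid_eq (t : I) :
    t = 0 ∨ t = 1 ∨ ∃ x, unitInterval.sigmoid x = t := by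
  rw [or_iff_not_imp_left, or_iff_not_imp_left, ← Set.mem_range, unitInterval.range_sigmoid]
  exact fun h₀ h₁ => ⟨unitInterval.pos_iff_ne_zero.2 h₀, unitInterval.lt_one_iff_ne_one.2 h₁⟩

theorem intervalToCircle_zero : intervalToCircle 0 = ∞ :=
  Function.extend_apply' _ _ _ fun ⟨x, hx⟩ => (unitInterval.sigmoid_pos x).ne' hx

theorem intervalToCircle_one : intervalToCircle 1 = ∞ :=
  Function.extend_apply' _ _ _ fun ⟨x, hx⟩ => (unitInterval.sigmoid_lt_one x).ne hx

theorem intervalToCircle_surjective : Function.Surjective intervalToCircle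
  | ∞ => ⟨0, intervalToCircle_zero⟩
  | (x : ℝ) => ⟨_, intervalToCircle_sigmoid x⟩

theorem exists_comp_intervalToCircle_eq {A Z : Type*} [TopologicalSpace A] [TopologicalSpace Z]
    (F : C(A × I, Z)) (h : ∀ a, F (a, 0) = F (a, 1)) :
    ∃ F' : C(A × OnePoint ℝ, Z), ∀ a t, F' (a, intervalToCircle t) = F (a, t) := by
  let κ : C(A × I, A × OnePoint ℝ) :=
    ⟨Prod.map id intervalToCircle, continuous_id.prodMap continuous_intervalToCircle⟩
  have hκ : IsQuotientMap κ :=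
    (isProperMap_id.prodMap continuous_intervalToCircle.isProperMap).isClosedMap.isQuotientMap
      κ.continuous (Function.surjective_id.prodMap intervalToCircle_surjective)
  have hF : Function.FactorsThrough F κ := by
    rintro ⟨a, s⟩ ⟨b, t⟩ hst
    obtain ⟨rfl, hst⟩ := Prod.mk.inj hst
    obtain rfl | rfl | ⟨x, rfl⟩ := eq_zero_or_eq_one_or_exists_sigmoid_eq s <;>
    obtain rfl | rfl | ⟨y, rfl⟩ := eq_zero_or_eq_one_or_exists_sigmoid_eq t <;>
    simp_all [intervalToCircle_sigmoid, intervalToCircle_zero, intervalToCircle_one]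
  exact ⟨hκ.lift F hF, fun a t => DFunLike.congr_fun (hκ.lift_comp F hF) (a, t)⟩

end IntervalToCircle

/-! ### Logarithms of families in `G_Σ` -/

section Logarithm

open scoped unitInterval

variable {A : Type*} [TopologicalSpace A]

theorem eq_zero_of_exp_eq_one [PreconnectedSpace A] {g : A → ℂ} (hg : Continuous g)
    (hexp : ∀ a, Complex.exp (g a) = 1) {a₀ : A} (h₀ : g a₀ = 0) (a : A) : g a = 0 :=
  congr_fun (Complex.isCoveringMap_exp.eq_of_comp_eq (g₂ := fun _ => 0) hg continuous_const
    (funext fun a => Subtype.ext (by simp [hexp])) a₀ h₀) a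

theorem exists_continuousMap_exp_eq {μ : A × I → ℂ} (hμ : Continuous μ) (hne : ∀ x, μ x ≠ 0)
    (hone : ∀ a, μ (a, 0) = 1) :
    ∃ η : C(A × I, ℂ), (∀ x, Complex.exp (η x) = μ x) ∧ ∀ a, η (a, 0) = 0 := by
  let H : C(I × A, {z : ℂ // z ≠ 0}) :=
    ⟨fun x => ⟨μ x.swap, hne _⟩, (hμ.comp continuous_swap).subtype_mk _⟩
  have hH (a : A) : H (0, a) = ⟨_, (ContinuousMap.const A (0 : ℂ) a).exp_ne_zero⟩ :=
    Subtype.ext (by simp [H, hone])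
  let η := Complex.isCoveringMap_exp.liftHomotopy H (.const A 0) hH
  have hη (x : I × A) : Complex.exp (η x) = μ x.swap := congrArg Subtype.val <|
    congr_fun (Complex.isCoveringMap_exp.liftHomotopy_lifts H (.const A 0) hH) x
  exact ⟨η.comp .prodSwap, fun x => hη x.swap,
    Complex.isCoveringMap_exp.liftHomotopy_zero H (.const A 0) hH⟩

variable {n r : ℕ} {N : Fin r → Fin n → ℤ}

/-- The Lie algebra of `G_Σ`: the complex linear relations between the generators `n_1, …, n_r`. -/
def lieAlgebraG (N : Fin r → Fin n → ℤ) : Submodule ℂ (Fin r → ℂ) :=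
  LinearMap.ker (Fintype.linearCombination ℂ fun k i => (N k i : ℂ))

@[fun_prop]
theorem continuous_lieAlgebraG_apply {η : A → lieAlgebraG N} (hη : Continuous η) (k : Fin r) :
    Continuous fun a => (η a).1 k :=
  (continuous_apply k).comp (continuous_subtype_val.comp hη)

theorem mem_lieAlgebraG_iff {v : Fin r → ℂ} : v ∈ lieAlgebraG N ↔ ∀ i, ∑ k, v k * N k i = 0 := by
  simp [lieAlgebraG, Fintype.linearCombination_apply, funext_iff]

theorem exp_mem_GSet {v : Fin r → ℂ} (hv : v ∈ lieAlgebraG N) :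
    (fun k => Complex.exp (v k)) ∈ GSet N := by
  refine ⟨fun k => Complex.exp_ne_zero _, fun m => ?_⟩
  simp only [← Complex.exp_int_mul, ← Complex.exp_sum]
  rw [Complex.exp_eq_one_iff]
  refine ⟨0, ?_⟩
  calc ∑ k, ((∑ i, N k i * m i : ℤ) : ℂ) * v k = ∑ i, m i * ∑ k, v k * N k i := by
        push_cast
        simp only [Finset.sum_mul, Finset.mul_sum]
        rw [Finset.sum_comm]
        exact Finset.sum_congr rfl fun i _ => Finset.sum_congr rfl fun k _ => by ring
    _ = (0 : ℤ) * (2 * Real.pi * Complex.I) := by simp [mem_lieAlgebraG_iff.1 hv]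

theorem exp_sum_mul_eq_one {v : Fin r → ℂ} (hv : (fun k => Complex.exp (v k)) ∈ GSet N)
    (i : Fin n) : Complex.exp (∑ k, v k * N k i) = 1 := by
  rw [← hv.2 (Pi.single i 1), Complex.exp_sum]
  refine Finset.prod_congr rfl fun k _ => ?_
  simp [mul_comm, Pi.single_apply, ← Complex.exp_int_mul]

theorem exists_continuousMap_lieAlgebraG_exp_eq {μ : A × I → Fin r → ℂ} (hμ : Continuous μ)
    (hG : ∀ x, μ x ∈ GSet N) (hone : ∀ a, μ (a, 0) = 1) :
    ∃ η : C(A × I, lieAlgebraG N),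
      (∀ x, (fun k => Complex.exp ((η x).1 k)) = μ x) ∧ ∀ a, η (a, 0) = 0 := by
  choose η hexp hzero using fun k => exists_continuousMap_exp_eq (μ := fun x => μ x k)
    (by fun_prop) (fun x => (hG x).1 k) fun a => congr_fun (hone a) k
  replace hexp (x : A × I) : (fun k => Complex.exp (η k x)) = μ x := funext fun k => hexp k x
  have hmem (x : A × I) : (fun k => η k x) ∈ lieAlgebraG N := by
    refine mem_lieAlgebraG_iff.2 fun i => ?_
    refine eq_zero_of_exp_eq_one (g := fun t : I => ∑ k, η k (x.1, t) * N k i) (by fun_prop)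
      (fun t => exp_sum_mul_eq_one (hexp (x.1, t) ▸ hG _) i) (a₀ := 0) ?_ x.2
    simp [hzero]
  exact ⟨⟨fun x => ⟨fun k => η k x, hmem x⟩, by fun_prop⟩, hexp,
    fun a => Subtype.ext (funext fun k => hzero k a)⟩

end Logarithm

/-! ### Lifting families of loops relative to the boundary of the cube -/

section BoundaryOfCube

open scoped unitInterval Topology

variable {ι : Type*}

theorem isClosed_cubeBoundary [Finite ι] : IsClosed (Cube.boundary ι) := by
  have : Cube.boundary ι = ⋃ i, {y | y i = 0} ∪ {y | y i = 1} := by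
    ext y
    simp [Cube.boundary]
  rw [this]
  exact isClosed_iUnion_of_finite fun i =>
    (isClosed_eq (by fun_prop) (by fun_prop)).union (isClosed_eq (by fun_prop) (by fun_prop))

theorem image_sphere_eq_cubeBoundary [Fintype ι] :
    (fun (x : ι → ℝ) i => Set.projIcc (0 : ℝ) 1 zero_le_one ((1 + x i) / 2)) ''
      Metric.sphere 0 1 = Cube.boundary ι := by
  ext s
  constructor
  · rintro ⟨x, hx, rfl⟩
    rw [mem_sphere_zero_iff_norm] at hx
    obtain ⟨i, hi⟩ : ∃ i, 1 ≤ |x i| := by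
      by_contra! hlt
      exact hx.not_lt ((pi_norm_lt_iff zero_lt_one).2 hlt)
    refine ⟨i, ?_⟩
    rcases le_abs.1 hi with h | h
    · exact Or.inr (Set.projIcc_of_right_le _ (by linarith))
    · exact Or.inl (Set.projIcc_of_le_left _ (by linarith))
  · rintro ⟨i, hi⟩
    refine ⟨fun i => 2 * s i - 1, ?_, funext fun j => by simp [Set.projIcc_val]⟩
    rw [mem_sphere_zero_iff_norm]
    refine le_antisymm ((pi_norm_le_iff_of_nonneg zero_le_one).2 fun j => abs_le.2 ?_)
      (le_trans ?_ (norm_le_pi_norm _ i))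
    · constructor <;> linarith [(s j).2.1, (s j).2.2]
    · rcases hi with hi | hi <;> norm_num [hi]

theorem isConnected_cubeBoundary [Finite ι] [Nontrivial ι] : IsConnected (Cube.boundary ι) := by
  have := Fintype.ofFinite ι
  rw [← image_sphere_eq_cubeBoundary]
  refine (isConnected_sphere ?_ 0 zero_le_one).image _
    (continuous_pi fun i => continuous_projIcc.comp (by fun_prop)).continuousOn
  rw [rank_fun']
  exact_mod_cast Fintype.one_lt_card

instance : ContractibleSpace (I^ι) :=
  contractible_iff_id_nullhomotopic _ |>.2 ⟨0, ⟨{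
    toFun := fun x i => unitInterval.symm x.1 * x.2 i
    continuous_toFun := by fun_prop
    map_zero_left := fun x => funext fun i => by simp
    map_one_left := fun x => funext fun i => by simp }⟩⟩

end BoundaryOfCube

section RelativeLifting

open scoped unitInterval Topology OnePoint

variable {n r : ℕ} {N : Fin r → Fin n → ℤ} {K : Set (Finset (Fin r))}
  {A : Type*} [TopologicalSpace A] {S : Set A}

theorem exists_continuousMap_lieAlgebraG_exp_eq_of_contractibleSpace [ContractibleSpace A]
    (hS : IsConnected S) (ω : C(A, Fin r → ℂ)) (hG : ∀ a, ω a ∈ GSet N)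
    (hone : ∀ a ∈ S, ω a = 1) :
    ∃ η : C(A, lieAlgebraG N),
      (∀ a, (fun k => Complex.exp ((η a).1 k)) = ω a) ∧ ∀ a ∈ S, η a = 0 := by
  have : PreconnectedSpace S := isPreconnected_iff_preconnectedSpace.1 hS.isPreconnected
  obtain ⟨s₀, hs₀⟩ := hS.nonempty
  obtain ⟨x₀, ⟨H⟩⟩ := id_nullhomotopic A
  obtain ⟨η, hexp, -⟩ := exists_continuousMap_lieAlgebraG_exp_eq (N := N)
    (μ := fun x : A × I => (ω x₀)⁻¹ * ω (H.symm x.swap)) (by fun_prop)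
    (fun x => mul_mem_GSet (inv_mem_GSet (hG x₀)) (hG _))
    fun a => by simpa using inv_mul_cancel_of_mem_GSet (hG x₀)
  have hexp₁ (a : A) (k : Fin r) : Complex.exp ((η (a, 1)).1 k) = (ω x₀ k)⁻¹ * ω a k := by
    simpa using congr_fun (hexp (a, 1)) k
  have hω (a : A) (k : Fin r) :
      Complex.exp ((η (a, 1) - η (s₀, 1)).1 k) = ω a k := by
    have h₀ := (hG x₀).1 k
    rw [Submodule.coe_sub, Pi.sub_apply, Complex.exp_sub, hexp₁, hexp₁, hone s₀ hs₀, Pi.one_apply]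
    field_simp
  refine ⟨⟨fun a => η (a, 1) - η (s₀, 1), by fun_prop⟩, fun a => funext (hω a), fun a ha =>
    Subtype.ext (funext fun k => ?_)⟩
  exact eq_zero_of_exp_eq_one (g := fun s : S => (η (s, 1) - η (s₀, 1)).1 k) (by fun_prop)
    (fun s => by rw [hω, hone s s.2, Pi.one_apply]) (a₀ := ⟨s₀, hs₀⟩) (by simp) ⟨a, ha⟩

theorem exists_mul_eq (g : C(A, Fin r → ℂ)) (hg : ∀ a, g a ∈ GSet N) (f : C(A, UK K)) :
    ∃ f' : C(A, UK K), (∀ a, (f' a).1 = g a * (f a).1) ∧ ∀ a, qmap N K (f' a) = qmap N K (f a) :=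
  ⟨⟨fun a => ⟨g a * (f a).1, mul_mem_UK (hg a).1 (f a).2⟩, by fun_prop⟩, fun _ => rfl,
    fun a => (qmap_eq_iff.2 ⟨g a, hg a, rfl⟩).symm⟩

theorem continuous_translation (hN : HasSplittings N K) {f g : A → UK K} (hf : Continuous f)
    (hg : Continuous g) (h : ∀ a, toricRel N K (f a) (g a)) :
    Continuous fun a => translation N (f a) (g a) :=
  (continuousOn_translation hN).comp_continuous (hf.prodMk hg) h

theorem exists_lift_apply_zero_eq_one (hN : HasSplittings N K) (hE : ∅ ∈ K)
    (f : C(A × I, UK K)) (hf : ∀ a, qmap N K (f (a, 0)) = baseX N K hE) :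
    ∃ f' : C(A × I, UK K), (∀ x, qmap N K (f' x) = qmap N K (f x)) ∧ ∀ a, (f' (a, 0)).1 = 1 := by
  have hrel (x : A × I) : toricRel N K (f (x.1, 0)) (onesUK hE) := qmap_eq_iff.1 (hf x.1)
  obtain ⟨f', hf', hq⟩ := exists_mul_eq
    ⟨_, continuous_translation hN (by fun_prop) continuous_const hrel⟩
    (fun x => translation_mem_GSet _ _) f
  exact ⟨f', hq, fun a => (hf' (a, 0)).trans (translation_mul (hrel (a, 0)))⟩

theorem exists_lift_eqOn_of_apply_zero_eq_one [CompactSpace A] [T2Space A]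
    (hN : HasSplittings N K) (hS : IsClosed S) (f : C(A × I, UK K))
    (hf : ∀ a, (f (a, 0)).1 = 1) (J : C(S × I, UK K)) (hJ : ∀ s, (J (s, 0)).1 = 1)
    (hq : ∀ (s : S) t, qmap N K (f (s, t)) = qmap N K (J (s, t))) :
    ∃ f' : C(A × I, UK K), (∀ x, qmap N K (f' x) = qmap N K (f x)) ∧
      (∀ a, (f' (a, 0)).1 = 1) ∧ ∀ (s : S) t, f' (s, t) = J (s, t) := by
  have hrel (x : S × I) : toricRel N K (f (x.1, x.2)) (J x) := qmap_eq_iff.1 (hq x.1 x.2)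
  obtain ⟨η, hexp, hzero⟩ := exists_continuousMap_lieAlgebraG_exp_eq (N := N)
    (continuous_translation hN (by fun_prop) J.continuous hrel)
    (fun x => translation_mem_GSet _ _) fun s => (eq_translation hN one_mem_GSet <| by
      rw [hf, hJ, one_mul]).symm
  have hS' : IsClosed {x : A × I | x.1 ∈ S} := hS.preimage continuous_fst
  obtain ⟨g, hg⟩ := ContinuousMap.exists_restrict_eq hS'
    (⟨fun x => η (⟨x.1.1, x.2⟩, x.1.2), by fun_prop⟩ : C({x : A × I | x.1 ∈ S}, lieAlgebraG N))
  replace hg (s : S) (t : I) : g (s, t) = η (s, t) :=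
    DFunLike.congr_fun hg ⟨((s : A), t), s.2⟩
  obtain ⟨f', hf', hq'⟩ := exists_mul_eq (N := N)
    ⟨fun x k => Complex.exp ((g x - g (x.1, 0)).1 k), by fun_prop⟩
    (fun x => exp_mem_GSet (g x - g (x.1, 0)).2) f
  refine ⟨f', hq', fun a => ?_, fun s t => Subtype.ext ?_⟩
  · simp [hf', hf, funext_iff]
  · rw [hf', ← translation_mul (hrel (s, t)), ← hexp]
    simp [hg, hzero]

theorem exists_lift_apply_one_eq_one [ContractibleSpace A] (hE : ∅ ∈ K) (hS : IsConnected S)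
    (f : C(A × I, UK K)) (hzero : ∀ a, (f (a, 0)).1 = 1)
    (hone : ∀ a, qmap N K (f (a, 1)) = baseX N K hE) (hf : ∀ a ∈ S, (f (a, 1)).1 = 1) :
    ∃ f' : C(A × I, UK K), (∀ x, qmap N K (f' x) = qmap N K (f x)) ∧
      (∀ a, (f' (a, 0)).1 = 1) ∧ (∀ a, (f' (a, 1)).1 = 1) ∧
      ∀ a ∈ S, ∀ t, f' (a, t) = f (a, t) := by
  have hG (a : A) : (f (a, 1)).1 ∈ GSet N := by
    obtain ⟨μ, hμ, h⟩ := qmap_eq_iff.1 (hone a).symm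
    rw [← h]
    simpa [onesUK, onesC] using hμ
  obtain ⟨η, hexp, hη⟩ := exists_continuousMap_lieAlgebraG_exp_eq_of_contractibleSpace hS
    ⟨fun a => (f (a, 1)).1, by fun_prop⟩ hG hf
  obtain ⟨f', hf', hq⟩ := exists_mul_eq (N := N)
    ⟨fun x : A × I => fun k => Complex.exp ((-(x.2 : ℝ) : ℂ) * (η x.1).1 k), by fun_prop⟩
    (fun x => exp_mem_GSet ((lieAlgebraG N).smul_mem _ (η x.1).2)) f
  refine ⟨f', hq, fun a => ?_, fun a => funext fun k => ?_, fun a ha t => Subtype.ext ?_⟩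
  · simp [hf', hzero, funext_iff]
  · have hk : Complex.exp ((η a).1 k) = (f (a, 1)).1 k := congr_fun (hexp a) k
    simp [hf', ← hk, ← Complex.exp_add]
  · rw [hf']
    simp [hη a ha, funext_iff]

theorem exists_lift_cube_prod_circle {ι : Type*} [Finite ι] [Nontrivial ι]
    (hN : HasSplittings N K) (hE : ∅ ∈ K) (G : C((I^ι) × OnePoint ℝ, XS N K))
    (hG : ∀ s, G (s, ∞) = baseX N K hE) (J : C(Cube.boundary ι × OnePoint ℝ, UK K))
    (hJ : ∀ s, (J (s, ∞)).1 = 1) (hJG : ∀ s p, qmap N K (J (s, p)) = G (s, p)) :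
    ∃ F : C((I^ι) × OnePoint ℝ, UK K), (∀ x, qmap N K (F x) = G x) ∧
      (∀ s, (F (s, ∞)).1 = 1) ∧ ∀ (s : Cube.boundary ι) p, F (s, p) = J (s, p) := by
  have hκ := continuous_intervalToCircle
  obtain ⟨f₀, hf₀⟩ := exists_lift_cube_prod_interval hN
    (G.comp ⟨fun x => (x.1, intervalToCircle x.2), by fun_prop⟩)
  replace hf₀ (s : I^ι) (t : I) : qmap N K (f₀ (s, t)) = G (s, intervalToCircle t) :=
    DFunLike.congr_fun hf₀ (s, t)
  obtain ⟨f₁, hf₁, hzero₁⟩ := exists_lift_apply_zero_eq_one hN hE f₀ fun s => by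
    rw [hf₀, intervalToCircle_zero, hG]
  obtain ⟨f₂, hf₂, hzero₂, hJ₂⟩ := exists_lift_eqOn_of_apply_zero_eq_one hN isClosed_cubeBoundary
    f₁ hzero₁ (J.comp ⟨fun x => (x.1, intervalToCircle x.2), by fun_prop⟩)
    (fun s => by simp [intervalToCircle_zero, hJ]) fun s t => by simp [hf₁, hf₀, hJG]
  obtain ⟨f, hf, hzero, hone, hJf⟩ := exists_lift_apply_one_eq_one hE isConnected_cubeBoundary f₂
    hzero₂ (fun s => by rw [hf₂, hf₁, hf₀, intervalToCircle_one, hG])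
    fun s hs => by simp [hJ₂ ⟨s, hs⟩, intervalToCircle_one, hJ]
  obtain ⟨F, hF⟩ := exists_comp_intervalToCircle_eq f fun s =>
    Subtype.ext ((hzero s).trans (hone s).symm)
  refine ⟨F, fun ⟨s, p⟩ => ?_, fun s => ?_, fun s p => ?_⟩
  · obtain ⟨t, rfl⟩ := intervalToCircle_surjective p
    rw [hF, hf, hf₂, hf₁, hf₀]
  · rw [← intervalToCircle_zero, hF, hzero]
  · obtain ⟨t, rfl⟩ := intervalToCircle_surjective p
    rw [hF, hJf s s.2, hJ₂]
    rfl

end RelativeLifting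

/-! ### Deforming families of loops into families of polynomials -/

section Compression

open scoped unitInterval Topology OnePoint

section Loop

variable {X Y Z : Type*} [TopologicalSpace X] [TopologicalSpace Y] [TopologicalSpace Z] {A : Set X}

theorem homotopicRel_of_homotopicRel_cylinderRel {F F' : C(X × OnePoint ℝ, Y)} (q : C(Y, Z))
    {z₀ : Z} {g g' : C(X, Loop Z z₀)} (hg : ∀ x p, q (F (x, p)) = (g x).1 p)
    (hg' : ∀ x p, q (F' (x, p)) = (g' x).1 p) (h : F.HomotopicRel F' (cylinderRel A)) :
    g.HomotopicRel g' A := by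
  obtain ⟨H⟩ := h
  let L : C((I × X) × OnePoint ℝ, Z) := ⟨fun x => q (H (x.1.1, (x.1.2, x.2))), by fun_prop⟩
  have hrel (t : I) {z : X × OnePoint ℝ} (hz : z ∈ cylinderRel A) : q (H (t, z)) = (g z.1).1 z.2 :=
    (congrArg q (H.eq_fst t hz)).trans (hg _ _)
  refine ⟨{
    toFun := fun x => ⟨L.curry x, (hrel _ (Or.inr rfl)).trans (g x.2).2⟩
    continuous_toFun := L.curry.continuous.subtype_mk _
    map_zero_left := fun x => Subtype.ext (ContinuousMap.ext fun p => ?_)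
    map_one_left := fun x => Subtype.ext (ContinuousMap.ext fun p => ?_)
    prop' := fun t x hx => Subtype.ext (ContinuousMap.ext fun p => hrel t (Or.inl hx)) }⟩
  · exact (congrArg q (H.apply_zero _)).trans (hg x p)
  · exact (congrArg q (H.apply_one _)).trans (hg' x p)

end Loop

variable {n r m ρ : ℕ} {N : Fin r → Fin n → ℤ} {K : Set (Finset (Fin r))} {D : Fin r → ℕ}

theorem mem_PolSp_iff_forall_ratVec_zero_mem_UK (hE : ∅ ∈ K) {y : ∀ j, Fin (D j + 2 * 0) → ℂ} :
    y ∈ PolSp K D ↔ ∀ p, ratVec D (fun _ => 0) y p ∈ UK K :=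
  mem_PolSp_iff_forall_ratVec_mem_UK (M := fun _ => 0) hE

/-- The evaluation map `Pol*_D × S¹ → U(K)`, the polynomial `f_k` being divided by `(t + i) ^ d_k`
so that it extends to `∞`. -/
def polEval (hE : ∅ ∈ K) (D : Fin r → ℕ) : C(PolSp K D × OnePoint ℝ, UK K) where
  toFun z := ⟨ratVec D (fun _ => 0) z.1.1 z.2,
    (mem_PolSp_iff_forall_ratVec_zero_mem_UK hE).1 z.1.2 z.2⟩
  continuous_toFun := by
    refine Continuous.subtype_mk ?_ _
    exact continuous_ratVec (continuous_subtype_val.comp continuous_fst) continuous_snd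

theorem qmap_polEval (hE : ∅ ∈ K) (hsum : ∑ k, (D k : ℤ) • N k = 0)
    {i : PolSp K D → Loop (XS N K) (baseX N K hE)} (hi : IsID N K hE D i) (f : PolSp K D)
    (p : OnePoint ℝ) : qmap N K (polEval hE D (f, p)) = (i f).1 p := by
  induction p using OnePoint.rec with
  | infty =>
    rw [(i f).2]
    exact congrArg _ (Subtype.ext (ratVec_infty _))
  | coe t =>
    rw [hi f t, qmap_eq_iff]
    refine ⟨_, zpow_mem_GSet hsum (ofReal_add_I_ne_zero t), funext fun k => ?_⟩
    change _ * monicRat (D k) 0 (f.1 k) t = _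
    rw [monicRat_coe, eval_den, pow_zero, mul_one, zpow_natCast]
    exact mul_div_cancel₀ _ (pow_ne_zero _ (ofReal_add_I_ne_zero t))

theorem exists_homotopicRel_polEval (hE : ∅ ∈ K) (hρ : 0 < ρ) (hK : ∀ τ ∉ K, ρ ≤ τ.card)
    (hm : ∀ j, m < 2 * (ρ - 1) * D j) {A : Set (I^(Fin m))} (hA : IsClosed A)
    (P : C(A, PolSp K D)) (F : C((I^(Fin m)) × OnePoint ℝ, UK K))
    (hinfty : ∀ s, (F (s, ∞)).1 = 1) (hF : ∀ (s : A) p, F (s, p) = polEval hE D (P s, p)) :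
    ∃ P' : C(I^(Fin m), PolSp K D), (∀ s : A, P' s = P s) ∧
      F.HomotopicRel ((polEval hE D).comp (P'.prodMap (.id _))) (cylinderRel A) := by
  have hP (j : Fin r) : Continuous fun s => (P s).1 j :=
    (continuous_apply j).comp (continuous_subtype_val.comp P.continuous)
  choose Pext hPext using fun j => ContinuousMap.exists_restrict_eq hA
    (⟨_, hP j⟩ : C(A, Fin (D j + 2 * 0) → ℂ))
  replace hPext (j : Fin r) (s : A) : Pext j s = (P s).1 j := DFunLike.congr_fun (hPext j) s
  have hpoly : IsPolyOver F A Pext := fun s hs p j => by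
    rw [hF ⟨s, hs⟩, hPext j ⟨s, hs⟩]
    rfl
  obtain ⟨F₁, M, hFF₁, hF₁⟩ := exists_homotopicRel_forall_hasMonicRatCoord hA hpoly hinfty
  obtain ⟨F₂, hF₁F₂, hF₂⟩ := exists_homotopicRel_forall_hasMonicRatCoord_zero hρ hK hm hA
    (hpoly.of_homotopicRel hFF₁) hF₁
  have hFF₂ := hFF₁.trans hF₁F₂
  obtain ⟨c, hc⟩ := exists_ratVec_of_hasMonicRatCoord (M := fun _ => 0) hF₂
  let P' : C(I^(Fin m), PolSp K D) := ⟨fun s => ⟨c s,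
    (mem_PolSp_iff_forall_ratVec_zero_mem_UK hE).2 fun p => hc s p ▸ (F₂ (s, p)).2⟩,
    c.continuous.subtype_mk _⟩
  have hP' : F₂ = (polEval hE D).comp (P'.prodMap (.id _)) :=
    ContinuousMap.ext fun x => Subtype.ext (hc x.1 x.2)
  refine ⟨P', fun s => Subtype.ext (funext fun j => ?_), hP' ▸ hFF₂⟩
  refine monicRat_injective (D := D j) (M := 0) (funext fun p => ?_)
  rw [← hPext, ← hpoly.of_homotopicRel hFF₂ s s.2 p j, hc]
  rfl

/-- A map `i : X → Y` compresses `m`-cubes if every map of pairs `(I^m, ∂I^m) → (Y, X)` is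
homotopic relative to `∂I^m` to one into `X`; equivalently, the relative homotopy sets `π_m(Y, X)`
of the mapping cylinder vanish for all base points. -/
def CompressesCubes {X Y : Type*} [TopologicalSpace X] [TopologicalSpace Y] (m : ℕ)
    (i : C(X, Y)) : Prop :=
  ∀ (G : C(I^(Fin m), Y)) (P : C(Cube.boundary (Fin m), X)), (∀ s, i (P s) = G s) →
    ∃ P' : C(I^(Fin m), X), (∀ s : Cube.boundary (Fin m), P' s = P s) ∧
      G.HomotopicRel (i.comp P') (Cube.boundary (Fin m))

theorem compressesCubes_of_isID (hN : HasSplittings N K) (hE : ∅ ∈ K)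
    (hsum : ∑ k, (D k : ℤ) • N k = 0) (hρ : 0 < ρ) (hK : ∀ τ ∉ K, ρ ≤ τ.card) (hm : 2 ≤ m)
    (hmD : ∀ j, m < 2 * (ρ - 1) * D j) {i : C(PolSp K D, Loop (XS N K) (baseX N K hE))}
    (hi : IsID N K hE D i) : CompressesCubes m i := by
  intro G P hP
  have : Nontrivial (Fin m) := Fin.nontrivial_iff_two_le.2 hm
  have hG : Continuous fun x : (I^(Fin m)) × OnePoint ℝ => (G x.1).1 x.2 :=
    ((continuous_subtype_val.comp G.continuous).comp continuous_fst).eval continuous_snd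
  obtain ⟨F, hFG, hinfty, hFP⟩ := exists_lift_cube_prod_circle hN hE ⟨_, hG⟩ (fun s => (G s).2)
    ((polEval hE D).comp (P.prodMap (.id _))) (fun s => ratVec_infty _)
    fun s p => (qmap_polEval hE hsum hi (P s) p).trans (by rw [hP]; rfl)
  obtain ⟨P', hP', h⟩ := exists_homotopicRel_polEval hE hρ hK hmD isClosed_cubeBoundary P F hinfty
    hFP
  exact ⟨P', hP', homotopicRel_of_homotopicRel_cylinderRel (qCont N K) (fun s p => hFG (s, p))
    (fun s p => qmap_polEval hE hsum hi (P' s) p) h⟩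

end Compression

/-! ### Homotopy groups -/

section HomotopyGroups

open scoped unitInterval Topology

variable {X Y : Type*} [TopologicalSpace X] [TopologicalSpace Y] {k : ℕ}

theorem mem_cubeBoundary_succ {s : I^(Fin (k + 1))} : s ∈ Cube.boundary (Fin (k + 1)) ↔
    s 0 = 1 ∨ s 0 = 0 ∨ Fin.tail s ∈ Cube.boundary (Fin k) := by
  refine (Fin.exists_fin_succ (P := fun j => s j = 0 ∨ s j = 1)).trans ?_
  rw [or_comm (a := s 0 = 0), or_assoc]
  rfl

theorem exists_continuousMap_cubeBoundary_succ (p q : C(I^(Fin k), X))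
    (hpq : Set.EqOn p q (Cube.boundary (Fin k))) :
    ∃ P : C(Cube.boundary (Fin (k + 1)), X),
      (∀ s, s.1 0 = 1 → P s = q (Fin.tail s.1)) ∧
      ∀ s, s.1 0 = 0 ∨ (Fin.tail s.1 : I^(Fin k)) ∈ Cube.boundary (Fin k) →
        P s = p (Fin.tail s.1) := by
  have htail : Continuous fun s : I^(Fin (k + 1)) => (Fin.tail s : I^(Fin k)) :=
    continuous_id.finTail
  let T : Set (I^(Fin (k + 1))) := {s | s 0 = 1}
  let B : Set (I^(Fin (k + 1))) := {s | s 0 = 0 ∨ (Fin.tail s : I^(Fin k)) ∈ Cube.boundary (Fin k)}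
  have hT : IsClosed T := isClosed_eq (continuous_apply 0) continuous_const
  have hB : IsClosed B := (isClosed_eq (continuous_apply 0) continuous_const).union
    (isClosed_cubeBoundary.preimage htail)
  let P (s : I^(Fin (k + 1))) : X := if s 0 = 1 then q (Fin.tail s) else p (Fin.tail s)
  have hPT : Set.EqOn P (fun s => q (Fin.tail s)) T := fun s hs => if_pos hs
  have hPB : Set.EqOn P (fun s => p (Fin.tail s)) B := by
    intro s hs
    by_cases h : s 0 = 1
    · exact (hPT h).trans (hpq (hs.resolve_left fun h0 => one_ne_zero (h.symm.trans h0))).symm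
    · exact if_neg h
  have hP : ContinuousOn P (T ∪ B) := ContinuousOn.union_of_isClosed
    ((q.continuous.comp htail).continuousOn.congr hPT)
    ((p.continuous.comp htail).continuousOn.congr hPB) hT hB
  exact ⟨⟨fun s => P s, hP.comp_continuous continuous_subtype_val fun s =>
    mem_cubeBoundary_succ.1 s.2⟩, fun s hs => hPT hs, fun s hs => hPB hs⟩

theorem CompressesCubes.surjective_piMap {i : C(X, Y)} (hi : CompressesCubes k i) (x : X) :
    Function.Surjective (piMap k i x) := by
  intro y
  obtain ⟨g, rfl⟩ := Quotient.exists_rep y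
  obtain ⟨P, hP, hgP⟩ := hi g.1 (.const _ x) fun s => (g.2 s s.2).symm
  exact ⟨Quotient.mk _ ⟨P, fun s hs => hP ⟨s, hs⟩⟩, Quotient.sound hgP.symm⟩

theorem CompressesCubes.injective_piMap {i : C(X, Y)} (hi : CompressesCubes (k + 1) i) (x : X) :
    Function.Injective (piMap k i x) := by
  intro y₀ y₁ hy
  obtain ⟨p, rfl⟩ := Quotient.exists_rep y₀
  obtain ⟨q, rfl⟩ := Quotient.exists_rep y₁
  obtain ⟨H⟩ : (i.comp p.1).HomotopicRel (i.comp q.1) (Cube.boundary (Fin k)) := Quotient.exact hy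
  obtain ⟨P, hPq, hPp⟩ := exists_continuousMap_cubeBoundary_succ p.1 q.1
    fun s hs => (p.2 s hs).trans (q.2 s hs).symm
  let G : C(I^(Fin (k + 1)), Y) := ⟨fun s => H (s 0, Fin.tail s),
    (map_continuous H).comp ((continuous_apply 0).prodMk continuous_id.finTail)⟩
  have hPG (s) : i (P s) = G s := by
    change i (P s) = H (s.1 0, Fin.tail s.1)
    obtain h | h := mem_cubeBoundary_succ.1 s.2
    · rw [hPq s h, h, H.apply_one]
      rfl
    rw [hPp s h]
    obtain h | h := h
    · rw [h, H.apply_zero]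
      rfl
    · rw [H.eq_fst _ h]
      rfl
  obtain ⟨P', hP', -⟩ := hi G P hPG
  have hcons (t : I) (s : I^(Fin k)) (h : t = 1 ∨ t = 0 ∨ s ∈ Cube.boundary (Fin k)) :
      Fin.cons t s ∈ Cube.boundary (Fin (k + 1)) := mem_cubeBoundary_succ.2 h
  refine Quotient.sound ⟨{
    toFun := fun x => P' (Fin.cons x.1 x.2)
    continuous_toFun := P'.continuous.comp <|
      Continuous.finCons (A := fun _ => I) continuous_fst continuous_snd
    map_zero_left := fun s => ?_
    map_one_left := fun s => ?_
    prop' := fun t s hs => ?_ }⟩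
  · exact (hP' ⟨_, hcons 0 s (.inr (.inl rfl))⟩).trans (hPp _ (.inl rfl))
  · exact (hP' ⟨_, hcons 1 s (.inl rfl)⟩).trans (hPq _ rfl)
  · exact (hP' ⟨_, hcons t s (.inr (.inr hs))⟩).trans (hPp _ (.inr hs))

end HomotopyGroups

section StabilityDimension

variable {r k : ℕ} {K : Set (Finset (Fin r))} {D : Fin r → ℕ}

theorem rmin_le_card_of_notMem {τ : Finset (Fin r)} (hτ : τ ∉ K) : rmin K ≤ τ.card := by
  induction τ using Finset.strongInduction with
  | H τ ih =>
    by_cases h : ∀ υ ⊂ τ, υ ∈ K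
    · exact Nat.sInf_le ⟨τ, ⟨hτ, h⟩, rfl⟩
    · push Not at h
      obtain ⟨υ, hυτ, hυ⟩ := h
      exact (ih υ hυτ hυ).trans (Finset.card_le_card hυτ.subset)

theorem one_lt_rmin_of_le_dBound (h : (k : ℤ) ≤ dBound K D) : 1 < rmin K := by
  have hpos : 0 < ((rmin K : ℤ) - 1) * dmin D := by
    rw [dBound] at h
    linarith
  have := pos_of_mul_pos_left hpos (Int.natCast_nonneg _)
  omega

theorem succ_lt_of_le_dBound (h : (k : ℤ) ≤ dBound K D) (j : Fin r) :
    k + 1 < 2 * (rmin K - 1) * D j := by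
  have hD : dmin D ≤ D j := Nat.sInf_le ⟨j, rfl⟩
  refine lt_of_lt_of_le ?_ (Nat.mul_le_mul_left _ hD)
  rw [dBound] at h
  zify [(one_lt_rmin_of_le_dBound h).le]
  linarith

end StabilityDimension

/-- Under the hypotheses of Theorem I, the evaluation map
`i_D : Pol*_D(S¹, X_Σ) → Ω X_Σ` induces an isomorphism on `π_k` for `2 ≤ k ≤ d(D,Σ)`. -/
theorem polSpace_iD_pi_iso
    {n r : ℕ} (F : Fan n) (N : Fin r → Fin n → ℤ)
    (hPG : IsPrimGens F N) (hNS : F.NonSingular)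
    (h1 : Cond1 N) (h2 : Cond2 N)
    (D : Fin r → ℕ) (hD : ∀ k, 0 < D k)
    (hsum : ∑ k, (D k : ℤ) • N k = 0) :
    ∀ i : C(↥(PolSp (KC F N) D),
        Loop (XS N (KC F N)) (baseX N (KC F N) (empty_mem_KC F N))),
      IsID N (KC F N) (empty_mem_KC F N) D ⇑i →
      ∀ k : ℕ, 2 ≤ k → (k : ℤ) ≤ dBound (KC F N) D →
        ∀ f₀ : ↥(PolSp (KC F N) D), Function.Bijective (piMap k i f₀) := by
  intro i hi k hk hkd f₀
  have compresses {m : ℕ} (hm : 2 ≤ m) (hmk : m ≤ k + 1) : CompressesCubes m i :=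
    compressesCubes_of_isID (hasSplittings_KC hNS hPG h2) _ hsum
      (one_lt_rmin_of_le_dBound hkd).le (fun _ => rmin_le_card_of_notMem) hm
      (fun j => hmk.trans_lt (succ_lt_of_le_dBound hkd j)) hi
  exact ⟨(compresses (by lia) le_rfl).injective_piMap f₀,
    (compresses hk k.le_succ).surjective_piMap f₀⟩

end Toric
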